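/- arXiv:2010.14614 — 5 statements merged into one kernel-verified Lean document; each statement's English description precedes it below -/
import Mathlib

section
/- Let α < 0, γ < 0 and β ∈ ℝ, and let (u,v) be a regular solution of the Schrödinger–Korteweg–de Vries system with these parameters. Let p₁, q₁, p₂ satisfy q₁ > 0, p₂ > 1 and 0 < p₁ ≤ 2/(p₂+2), and define λ₁(t) = t^{p₁}/(log t)^{q₁} and η(t) = t^{1−p₁}·(log t)^{1+q₁}. Then for every l > 0 the iterated integral ∫_{10}^{∞} (1/(η(t)·λ₁(t))) · ( ∫_ℝ ( |∂ₓu(t,x)|² + (∂ₓv(t,x))² ) · sech(x/(l·λ₁(t))) dx ) dt is finite. -/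
open MeasureTheory Filter

/-- A regular solution of the Schrödinger–Korteweg–de Vries system
    `i ∂ₜu + ∂ₓ²u = α u v + β u |u|²`,
    `∂ₜv + ∂ₓ³v + v ∂ₓv = γ ∂ₓ(|u|²)`:
    `u, v` are smooth in `(t,x)`, Schwartz in `x` for each fixed `t`, satisfy the
    equations pointwise, and have uniformly-in-time bounded `H¹ₓ` norms. -/
def IsSKdVSolution (α β γ : ℝ) (u : ℝ → ℝ → ℂ) (v : ℝ → ℝ → ℝ) : Prop :=
  ContDiff ℝ (⊤ : ℕ∞) (fun p : ℝ × ℝ => u p.1 p.2) ∧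
  ContDiff ℝ (⊤ : ℕ∞) (fun p : ℝ × ℝ => v p.1 p.2) ∧
  (∀ t : ℝ, ∃ f : SchwartzMap ℝ ℂ, ∀ x, f x = u t x) ∧
  (∀ t : ℝ, ∃ g : SchwartzMap ℝ ℝ, ∀ x, g x = v t x) ∧
  (∀ t x : ℝ,
    Complex.I * deriv (fun s => u s x) t + iteratedDeriv 2 (u t) x
      = (α : ℂ) * u t x * (v t x : ℂ) + (β : ℂ) * u t x * (‖u t x‖ : ℂ) ^ 2) ∧
  (∀ t x : ℝ,
    deriv (fun s => v s x) t + iteratedDeriv 3 (v t) x + v t x * deriv (v t) x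
      = γ * deriv (fun y => ‖u t y‖ ^ 2) x) ∧
  (∃ C : ℝ, ∀ t : ℝ,
    (∫ x : ℝ, ‖u t x‖ ^ 2) + (∫ x : ℝ, ‖deriv (u t) x‖ ^ 2) +
      (∫ x : ℝ, (v t x) ^ 2) + (∫ x : ℝ, (deriv (v t) x) ^ 2) ≤ C)

noncomputable def dX (F : ℝ × ℝ → ℝ) : ℝ × ℝ → ℝ := fun p => fderiv ℝ F p (0, 1)
noncomputable def dT (F : ℝ × ℝ → ℝ) : ℝ × ℝ → ℝ := fun p => fderiv ℝ F p (1, 0)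

abbrev Smo (F : ℝ × ℝ → ℝ) : Prop := ContDiff ℝ (⊤ : ℕ∞) F

lemma Smo.dX {F : ℝ × ℝ → ℝ} (h : Smo F) : Smo (dX F) :=
  (ContDiff.fderiv_right (m := (⊤ : ℕ∞)) h (by simp)).clm_apply contDiff_const

lemma Smo.dT {F : ℝ × ℝ → ℝ} (h : Smo F) : Smo (dT F) :=
  (ContDiff.fderiv_right (m := (⊤ : ℕ∞)) h (by simp)).clm_apply contDiff_const

lemma Smo.hx {F : ℝ × ℝ → ℝ} (h : Smo F) (t x : ℝ) :
    HasDerivAt (fun y => F (t, y)) (_root_.dX F (t, x)) x := by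
  have h1 : HasFDerivAt F (fderiv ℝ F (t, x)) (t, x) :=
    (h.differentiable (by simp) (t, x)).hasFDerivAt
  have h2 : HasDerivAt (fun y : ℝ => (t, y)) ((0 : ℝ), (1 : ℝ)) x :=
    (hasDerivAt_const x t).prodMk (hasDerivAt_id x)
  exact h1.comp_hasDerivAt x h2

lemma Smo.ht {F : ℝ × ℝ → ℝ} (h : Smo F) (t x : ℝ) :
    HasDerivAt (fun s => F (s, x)) (_root_.dT F (t, x)) t := by
  have h1 : HasFDerivAt F (fderiv ℝ F (t, x)) (t, x) :=
    (h.differentiable (by simp) (t, x)).hasFDerivAt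
  have h2 : HasDerivAt (fun y : ℝ => (y, x)) ((1 : ℝ), (0 : ℝ)) t :=
    (hasDerivAt_id t).prodMk (hasDerivAt_const t x)
  exact h1.comp_hasDerivAt t h2

lemma Smo.comm {F : ℝ × ℝ → ℝ} (h : Smo F) (p : ℝ × ℝ) :
    _root_.dT (_root_.dX F) p = _root_.dX (_root_.dT F) p := by
  have hs : IsSymmSndFDerivAt ℝ F p := by
    apply ContDiffAt.isSymmSndFDerivAt (n := (⊤ : ℕ∞)) h.contDiffAt
    simp only [minSmoothness_of_isRCLikeNormedField]
    exact WithTop.coe_le_coe.2 (le_top : (2 : ℕ∞) ≤ ⊤)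
  have hd : DifferentiableAt ℝ (fderiv ℝ F) p :=
    (ContDiff.fderiv_right (m := (⊤ : ℕ∞)) h (by simp)).differentiable (by simp) p
  have e1 : ∀ w z : ℝ × ℝ, fderiv ℝ (fun q => fderiv ℝ F q w) p z = fderiv ℝ (fderiv ℝ F) p z w := by
    intro w z
    rw [fderiv_clm_apply hd (differentiableAt_const w)]
    simp
  unfold _root_.dT _root_.dX
  rw [e1, e1]
  exact hs _ _

lemma Smo.dX_eq {F : ℝ × ℝ → ℝ} (h : Smo F) (p : ℝ × ℝ) (c : ℝ)
    (hc : HasDerivAt (fun y => F (p.1, y)) c p.2) : _root_.dX F p = c :=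
  (h.hx p.1 p.2).unique hc

/-- differentiation under the integral, compact support -/
lemma deriv_int (F F' : ℝ → ℝ → ℝ) (t₀ ε R : ℝ) (hε : 0 < ε)
    (hF : ∀ t ∈ Metric.closedBall t₀ ε, ∀ x, HasDerivAt (fun s => F s x) (F' t x) t)
    (hc : ContinuousOn (fun p : ℝ × ℝ => F' p.1 p.2) (Metric.closedBall t₀ ε ×ˢ Set.univ))
    (hFc : ∀ t ∈ Metric.closedBall t₀ ε, Continuous (F t))
    (hs : ∀ t ∈ Metric.closedBall t₀ ε, ∀ x, R < |x| → F t x = 0 ∧ F' t x = 0) :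
    HasDerivAt (fun t => ∫ x, F t x) (∫ x, F' t₀ x) t₀ := by
  have hK : IsCompact (Metric.closedBall t₀ ε ×ˢ Set.Icc (-R) R) :=
    (isCompact_closedBall t₀ ε).prod isCompact_Icc
  obtain ⟨C, hC⟩ := hK.exists_bound_of_continuousOn
    (hc.mono (Set.prod_mono le_rfl (Set.subset_univ _)))
  have hmem : t₀ ∈ Metric.closedBall t₀ ε := Metric.mem_closedBall_self hε.le
  have hcs : ∀ t ∈ Metric.closedBall t₀ ε, HasCompactSupport (F t) := by
    intro t ht
    apply HasCompactSupport.intro (K := Set.Icc (-R) R) isCompact_Icc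
    intro x hx
    refine (hs t ht x ?_).1
    by_contra hh
    exact hx (abs_le.mp (not_lt.mp hh))
  have hF'c : Continuous (F' t₀) := by
    rw [← continuousOn_univ]
    exact hc.comp (f := fun x : ℝ => (t₀, x)) (by fun_prop) (fun x _ => ⟨hmem, trivial⟩)
  refine (hasDerivAt_integral_of_dominated_loc_of_deriv_le (μ := volume) (F := F) (F' := F')
    (bound := (Set.Icc (-R) R).indicator (fun _ => C))
    (s := Metric.closedBall t₀ ε)
    (Metric.closedBall_mem_nhds t₀ hε) ?_ ?_ ?_ ?_ ?_ ?_).2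
  · filter_upwards [Metric.closedBall_mem_nhds t₀ hε] with t ht
    exact (hFc t ht).aestronglyMeasurable
  · exact (hFc t₀ hmem).integrable_of_hasCompactSupport (hcs _ hmem)
  · exact hF'c.aestronglyMeasurable
  · refine Eventually.of_forall fun x t ht => ?_
    by_cases hx : x ∈ Set.Icc (-R) R
    · rw [Set.indicator_of_mem hx]
      exact hC (t, x) ⟨ht, hx⟩
    · rw [Set.indicator_of_notMem hx, (hs t ht x ?_).2]
      · simp
      · by_contra hh
        exact hx (abs_le.mp (not_lt.mp hh))
  · rw [integrable_indicator_iff measurableSet_Icc]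
    exact integrableOn_const (by simp)
  · exact Eventually.of_forall fun x t ht => hF t ht x

noncomputable def Phi (z : ℝ) : ℝ := Real.arctan (Real.sinh z)
noncomputable def Phi1 (z : ℝ) : ℝ := 1 / Real.cosh z
noncomputable def Phi2 (z : ℝ) : ℝ := - Real.sinh z / Real.cosh z ^ 2
noncomputable def Phi3 (z : ℝ) : ℝ := (2 * Real.sinh z ^ 2 - Real.cosh z ^ 2) / Real.cosh z ^ 3
noncomputable def JJ (z : ℝ) : ℝ := (1 + z ^ 2)⁻¹

lemma Phi_d (z : ℝ) : HasDerivAt Phi (Phi1 z) z := by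
  have h := (Real.hasDerivAt_sinh z).arctan
  refine HasDerivAt.congr_deriv (f := Phi) h ?_
  unfold Phi1
  have := Real.cosh_sq z
  have h2 := Real.cosh_pos z
  rw [show 1 + Real.sinh z ^ 2 = Real.cosh z ^ 2 by linarith]
  field_simp

lemma Phi1_d (z : ℝ) : HasDerivAt Phi1 (Phi2 z) z := by
  have h2 := Real.cosh_pos z
  have h := (hasDerivAt_const z (1:ℝ)).div (Real.hasDerivAt_cosh z) h2.ne'
  refine HasDerivAt.congr_deriv (f := Phi1) h ?_
  unfold Phi2
  ring

lemma Phi2_d (z : ℝ) : HasDerivAt Phi2 (Phi3 z) z := by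
  have h2 := Real.cosh_pos z
  have h := (Real.hasDerivAt_sinh z).neg.div ((Real.hasDerivAt_cosh z).pow 2) (pow_ne_zero 2 h2.ne')
  refine HasDerivAt.congr_deriv (f := Phi2) h ?_
  unfold Phi3
  simp
  field_simp
  ring

lemma Phi3_c : Continuous Phi3 := by
  unfold Phi3
  exact Continuous.div (by fun_prop) (by fun_prop) (fun z => by have := Real.cosh_pos z; positivity)

lemma Phi_c : Continuous Phi := continuous_iff_continuousAt.2 fun z => (Phi_d z).continuousAt
lemma Phi1_c : Continuous Phi1 := continuous_iff_continuousAt.2 fun z => (Phi1_d z).continuousAt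
lemma Phi2_c : Continuous Phi2 := continuous_iff_continuousAt.2 fun z => (Phi2_d z).continuousAt

lemma Phi_b (z : ℝ) : |Phi z| ≤ 2 := by
  have h1 := Real.arctan_lt_pi_div_two (Real.sinh z)
  have h2 := Real.neg_pi_div_two_lt_arctan (Real.sinh z)
  have h3 := Real.pi_lt_four
  unfold Phi
  rw [abs_le]; constructor <;> linarith

lemma Phi1_pos (z : ℝ) : 0 < Phi1 z := by
  have h2 := Real.cosh_pos z
  unfold Phi1; positivity

lemma Phi1_le (z : ℝ) : Phi1 z ≤ 1 := by
  have h2 := Real.one_le_cosh z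
  unfold Phi1
  rw [div_le_one (by linarith)]; exact h2

lemma JJ_pos (z : ℝ) : 0 < JJ z := by unfold JJ; positivity
lemma JJ_le (z : ℝ) : JJ z ≤ 1 := by
  unfold JJ
  exact inv_le_one_of_one_le₀ (by nlinarith [sq_nonneg z])

lemma abs_le_cosh (z : ℝ) : |z| ≤ Real.cosh z := by
  have : |z| ≤ Real.sinh |z| := Real.self_le_sinh_iff.2 (abs_nonneg z)
  have h2 := Real.sinh_lt_cosh |z|
  rw [Real.cosh_abs] at h2
  linarith

lemma zPhi1 (z : ℝ) : |z| * Phi1 z ≤ 1 := by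
  unfold Phi1
  have := Real.cosh_pos z
  rw [mul_one_div, div_le_one this]
  exact abs_le_cosh z

lemma Phi1_J (z : ℝ) : Phi1 z ≤ 2 * JJ z := by
  unfold Phi1 JJ
  have h := Real.cosh_pos z
  have h1 : 1 + z ^ 2 / 2 ≤ Real.cosh z := by
    have e := Real.cosh_two_mul (z / 2)
    have e2 := Real.cosh_sq (z / 2)
    rw [show 2 * (z / 2) = z by ring] at e
    have e3 : (z / 2) ^ 2 ≤ Real.sinh (z / 2) ^ 2 := by
      rw [← sq_abs (z / 2), ← sq_abs (Real.sinh (z / 2)), Real.abs_sinh]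
      exact pow_le_pow_left₀ (abs_nonneg _) (Real.self_le_sinh_iff.2 (abs_nonneg _)) 2
    nlinarith
  rw [div_le_iff₀ h, mul_assoc, inv_mul_eq_div, mul_div_assoc', le_div_iff₀ (by positivity)]
  linarith

lemma Phi2_b (z : ℝ) : |Phi2 z| ≤ Phi1 z := by
  unfold Phi1 Phi2
  have h := Real.cosh_pos z
  have h2 := Real.cosh_sq z
  rw [abs_div, abs_neg, abs_of_pos (by positivity : 0 < Real.cosh z ^ 2), div_le_div_iff₀ (by positivity) h]
  have : |Real.sinh z| ≤ Real.cosh z := abs_le_of_sq_le_sq (by linarith) h.le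
  nlinarith

lemma Phi3_b (z : ℝ) : |Phi3 z| ≤ Phi1 z := by
  unfold Phi1 Phi3
  have h := Real.cosh_pos z
  have h2 := Real.cosh_sq z
  rw [abs_div, abs_of_pos (by positivity : 0 < Real.cosh z ^ 3), div_le_div_iff₀ (by positivity) h]
  have : |2 * Real.sinh z ^ 2 - Real.cosh z ^ 2| ≤ Real.cosh z ^ 2 := by
    rw [abs_le]; constructor <;> nlinarith [sq_nonneg (Real.sinh z)]
  calc _ ≤ Real.cosh z ^ 2 * Real.cosh z := by gcongr
    _ = _ := by ring

lemma cpt_bound (F : ℝ → ℝ) (hc : Continuous F) (hz : ∀ z, 2 ≤ |z| → F z = 0) :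
    ∃ c, 0 < c ∧ ∀ z, |F z| ≤ c * JJ z := by
  have hcs : HasCompactSupport F := by
    apply HasCompactSupport.intro (K := Set.Icc (-2) 2) isCompact_Icc
    intro x hx
    apply hz
    by_contra hh
    exact hx (abs_le.mp (not_le.mp hh).le)
  obtain ⟨C, hC⟩ := hc.bounded_above_of_compact_support hcs
  have hC0 : 0 ≤ C := (norm_nonneg _).trans (hC 0)
  refine ⟨5 * C + 1, by positivity, fun z => ?_⟩
  by_cases h : 2 ≤ |z|
  · rw [hz z h]; simp; have := JJ_pos z; positivity
  · have h1 : z ^ 2 ≤ 4 := by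
      have := abs_nonneg z
      rw [← sq_abs]; nlinarith
    have h2 : 1 ≤ 5 * JJ z := by
      unfold JJ
      rw [← div_eq_mul_inv, le_div_iff₀ (by positivity)]; linarith
    have h3 : |F z| ≤ C := hC z
    have := JJ_pos z
    nlinarith

lemma exists_psi : ∃ P P1 P2 P3 : ℝ → ℝ, ∃ c : ℝ, 0 < c ∧
    (∀ z, HasDerivAt P (P1 z) z) ∧ (∀ z, HasDerivAt P1 (P2 z) z) ∧ (∀ z, HasDerivAt P2 (P3 z) z) ∧
    Continuous P ∧ Continuous P1 ∧ Continuous P2 ∧ Continuous P3 ∧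
    (∀ z, 0 ≤ P z) ∧ (∀ z, P z ≤ 1) ∧ (∀ z, |z| ≤ 1 → P z = 1) ∧
    (∀ z, 2 ≤ |z| → P z = 0 ∧ P1 z = 0 ∧ P2 z = 0 ∧ P3 z = 0) ∧
    (∀ z, |P z| ≤ c * JJ z) ∧ (∀ z, |P1 z| ≤ c * JJ z) ∧ (∀ z, |P2 z| ≤ c * JJ z) ∧
    (∀ z, |P3 z| ≤ c * JJ z) ∧ (∀ z, |z * P1 z| ≤ c * JJ z) := by
  let B : ContDiffBump (0:ℝ) := ⟨1, 3/2, by norm_num, by norm_num⟩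
  let P : ℝ → ℝ := B
  have hP : ContDiff ℝ (⊤ : ℕ∞) P := B.contDiff
  have hP1 : ContDiff ℝ (⊤ : ℕ∞) (deriv P) := ((contDiff_infty_iff_deriv).1 hP).2
  have hP2 : ContDiff ℝ (⊤ : ℕ∞) (deriv (deriv P)) := ((contDiff_infty_iff_deriv).1 hP1).2
  have hP3 : ContDiff ℝ (⊤ : ℕ∞) (deriv (deriv (deriv P))) := ((contDiff_infty_iff_deriv).1 hP2).2
  have hz : ∀ z, 2 ≤ |z| → P =ᶠ[nhds z] 0 := by
    intro z hz
    have : {w : ℝ | 3/2 < |w|} ∈ nhds z :=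
      (isOpen_lt continuous_const continuous_abs).mem_nhds (show (3/2 : ℝ) < |z| by linarith)
    filter_upwards [this] with w hw
    apply B.zero_of_le_dist
    simp [B]; exact hw.le
  have hz1 : ∀ z, 2 ≤ |z| → deriv P =ᶠ[nhds z] 0 := fun z h => by
    have := (hz z h).deriv
    simpa using this
  have hz2 : ∀ z, 2 ≤ |z| → deriv (deriv P) =ᶠ[nhds z] 0 := fun z h => by
    have := (hz1 z h).deriv
    simpa using this
  have hz3 : ∀ z, 2 ≤ |z| → deriv (deriv (deriv P)) =ᶠ[nhds z] 0 := fun z h => by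
    have := (hz2 z h).deriv
    simpa using this
  obtain ⟨c0, h0, b0⟩ := cpt_bound P hP.continuous (fun z h => (hz z h).self_of_nhds)
  obtain ⟨c1, h1, b1⟩ := cpt_bound _ hP1.continuous (fun z h => (hz1 z h).self_of_nhds)
  obtain ⟨c2, h2, b2⟩ := cpt_bound _ hP2.continuous (fun z h => (hz2 z h).self_of_nhds)
  obtain ⟨c3, h3, b3⟩ := cpt_bound _ hP3.continuous (fun z h => (hz3 z h).self_of_nhds)
  obtain ⟨c4, h4, b4⟩ := cpt_bound (fun z => z * deriv P z) (continuous_id.mul hP1.continuous)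
    (fun z h => by
      have := (hz1 z h).self_of_nhds
      simp only [Pi.zero_apply] at this
      simp [this])
  have key : ∀ (ci : ℝ) (z y : ℝ), ci ≤ c0 + c1 + c2 + c3 + c4 → y ≤ ci * JJ z →
      y ≤ (c0 + c1 + c2 + c3 + c4) * JJ z := fun ci z y h h' =>
    h'.trans (mul_le_mul_of_nonneg_right h (JJ_pos z).le)
  refine ⟨P, deriv P, deriv (deriv P), deriv (deriv (deriv P)), c0 + c1 + c2 + c3 + c4,
    by positivity, fun z => (hP.differentiable (by simp) z).hasDerivAt,
    fun z => (hP1.differentiable (by simp) z).hasDerivAt,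
    fun z => (hP2.differentiable (by simp) z).hasDerivAt,
    hP.continuous, hP1.continuous, hP2.continuous, hP3.continuous,
    fun z => B.nonneg, fun z => B.le_one, ?_, ?_, ?_, ?_, ?_, ?_, ?_⟩
  · intro z h
    apply B.one_of_mem_closedBall
    simpa [B] using h
  · intro z h
    exact ⟨(hz z h).self_of_nhds, (hz1 z h).self_of_nhds, (hz2 z h).self_of_nhds, (hz3 z h).self_of_nhds⟩
  · exact fun z => key c0 z _ (by linarith) (b0 z)
  · exact fun z => key c1 z _ (by linarith) (b1 z)
  · exact fun z => key c2 z _ (by linarith) (b2 z)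
  · exact fun z => key c3 z _ (by linarith) (b3 z)
  · exact fun z => key c4 z _ (by linarith) (b4 z)

/-- power-log functions -/
noncomputable def pw (r s t : ℝ) : ℝ := t ^ r * Real.log t ^ s

lemma pw_pos (r s t : ℝ) (ht : 1 < t) : 0 < pw r s t := by
  have := Real.log_pos ht
  unfold pw; positivity

lemma pw_d (r s t : ℝ) (ht : 1 < t) :
    HasDerivAt (pw r s) (pw r s t * ((r + s / Real.log t) / t)) t := by
  have hl := Real.log_pos ht
  have h0 : 0 < t := by linarith
  have h1 := (Real.hasDerivAt_rpow_const (x := t) (p := r) (Or.inl h0.ne'))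
  have h2 := (Real.hasDerivAt_log h0.ne').rpow_const (p := s) (Or.inl hl.ne')
  refine HasDerivAt.congr_deriv (f := pw r s) (h1.mul h2) ?_
  unfold pw
  rw [Real.rpow_sub_one h0.ne', Real.rpow_sub_one hl.ne']
  field_simp

lemma one_le_log (t : ℝ) (ht : 10 ≤ t) : 1 ≤ Real.log t := by
  rw [Real.le_log_iff_exp_le (by linarith)]
  have := Real.exp_one_lt_d9
  linarith

lemma pw_rate (r s t : ℝ) (ht : 10 ≤ t) : |r + s / Real.log t| ≤ |r| + |s| := by
  have := one_le_log t ht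
  refine (abs_add_le _ _).trans (add_le_add le_rfl ?_)
  rw [abs_div, abs_of_pos (by linarith : 0 < Real.log t)]
  exact div_le_self (abs_nonneg _) this

lemma pw_mul (r s r' s' t : ℝ) (ht : 1 < t) : pw r s t * pw r' s' t = pw (r + r') (s + s') t := by
  have := Real.log_pos ht
  unfold pw
  rw [Real.rpow_add (by linarith), Real.rpow_add this]; ring

lemma pw_rpow (r s k t : ℝ) (ht : 1 < t) : (pw r s t) ^ k = pw (r * k) (s * k) t := by
  have := Real.log_pos ht
  unfold pw
  rw [Real.mul_rpow (by positivity) (by positivity), ← Real.rpow_mul (by linarith), ← Real.rpow_mul this.le]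

/-- negative log powers are harmless; positive ones cost epsilon -/
lemma pw_le (r s r' : ℝ) (h : r < r') : ∃ C, 0 < C ∧ ∀ t, 10 ≤ t → pw r s t ≤ C * t ^ r' := by
  rcases le_or_gt s 0 with hs | hs
  · refine ⟨1, one_pos, fun t ht => ?_⟩
    have := one_le_log t ht
    unfold pw
    rw [one_mul]
    calc t ^ r * Real.log t ^ s ≤ t ^ r * 1 := by
          gcongr
          exact Real.rpow_le_one_of_one_le_of_nonpos this hs
      _ = t ^ r := mul_one _
      _ ≤ _ := Real.rpow_le_rpow_of_exponent_le (by linarith) h.le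
  · have he : 0 < (r' - r) / s := div_pos (by linarith) hs
    refine ⟨(1 / ((r' - r) / s)) ^ s, by positivity, fun t ht => ?_⟩
    have h1 := one_le_log t ht
    have h2 := Real.log_le_rpow_div (x := t) (by linarith) he
    have h0 : 0 < t := by linarith
    have h3 : Real.log t ^ s ≤ (t ^ ((r' - r) / s) / ((r' - r) / s)) ^ s :=
      Real.rpow_le_rpow (by linarith) h2 hs.le
    rw [div_eq_mul_one_div, Real.mul_rpow (by positivity) (by positivity), ← Real.rpow_mul h0.le,
      div_mul_cancel₀ _ hs.ne'] at h3
    unfold pw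
    calc t ^ r * Real.log t ^ s ≤ t ^ r * (t ^ (r' - r) * (1 / ((r' - r) / s)) ^ s) := by gcongr
      _ = (1 / ((r' - r) / s)) ^ s * (t ^ r * t ^ (r' - r)) := by ring
      _ = _ := by rw [← Real.rpow_add h0]; congr 2; ring

lemma absD_bound (K α γ v ρ s d j e J : ℝ) (hK : 0 ≤ K) (hρ : 0 ≤ ρ) (hs : 0 ≤ s) (hd : 0 ≤ d)
    (hj : |2 * j| ≤ ρ + s) (he : 1 ≤ e) (hJ : 0 ≤ J) (hJ1 : J ≤ 1) :
    |K * v + α * v ^ 2 - 2 * γ * j| * J ≤ (K + |α| + |γ|) * (e * (v ^ 2 + ρ + s + d) + e⁻¹ * J) := by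
  have h1 : |K * v + α * v ^ 2 - 2 * γ * j| ≤ K * |v| + |α| * v ^ 2 + |γ| * (ρ + s) := by
    calc |K * v + α * v ^ 2 - 2 * γ * j| ≤ |K * v| + |α * v ^ 2| + |γ * (2 * j)| := by
          rw [show K * v + α * v ^ 2 - 2 * γ * j = K * v + α * v ^ 2 - γ * (2 * j) by ring]
          exact (abs_sub _ _).trans (by gcongr; exact abs_add_le _ _)
      _ ≤ _ := by
          rw [abs_mul, abs_mul, abs_mul γ, abs_of_nonneg hK, abs_of_nonneg (sq_nonneg v)]
          gcongr
  have he0 : 0 < e := by linarith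
  have hei : e * e⁻¹ = 1 := mul_inv_cancel₀ he0.ne'
  have hei0 : 0 < e⁻¹ := by positivity
  have h2 : |v| * J ≤ e * v ^ 2 + e⁻¹ * J := by
    have h3 : 2 * (|v| * J) ≤ e * v ^ 2 + e⁻¹ * J ^ 2 := by
      have : e * v ^ 2 + e⁻¹ * J ^ 2 - 2 * (|v| * J) = e * (|v| - e⁻¹ * J) ^ 2 := by
        rw [← sq_abs v]; field_simp; ring
      nlinarith [mul_nonneg he0.le (sq_nonneg (|v| - e⁻¹ * J))]
    have h4 : e⁻¹ * J ^ 2 ≤ e⁻¹ * J := by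
      apply mul_le_mul_of_nonneg_left _ hei0.le; nlinarith
    have : 0 ≤ |v| * J := by positivity
    linarith
  have hX : 0 ≤ e⁻¹ * J := by positivity
  have hα := abs_nonneg α
  have hγ := abs_nonneg γ
  have h5 : v ^ 2 * J ≤ e * v ^ 2 := by nlinarith [sq_nonneg v]
  have h6 : (ρ + s) * J ≤ e * (ρ + s) := by nlinarith
  have h7 : 0 ≤ e * v ^ 2 := by positivity
  have h8 : 0 ≤ e * (ρ + s) := by positivity
  have h9 : 0 ≤ e * d := by positivity
  calc |K * v + α * v ^ 2 - 2 * γ * j| * J ≤ (K * |v| + |α| * v ^ 2 + |γ| * (ρ + s)) * J := by gcongr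
    _ = K * (|v| * J) + |α| * (v ^ 2 * J) + |γ| * ((ρ + s) * J) := by ring
    _ ≤ K * (e * (v ^ 2 + ρ + s + d) + e⁻¹ * J) + |α| * (e * (v ^ 2 + ρ + s + d) + e⁻¹ * J)
        + |γ| * (e * (v ^ 2 + ρ + s + d) + e⁻¹ * J) := by
          gcongr <;> linarith
    _ = _ := by ring

noncomputable def Pp (K α β γ v ρ s d : ℝ) : ℝ :=
  K * v ^ 2 / 2 - K * γ * ρ - 3 * α * d - 4 * γ * s + 2 * α / 3 * v ^ 3 - γ * β * ρ ^ 2 - 2 * α * γ * v * ρ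

lemma Pp_lower (α β γ M m v ρ s d : ℝ) (hα : α < 0) (hγ : γ < 0) (hM : 0 ≤ M)
    (hm1 : m ≤ -3 * α) (hm2 : m ≤ -4 * γ)
    (hv : |v| ≤ M) (hρ : 0 ≤ ρ) (hρM : ρ ≤ M ^ 2) (hs : 0 ≤ s) (hd : 0 ≤ d) :
    m * (s + d) + v ^ 2 ≤ Pp (2 + 4 * |α| * M + |β| * M ^ 2) α β γ v ρ s d := by
  unfold Pp
  rw [abs_of_neg hα]
  obtain ⟨hv1, hv2⟩ := abs_le.1 hv
  have a1 : 0 ≤ (-4 * γ - m) * s := mul_nonneg (by linarith) hs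
  have a2 : 0 ≤ (-3 * α - m) * d := mul_nonneg (by linarith) hd
  have a3 : 0 ≤ (-α) * (v ^ 2 * (M - v)) := by
    apply mul_nonneg (by linarith); apply mul_nonneg (sq_nonneg _); linarith
  have a4 : 0 ≤ (-γ) * ρ * (|β| * M ^ 2 + β * ρ) := by
    apply mul_nonneg (mul_nonneg (by linarith) hρ)
    have : -β * ρ ≤ |β| * M ^ 2 := by
      apply mul_le_mul (neg_le_abs β) hρM hρ (abs_nonneg _)
    linarith
  have a5 : 0 ≤ α * γ * ρ * (M - v) := by
    apply mul_nonneg (mul_nonneg (mul_pos_of_neg_of_neg hα hγ).le hρ); linarith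
  have a6 : 0 ≤ α * γ * ρ * M := mul_nonneg (mul_nonneg (mul_pos_of_neg_of_neg hα hγ).le hρ) hM
  have a7 : 0 ≤ (-γ) * ρ := mul_nonneg (by linarith) hρ
  have a8 : 0 ≤ |β| * M ^ 2 * v ^ 2 := by positivity
  have a9 : 0 ≤ (-α) * M * v ^ 2 := by
    apply mul_nonneg (mul_nonneg (by linarith) hM) (sq_nonneg _)
  nlinarith

lemma Pp_abs (K α β γ M : ℝ) (hM : 0 ≤ M) (hK : 0 ≤ K) : ∃ C, 0 ≤ C ∧ ∀ v ρ s d : ℝ,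
    |v| ≤ M → 0 ≤ ρ → ρ ≤ M ^ 2 → 0 ≤ s → 0 ≤ d → |Pp K α β γ v ρ s d| ≤ C * (v ^ 2 + ρ + s + d) := by
  refine ⟨K / 2 + K * |γ| + 3 * |α| + 4 * |γ| + 2 * |α| / 3 * M + |γ| * |β| * M ^ 2 + 2 * |α| * |γ| * M,
    by positivity, ?_⟩
  intro v ρ s d hv hρ hρM hs hd
  set S := v ^ 2 + ρ + s + d with hS
  have s0 : 0 ≤ v ^ 2 := sq_nonneg v
  have e1 : |K * v ^ 2 / 2| ≤ K / 2 * S := by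
    rw [abs_of_nonneg (by positivity), mul_div_right_comm]; gcongr; linarith
  have e2 : |K * γ * ρ| ≤ K * |γ| * S := by
    rw [abs_mul, abs_mul, abs_of_nonneg hK, abs_of_nonneg hρ]; gcongr; linarith
  have e3 : |3 * α * d| ≤ 3 * |α| * S := by
    rw [abs_mul, abs_mul, abs_of_nonneg hd, abs_of_nonneg (by norm_num : (0:ℝ) ≤ 3)]; gcongr; linarith
  have e4 : |4 * γ * s| ≤ 4 * |γ| * S := by
    rw [abs_mul, abs_mul, abs_of_nonneg hs, abs_of_nonneg (by norm_num : (0:ℝ) ≤ 4)]; gcongr; linarith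
  have e5 : |2 * α / 3 * v ^ 3| ≤ 2 * |α| / 3 * M * S := by
    rw [abs_mul, abs_div, abs_mul, abs_of_nonneg (by norm_num : (0:ℝ) ≤ 2),
      abs_of_nonneg (by norm_num : (0:ℝ) ≤ 3), show v ^ 3 = v * v ^ 2 by ring, abs_mul, abs_of_nonneg s0,
      mul_assoc (2 * |α| / 3) M S]
    gcongr; linarith
  have e6 : |γ * β * ρ ^ 2| ≤ |γ| * |β| * M ^ 2 * S := by
    rw [abs_mul, abs_mul, abs_of_nonneg (sq_nonneg ρ), mul_assoc _ (M ^ 2) S, sq ρ]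
    gcongr; linarith
  have e7 : |2 * α * γ * v * ρ| ≤ 2 * |α| * |γ| * M * S := by
    rw [abs_mul, abs_mul, abs_mul, abs_mul, abs_of_nonneg hρ, abs_of_nonneg (by norm_num : (0:ℝ) ≤ 2)]
    gcongr; linarith
  unfold Pp
  rw [abs_le] at *
  constructor <;> linarith


lemma L1_lem (K α γ c v ρ s d j h t e Jb Wt : ℝ) (hK : 0 ≤ K) (hc : 0 ≤ c) (hρ : 0 ≤ ρ) (hs : 0 ≤ s)
    (hd : 0 ≤ d) (hj : |2 * j| ≤ ρ + s) (hh : 0 < h) (ht : 0 < t) (he : 1 ≤ e)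
    (hJb : 0 ≤ Jb) (hJb1 : Jb ≤ 1) (hWt : |Wt| ≤ c * (h / t) * Jb) :
    -((K + |α| + |γ|) * c * (h * ((1 / t) * (e * (v ^ 2 + ρ + s + d) + e⁻¹ * Jb)))) ≤
      (K * v + α * v ^ 2 - 2 * γ * j) * Wt := by
  have := absD_bound K α γ v ρ s d j e Jb hK hρ hs hd hj he hJb hJb1
  have h2 : |(K * v + α * v ^ 2 - 2 * γ * j) * Wt| ≤
      (K + |α| + |γ|) * c * (h * ((1 / t) * (e * (v ^ 2 + ρ + s + d) + e⁻¹ * Jb))) := by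
    rw [abs_mul]
    calc |K * v + α * v ^ 2 - 2 * γ * j| * |Wt| ≤ |K * v + α * v ^ 2 - 2 * γ * j| * (c * (h / t) * Jb) := by gcongr
      _ = c * (h / t) * (|K * v + α * v ^ 2 - 2 * γ * j| * Jb) := by ring
      _ ≤ c * (h / t) * ((K + |α| + |γ|) * (e * (v ^ 2 + ρ + s + d) + e⁻¹ * Jb)) := by gcongr
      _ = _ := by ring
  exact (abs_le.1 h2).1

lemma amgm_aux (v w : ℝ) : |v| * w ≤ v ^ 2 + w ^ 2 := by
  rw [← sq_abs v]; nlinarith [sq_nonneg (|v| - w), sq_nonneg (|v| + w)]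

lemma sq_aux (y c : ℝ) (h0 : 0 ≤ y) (h : y ≤ c) : y ^ 2 ≤ c * y := by
  rw [sq]; exact mul_le_mul_of_nonneg_right h h0

lemma L2a_lem (K v a p1 p3 Y Ja : ℝ) (hK : 0 ≤ K) (ha : 0 < a)
    (hJa : 0 ≤ Ja) (hp1 : 0 ≤ p1) (hp1J : p1 ≤ 2 * Ja)
    (hp3 : |p3| ≤ p1) (hY : 0 ≤ Y) (hY1 : Y ≤ 1) :
    K * |v| * (a ^ 3 * |p3| * Y) ≤ a * p1 * Y * v ^ 2 + K ^ 2 * (a ^ 5 * Ja) := by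
  have z1 : K * |v| * a ^ 2 ≤ v ^ 2 + K ^ 2 * a ^ 4 / 4 := by
    rw [← sq_abs v]
    have := sq_nonneg (|v| - K * a ^ 2 / 2)
    ring_nf at this ⊢
    linarith
  have z2 : 0 ≤ K ^ 2 * (a ^ 5 * Ja) := by positivity
  calc K * |v| * (a ^ 3 * |p3| * Y) ≤ K * |v| * (a ^ 3 * p1 * Y) := by gcongr
    _ = (a * p1 * Y) * (K * |v| * a ^ 2) := by ring
    _ ≤ (a * p1 * Y) * (v ^ 2 + K ^ 2 * a ^ 4 / 4) := by gcongr
    _ = a * p1 * Y * v ^ 2 + K ^ 2 * a ^ 5 / 4 * (p1 * Y) := by ring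
    _ ≤ a * p1 * Y * v ^ 2 + K ^ 2 * a ^ 5 / 4 * (2 * Ja * 1) := by gcongr
    _ = a * p1 * Y * v ^ 2 + (K ^ 2 * (a ^ 5 * Ja)) / 2 := by ring
    _ ≤ _ := by linarith

lemma L2b_lem (K c3 ca v S a b Ja Jb r3 : ℝ) (hK : 0 ≤ K) (hc3 : 0 ≤ c3) (hca : 0 ≤ ca) (ha : 0 < a)
    (haca : a ≤ ca) (hb : 0 < b) (hb1 : b ≤ 1)
    (hJa : 0 ≤ Ja) (hJa1 : Ja ≤ 1) (hJb : 0 ≤ Jb) (hJb1 : Jb ≤ 1) (hvS : v ^ 2 ≤ S)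
    (hr3 : |r3| ≤ c3 * b * (a * Ja + b * Jb)) :
    K * |v| * |r3| ≤ K * c3 * (2 + ca) * (b * S + b * a * Ja + b ^ 2 * Jb) := by
  have h0 : 0 ≤ a * Ja := by positivity
  have h0' : 0 ≤ b * Jb := by positivity
  have hS0 : 0 ≤ S := (sq_nonneg v).trans hvS
  have z1 : |v| * (a * Ja) ≤ S + ca * (a * Ja) := by
    have := amgm_aux v (a * Ja)
    have w1 := sq_aux (a * Ja) ca h0 (by nlinarith)
    linarith
  have z2 : |v| * (b * Jb) ≤ S + 1 * (b * Jb) := by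
    have := amgm_aux v (b * Jb)
    have w1 := sq_aux (b * Jb) 1 h0' (by nlinarith)
    linarith
  have z3 : (S + ca * (a * Ja)) + (S + 1 * (b * Jb)) ≤ (2 + ca) * (S + a * Ja + b * Jb) := by
    have q1 := mul_nonneg hca hS0
    have q2 := mul_nonneg hca h0'
    linarith
  calc K * |v| * |r3| ≤ K * |v| * (c3 * b * (a * Ja + b * Jb)) := by gcongr
    _ = K * c3 * b * (|v| * (a * Ja) + |v| * (b * Jb)) := by ring
    _ ≤ K * c3 * b * ((S + ca * (a * Ja)) + (S + 1 * (b * Jb))) := by gcongr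
    _ ≤ K * c3 * b * ((2 + ca) * (S + a * Ja + b * Jb)) := by gcongr
    _ = _ := by ring

lemma absW3 (a p3 Y r3 : ℝ) (ha : 0 < a) (hY : 0 ≤ Y) :
    |a ^ 3 * p3 * Y + r3| ≤ a ^ 3 * |p3| * Y + |r3| := by
  refine (abs_add_le _ _).trans ?_
  rw [abs_mul, abs_mul, abs_of_nonneg hY, abs_of_pos (by positivity : 0 < a ^ 3)]

lemma L2_lem (K c3 ca v S h a b Ja Jb p1 p3 Y r3 : ℝ) (hK : 0 ≤ K) (hc3 : 0 ≤ c3) (hca : 0 ≤ ca)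
    (hh : 0 < h) (ha : 0 < a) (haca : a ≤ ca) (hb : 0 < b) (hb1 : b ≤ 1)
    (hJa : 0 ≤ Ja) (hJa1 : Ja ≤ 1) (hJb : 0 ≤ Jb) (hJb1 : Jb ≤ 1) (hvS : v ^ 2 ≤ S)
    (hp1 : 0 ≤ p1) (hp1J : p1 ≤ 2 * Ja) (hp3 : |p3| ≤ p1) (hY : 0 ≤ Y) (hY1 : Y ≤ 1)
    (hr3 : |r3| ≤ c3 * b * (a * Ja + b * Jb)) :
    -(h * (a * p1 * Y * v ^ 2) + (K ^ 2 * (h * (a ^ 5 * Ja)) +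
      K * c3 * (2 + ca) * (h * (b * S + b * a * Ja + b ^ 2 * Jb)))) ≤
      K * v * (h * (a ^ 3 * p3 * Y + r3)) := by
  have y1 := L2a_lem K v a p1 p3 Y Ja hK ha hJa hp1 hp1J hp3 hY hY1
  have y2 := L2b_lem K c3 ca v S a b Ja Jb r3 hK hc3 hca ha haca hb hb1 hJa hJa1 hJb hJb1 hvS hr3
  have z := absW3 a p3 Y r3 ha hY
  have y3 : |K * v * (h * (a ^ 3 * p3 * Y + r3))| ≤ h * (a * p1 * Y * v ^ 2) + (K ^ 2 * (h * (a ^ 5 * Ja)) +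
      K * c3 * (2 + ca) * (h * (b * S + b * a * Ja + b ^ 2 * Jb))) := by
    rw [abs_mul, abs_mul, abs_mul h, abs_of_nonneg hK, abs_of_pos hh]
    calc K * |v| * (h * |a ^ 3 * p3 * Y + r3|) ≤ K * |v| * (h * (a ^ 3 * |p3| * Y + |r3|)) := by gcongr
      _ = h * (K * |v| * (a ^ 3 * |p3| * Y) + K * |v| * |r3|) := by ring
      _ ≤ h * ((a * p1 * Y * v ^ 2 + K ^ 2 * (a ^ 5 * Ja)) + K * c3 * (2 + ca) * (b * S + b * a * Ja + b ^ 2 * Jb)) :=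
          mul_le_mul_of_nonneg_left (add_le_add y1 y2) hh.le
      _ = _ := by ring
  exact (abs_le.1 y3).1

lemma L3_lem (α γ c3 ca v ρ S h a b Ja Jb p1 p3 Y r3 : ℝ) (hc3 : 0 ≤ c3) (hca : 0 ≤ ca)
    (hρ : 0 ≤ ρ) (hh : 0 < h) (ha : 0 < a) (haca : a ≤ ca) (hb : 0 < b) (hb1 : b ≤ 1)
    (hJa : 0 ≤ Ja) (hJa1 : Ja ≤ 1) (hJb : 0 ≤ Jb) (hJb1 : Jb ≤ 1) (hvS : v ^ 2 ≤ S) (hρS : ρ ≤ S)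
    (hp11 : p1 ≤ 1) (hp3 : |p3| ≤ p1) (hY : 0 ≤ Y) (hY1 : Y ≤ 1)
    (hr3 : |r3| ≤ c3 * b * (a * Ja + b * Jb)) :
    -((|α| + |γ|) * (1 + c3 * (ca + 1)) * (h * ((b + a ^ 3) * S))) ≤
      (α * v ^ 2 + γ * ρ) * (h * (a ^ 3 * p3 * Y + r3)) := by
  have hS0 : 0 ≤ S := hρ.trans hρS
  have y1 : |α * v ^ 2 + γ * ρ| ≤ (|α| + |γ|) * S := by
    refine (abs_add_le _ _).trans ?_
    rw [abs_mul, abs_mul, abs_of_nonneg hρ, abs_of_nonneg (sq_nonneg v), add_mul]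
    gcongr
  have hp31 := hp3.trans hp11
  have y2 : |h * (a ^ 3 * p3 * Y + r3)| ≤ h * ((1 + c3 * (ca + 1)) * (b + a ^ 3)) := by
    rw [abs_mul, abs_of_pos hh]
    apply mul_le_mul_of_nonneg_left _ hh.le
    have w1 : a ^ 3 * |p3| * Y ≤ a ^ 3 * 1 * 1 := by gcongr
    have w2 : |r3| ≤ c3 * b * (ca * 1 + 1 * 1) := hr3.trans (by gcongr)
    have w3 : 0 ≤ c3 * (ca + 1) * a ^ 3 := by positivity
    have := absW3 a p3 Y r3 ha hY
    linarith
  have y3 : |(α * v ^ 2 + γ * ρ) * (h * (a ^ 3 * p3 * Y + r3))| ≤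
      (|α| + |γ|) * (1 + c3 * (ca + 1)) * (h * ((b + a ^ 3) * S)) := by
    rw [abs_mul]
    calc _ ≤ ((|α| + |γ|) * S) * (h * ((1 + c3 * (ca + 1)) * (b + a ^ 3))) := by gcongr
      _ = _ := by ring
  exact (abs_le.1 y3).1

lemma L4_lem (c CP m v s d S X h a b p1 Y r1 : ℝ) (hm0 : 0 ≤ m) (hc : 0 ≤ c)
    (hh : 0 < h) (ha : 0 < a) (hb : 0 < b) (hs : 0 ≤ s) (hd : 0 ≤ d) (hS : s + d ≤ S)
    (hp1 : 0 ≤ p1) (hY : 0 ≤ Y) (hr1 : |r1| ≤ c * b) (hcut : a * p1 * (1 - Y) ≤ b)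
    (l1 : m * (s + d) + v ^ 2 ≤ X) (l2 : |X| ≤ CP * S) :
    m * (h * a * (p1 * (s + d))) + h * (a * p1 * Y * v ^ 2) - (c * CP + m) * (h * (b * S)) ≤
      h * (a * p1 * Y + r1) * X := by
  have z1 : a * p1 * Y * (m * (s + d) + v ^ 2) ≤ a * p1 * Y * X := by gcongr
  have z2 : |r1 * X| ≤ c * CP * (b * S) := by
    rw [abs_mul]
    calc _ ≤ (c * b) * (CP * S) := by gcongr
      _ = _ := by ring
  have z3 := (abs_le.1 z2).1
  have z4 : a * p1 * (1 - Y) * (m * (s + d)) ≤ b * (m * S) := by gcongr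
  have : m * (a * (p1 * (s + d))) + a * p1 * Y * v ^ 2 - (c * CP + m) * (b * S) ≤ (a * p1 * Y + r1) * X := by
    linarith
  have := mul_le_mul_of_nonneg_left this hh.le
  linarith

lemma sum_aux (C1 C2 C2' C3 C4 X1 X2 X3 X4 X5 X6 : ℝ) (hC1 : 0 ≤ C1) (hC2 : 0 ≤ C2) (hC2' : 0 ≤ C2')
    (hC3 : 0 ≤ C3) (hC4 : 0 ≤ C4) (h1 : 0 ≤ X1) (h2 : 0 ≤ X2) (h3 : 0 ≤ X3) (h4 : 0 ≤ X4) (h5 : 0 ≤ X5)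
    (h6 : 0 ≤ X6) :
    C1 * X1 + (C2 * X4 + C2' * (X2 + X5 + X6)) + C3 * (X2 + X3) + C4 * X2 ≤
      (C1 + C2 + C2' + C3 + C4) * (X1 + X2 + X3 + X4 + X5 + X6) := by
  have e : (C1 + C2 + C2' + C3 + C4) * (X1 + X2 + X3 + X4 + X5 + X6) =
    C1 * (X1 + X2 + X3 + X4 + X5 + X6) + C2 * (X1 + X2 + X3 + X4 + X5 + X6)
    + C2' * (X1 + X2 + X3 + X4 + X5 + X6) + C3 * (X1 + X2 + X3 + X4 + X5 + X6)
    + C4 * (X1 + X2 + X3 + X4 + X5 + X6) := by ring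
  rw [e]
  have g1 : C1 * X1 ≤ C1 * (X1 + X2 + X3 + X4 + X5 + X6) := mul_le_mul_of_nonneg_left (by linarith) hC1
  have g2 : C2 * X4 ≤ C2 * (X1 + X2 + X3 + X4 + X5 + X6) := mul_le_mul_of_nonneg_left (by linarith) hC2
  have g3 : C2' * (X2 + X5 + X6) ≤ C2' * (X1 + X2 + X3 + X4 + X5 + X6) :=
    mul_le_mul_of_nonneg_left (by linarith) hC2'
  have g4 : C3 * (X2 + X3) ≤ C3 * (X1 + X2 + X3 + X4 + X5 + X6) :=
    mul_le_mul_of_nonneg_left (by linarith) hC3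
  have g5 : C4 * X2 ≤ C4 * (X1 + X2 + X3 + X4 + X5 + X6) := mul_le_mul_of_nonneg_left (by linarith) hC4
  linarith

/-- pointwise lower bound -/
lemma Q_lower (α β γ M m c c3 ca : ℝ) (hα : α < 0) (hγ : γ < 0) (hM : 0 ≤ M)
    (hm0 : 0 ≤ m) (hm1 : m ≤ -3 * α) (hm2 : m ≤ -4 * γ) (hc : 0 ≤ c) (hc3 : 0 ≤ c3) (hca : 0 ≤ ca) :
    ∃ C, 0 ≤ C ∧ ∀ v ρ s d j h a b t e Ja Jb p1 p3 Y r1 r3 Wt W1 W3 : ℝ,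
      |v| ≤ M → 0 ≤ ρ → ρ ≤ M ^ 2 → 0 ≤ s → 0 ≤ d → |2 * j| ≤ ρ + s → 0 < h → 0 < a → a ≤ ca →
      0 < b → b ≤ 1 → 0 < t → 1 ≤ e → 0 ≤ Ja → Ja ≤ 1 → 0 ≤ Jb → Jb ≤ 1 →
      0 ≤ p1 → p1 ≤ 1 → p1 ≤ 2 * Ja → |p3| ≤ p1 → 0 ≤ Y → Y ≤ 1 →
      |Wt| ≤ c * (h / t) * Jb → W1 = h * (a * p1 * Y + r1) → |r1| ≤ c * b →
      W3 = h * (a ^ 3 * p3 * Y + r3) → |r3| ≤ c3 * b * (a * Ja + b * Jb) → a * p1 * (1 - Y) ≤ b →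
      m * (h * a * (p1 * (s + d))) - C * h * ((1 / t) * (e * (v ^ 2 + ρ + s + d) + e⁻¹ * Jb)
         + (b + a ^ 3) * (v ^ 2 + ρ + s + d) + (a ^ 5 + b * a) * Ja + b ^ 2 * Jb) ≤
      ((2 + 4 * |α| * M + |β| * M ^ 2) * v + α * v ^ 2 - 2 * γ * j) * Wt
        + (2 + 4 * |α| * M + |β| * M ^ 2) * v * W3 + (α * v ^ 2 + γ * ρ) * W3
        + W1 * Pp (2 + 4 * |α| * M + |β| * M ^ 2) α β γ v ρ s d := by
  have hK : 0 ≤ 2 + 4 * |α| * M + |β| * M ^ 2 := by positivity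
  have hlow := fun v ρ s d => Pp_lower α β γ M m v ρ s d hα hγ hM hm1 hm2
  generalize 2 + 4 * |α| * M + |β| * M ^ 2 = K at hK hlow
  obtain ⟨CP, hCP, hPabs⟩ := Pp_abs K α β γ M hM hK
  refine ⟨(K + |α| + |γ|) * c + K ^ 2 + K * c3 * (2 + ca) + (|α| + |γ|) * (1 + c3 * (ca + 1)) + (c * CP + m),
    by positivity, ?_⟩
  intro v ρ s d j h a b t e Ja Jb p1 p3 Y r1 r3 Wt W1 W3 hv hρ hρM hs hd hj hh ha haca hb hb1 ht he
    hJa hJa1 hJb hJb1 hp1 hp11 hp1J hp3 hY hY1 hWt hW1 hr1 hW3 hr3 hcut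
  have l1 := hlow v ρ s d hv hρ hρM hs hd
  have l2 := hPabs v ρ s d hv hρ hρM hs hd
  have L1 := L1_lem K α γ c v ρ s d j h t e Jb Wt hK hc hρ hs hd hj hh ht he hJb hJb1 hWt
  obtain ⟨S, hS⟩ : ∃ S, S = v ^ 2 + ρ + s + d := ⟨_, rfl⟩
  have hv2 := sq_nonneg v
  rw [← hS] at l2 L1 ⊢
  have hS0 : 0 ≤ S := by rw [hS]; positivity
  have L2 := L2_lem K c3 ca v S h a b Ja Jb p1 p3 Y r3 hK hc3 hca hh ha haca hb hb1 hJa hJa1 hJb hJb1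
    (by linarith) hp1 hp1J hp3 hY hY1 hr3
  have L3 := L3_lem α γ c3 ca v ρ S h a b Ja Jb p1 p3 Y r3 hc3 hca hρ hh ha haca hb hb1 hJa hJa1 hJb hJb1
    (by linarith) (by linarith) hp11 hp3 hY hY1 hr3
  have L4 := L4_lem c CP m v s d S _ h a b p1 Y r1 hm0 hc hh ha hb hs hd (by linarith) hp1 hY hr1 hcut l1 l2
  rw [← hW3] at L2 L3
  rw [← hW1] at L4
  have := sum_aux ((K + |α| + |γ|) * c) (K ^ 2) (K * c3 * (2 + ca)) ((|α| + |γ|) * (1 + c3 * (ca + 1)))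
    (c * CP + m) (h * ((1 / t) * (e * S + e⁻¹ * Jb))) (h * (b * S)) (h * (a ^ 3 * S)) (h * (a ^ 5 * Ja))
    (h * (b * a * Ja)) (h * (b ^ 2 * Jb)) (by positivity) (by positivity) (by positivity) (by positivity)
    (by positivity) (by positivity) (by positivity) (by positivity) (by positivity) (by positivity) (by positivity)
  rw [show h * (b * S) + h * (b * a * Ja) + h * (b ^ 2 * Jb) = h * (b * S + b * a * Ja + b ^ 2 * Jb) by ring,
    show h * (b * S) + h * (a ^ 3 * S) = h * ((b + a ^ 3) * S) by ring] at this
  rw [mul_assoc _ h, show h * ((1 / t) * (e * S + e⁻¹ * Jb) + (b + a ^ 3) * S + (a ^ 5 + b * a) * Ja + b ^ 2 * Jb)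
    = h * ((1 / t) * (e * S + e⁻¹ * Jb)) + h * (b * S) + h * (a ^ 3 * S) + h * (a ^ 5 * Ja)
      + h * (b * a * Ja) + h * (b ^ 2 * Jb) by ring]
  linarith only [this, L1, L2, L3, L4]

noncomputable def w0 (P : ℝ → ℝ) (a b h : ℝ → ℝ) (t x : ℝ) : ℝ := h t * (Phi (x * a t) * P (x * b t))
noncomputable def w1 (P P1 : ℝ → ℝ) (a b h : ℝ → ℝ) (t x : ℝ) : ℝ :=
  h t * (a t * Phi1 (x * a t) * P (x * b t) + b t * Phi (x * a t) * P1 (x * b t))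
noncomputable def w2 (P P1 P2 : ℝ → ℝ) (a b h : ℝ → ℝ) (t x : ℝ) : ℝ :=
  h t * (a t ^ 2 * Phi2 (x * a t) * P (x * b t) + 2 * a t * b t * Phi1 (x * a t) * P1 (x * b t)
    + b t ^ 2 * Phi (x * a t) * P2 (x * b t))
noncomputable def w3 (P P1 P2 P3 : ℝ → ℝ) (a b h : ℝ → ℝ) (t x : ℝ) : ℝ :=
  h t * (a t ^ 3 * Phi3 (x * a t) * P (x * b t) + (3 * a t ^ 2 * b t * Phi2 (x * a t) * P1 (x * b t)
    + 3 * a t * b t ^ 2 * Phi1 (x * a t) * P2 (x * b t) + b t ^ 3 * Phi (x * a t) * P3 (x * b t)))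
noncomputable def wt (P P1 : ℝ → ℝ) (a b h da db dh : ℝ → ℝ) (t x : ℝ) : ℝ :=
  dh t * (Phi (x * a t) * P (x * b t)) + h t * (x * da t * Phi1 (x * a t) * P (x * b t)
    + x * db t * Phi (x * a t) * P1 (x * b t))

section
variable {P P1 P2 P3 : ℝ → ℝ} {a b h da db dh : ℝ → ℝ}

lemma comp_mul_d {F F1 : ℝ → ℝ} (hF : ∀ z, HasDerivAt F (F1 z) z) (k x : ℝ) :
    HasDerivAt (fun y => F (y * k)) (k * F1 (x * k)) x := by
  have h1 : HasDerivAt (fun y : ℝ => y * k) k x := by simpa using (hasDerivAt_id x).mul_const k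
  have := (hF (x * k)).comp x h1
  exact this.congr_deriv (by ring)

lemma w0_x (hP : ∀ z, HasDerivAt P (P1 z) z) (t x : ℝ) :
    HasDerivAt (w0 P a b h t) (w1 P P1 a b h t x) x := by
  have := ((comp_mul_d Phi_d (a t) x).mul (comp_mul_d hP (b t) x)).const_mul (h t)
  refine HasDerivAt.congr_deriv (f := w0 P a b h t) this ?_
  unfold w1; ring

lemma w1_x (hP : ∀ z, HasDerivAt P (P1 z) z) (hP1 : ∀ z, HasDerivAt P1 (P2 z) z) (t x : ℝ) :
    HasDerivAt (w1 P P1 a b h t) (w2 P P1 P2 a b h t x) x := by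
  have := (((comp_mul_d Phi1_d (a t) x).const_mul (a t)).mul (comp_mul_d hP (b t) x)).add
    (((comp_mul_d Phi_d (a t) x).const_mul (b t)).mul (comp_mul_d hP1 (b t) x)) |>.const_mul (h t)
  refine HasDerivAt.congr_deriv (f := w1 P P1 a b h t) this ?_
  unfold w2; ring

lemma w2_x (hP : ∀ z, HasDerivAt P (P1 z) z) (hP1 : ∀ z, HasDerivAt P1 (P2 z) z)
    (hP2 : ∀ z, HasDerivAt P2 (P3 z) z) (t x : ℝ) :
    HasDerivAt (w2 P P1 P2 a b h t) (w3 P P1 P2 P3 a b h t x) x := by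
  have := ((((comp_mul_d Phi2_d (a t) x).const_mul (a t ^ 2)).mul (comp_mul_d hP (b t) x)).add
    (((comp_mul_d Phi1_d (a t) x).const_mul (2 * a t * b t)).mul (comp_mul_d hP1 (b t) x))).add
    (((comp_mul_d Phi_d (a t) x).const_mul (b t ^ 2)).mul (comp_mul_d hP2 (b t) x)) |>.const_mul (h t)
  refine HasDerivAt.congr_deriv (f := w2 P P1 P2 a b h t) this ?_
  unfold w3; ring

lemma w0_t (hP : ∀ z, HasDerivAt P (P1 z) z) (t x : ℝ) (ha : HasDerivAt a (da t) t)
    (hb : HasDerivAt b (db t) t) (hh : HasDerivAt h (dh t) t) :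
    HasDerivAt (fun s => w0 P a b h s x) (wt P P1 a b h da db dh t x) t := by
  have h1 := (Phi_d (x * a t)).comp t (ha.const_mul x)
  have h2 := (hP (x * b t)).comp t (hb.const_mul x)
  refine HasDerivAt.congr_deriv (f := fun s => w0 P a b h s x) (hh.mul (h1.mul h2)) ?_
  unfold wt; simp only [Function.comp, Pi.mul_apply]; ring

lemma w3_c (hP : Continuous P) (hP1 : Continuous P1) (hP2 : Continuous P2) (hP3 : Continuous P3) (t : ℝ) :
    Continuous (w3 P P1 P2 P3 a b h t) := by
  have := Phi_c; have := Phi1_c; have := Phi2_c; have := Phi3_c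
  unfold w3; fun_prop

lemma wt_cx (hP : Continuous P) (hP1 : Continuous P1) (t : ℝ) :
    Continuous (wt P P1 a b h da db dh t) := by
  have := Phi_c; have := Phi1_c; have := Phi2_c; have := Phi3_c
  unfold wt; fun_prop

lemma w0_con (hP : Continuous P) {s : Set ℝ} (ha : ContinuousOn a s) (hb : ContinuousOn b s)
    (hh : ContinuousOn h s) :
    ContinuousOn (fun p : ℝ × ℝ => w0 P a b h p.1 p.2) (s ×ˢ Set.univ) := by
  have c1 : ∀ {k : ℝ → ℝ}, ContinuousOn k s → ContinuousOn (fun p : ℝ × ℝ => k p.1) (s ×ˢ Set.univ) :=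
    fun hk => hk.comp continuousOn_fst (fun p hp => hp.1)
  have c2 : ∀ {k F : ℝ → ℝ}, ContinuousOn k s → Continuous F →
      ContinuousOn (fun p : ℝ × ℝ => F (p.2 * k p.1)) (s ×ˢ Set.univ) :=
    fun hk hF => hF.comp_continuousOn (continuousOn_snd.mul (c1 hk))
  exact (c1 hh).mul ((c2 ha Phi_c).mul (c2 hb hP))

lemma wt_con (hP : Continuous P) (hP1 : Continuous P1) {s : Set ℝ} (ha : ContinuousOn a s) (hb : ContinuousOn b s)
    (hh : ContinuousOn h s) (hda : ContinuousOn da s) (hdb : ContinuousOn db s) (hdh : ContinuousOn dh s) :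
    ContinuousOn (fun p : ℝ × ℝ => wt P P1 a b h da db dh p.1 p.2) (s ×ˢ Set.univ) := by
  have c1 : ∀ {k : ℝ → ℝ}, ContinuousOn k s → ContinuousOn (fun p : ℝ × ℝ => k p.1) (s ×ˢ Set.univ) :=
    fun hk => hk.comp continuousOn_fst (fun p hp => hp.1)
  have c2 : ∀ {k F : ℝ → ℝ}, ContinuousOn k s → Continuous F →
      ContinuousOn (fun p : ℝ × ℝ => F (p.2 * k p.1)) (s ×ˢ Set.univ) :=
    fun hk hF => hF.comp_continuousOn (continuousOn_snd.mul (c1 hk))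
  exact ((c1 hdh).mul ((c2 ha Phi_c).mul (c2 hb hP))).add ((c1 hh).mul
    ((((continuousOn_snd.mul (c1 hda)).mul (c2 ha Phi1_c)).mul (c2 hb hP)).add
    (((continuousOn_snd.mul (c1 hdb)).mul (c2 ha Phi_c)).mul (c2 hb hP1))))

lemma w_supp (hz : ∀ z, 2 ≤ |z| → P z = 0 ∧ P1 z = 0 ∧ P2 z = 0 ∧ P3 z = 0) (t x : ℝ)
    (hx : 2 ≤ |x * b t|) : w0 P a b h t x = 0 ∧ w1 P P1 a b h t x = 0 ∧ w2 P P1 P2 a b h t x = 0 ∧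
      w3 P P1 P2 P3 a b h t x = 0 ∧ wt P P1 a b h da db dh t x = 0 := by
  obtain ⟨h0, h1, h2, h3⟩ := hz _ hx
  unfold w0 w1 w2 w3 wt
  simp [h0, h1, h2, h3]

end

/-- the flux identity -/
lemma flux (α β γ K : ℝ) (f f1 f2 f3 g g1 g2 g3 v v1 v2 v3 W W1 W2 W3 : ℝ → ℝ) (x : ℝ)
    (hf : HasDerivAt f (f1 x) x) (hf1 : HasDerivAt f1 (f2 x) x) (hf2 : HasDerivAt f2 (f3 x) x)
    (hg : HasDerivAt g (g1 x) x) (hg1 : HasDerivAt g1 (g2 x) x) (hg2 : HasDerivAt g2 (g3 x) x)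
    (hv : HasDerivAt v (v1 x) x) (hv1 : HasDerivAt v1 (v2 x) x) (hv2 : HasDerivAt v2 (v3 x) x)
    (hW : HasDerivAt W (W1 x) x) (hW1 : HasDerivAt W1 (W2 x) x) (hW2 : HasDerivAt W2 (W3 x) x) :
    HasDerivAt (fun y =>
      (K * (-v2 y - v y ^ 2 / 2 + γ * (f y ^ 2 + g y ^ 2)) - 2 * α * (v y * v2 y - v1 y ^ 2 / 2)
        - 2 * α / 3 * v y ^ 3 + 2 * α * γ * (v y * (f y ^ 2 + g y ^ 2))
        + γ * β * (f y ^ 2 + g y ^ 2) ^ 2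
        - 2 * γ * (f y * f2 y - f1 y ^ 2 + (g y * g2 y - g1 y ^ 2))) * W y
      + (K * v1 y + 2 * α * (v y * v1 y) + 2 * γ * (f y * f1 y + g y * g1 y)) * W1 y
      + (-K * v y - α * v y ^ 2 - γ * (f y ^ 2 + g y ^ 2)) * W2 y)
      (((K + 2 * α * v x) * (-v3 x - v x * v1 x + γ * (2 * f x * f1 x + 2 * g x * g1 x))
        - 2 * γ * (f x * f3 x - f1 x * f2 x + (g x * g3 x - g1 x * g2 x)
          - (α * v1 x + β * (2 * f x * f1 x + 2 * g x * g1 x)) * (f x ^ 2 + g x ^ 2))) * W x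
       - (K * v x * W3 x + (α * v x ^ 2 + γ * (f x ^ 2 + g x ^ 2)) * W3 x
          + W1 x * Pp K α β γ (v x) (f x ^ 2 + g x ^ 2) (f1 x ^ 2 + g1 x ^ 2) (v1 x ^ 2))) x := by
  have hρ := (hf.pow 2).add (hg.pow 2)
  have A := (((((((hv2.neg.sub ((hv.pow 2).div_const 2)).add (hρ.const_mul γ)).const_mul K).sub
    (((hv.mul hv2).sub ((hv1.pow 2).div_const 2)).const_mul (2 * α))).sub
    ((hv.pow 3).const_mul (2 * α / 3))).add ((hv.mul hρ).const_mul (2 * α * γ))).add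
    ((hρ.pow 2).const_mul (γ * β))).sub
    ((((hf.mul hf2).sub (hf1.pow 2)).add ((hg.mul hg2).sub (hg1.pow 2))).const_mul (2 * γ))
  have B := ((hv1.const_mul K).add ((hv.mul hv1).const_mul (2 * α))).add
    (((hf.mul hf1).add (hg.mul hg1)).const_mul (2 * γ))
  have C := ((hv.const_mul (-K)).sub ((hv.pow 2).const_mul α)).sub (hρ.const_mul γ)
  have T := ((A.mul hW).add (B.mul hW1)).add (C.mul hW2)
  refine HasDerivAt.congr_deriv T ?_
  unfold Pp
  simp only [Pi.add_apply, Pi.mul_apply, Pi.sub_apply, Pi.neg_apply, Pi.pow_apply, Function.comp]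
  push_cast
  ring

structure RS (α β γ C0 M : ℝ) (f g v : ℝ × ℝ → ℝ) : Prop where
  sf : Smo f
  sg : Smo g
  sv : Smo v
  eqf : ∀ p, dT f p = (α * v p + β * (f p ^ 2 + g p ^ 2)) * g p - dX (dX g) p
  eqg : ∀ p, dT g p = dX (dX f) p - (α * v p + β * (f p ^ 2 + g p ^ 2)) * f p
  eqv : ∀ p, dT v p = - dX (dX (dX v)) p - v p * dX v p + γ * (2 * f p * dX f p + 2 * g p * dX g p)
  hM0 : 0 ≤ M
  hv : ∀ p, |v p| ≤ M
  hρ : ∀ p, f p ^ 2 + g p ^ 2 ≤ M ^ 2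
  hint : ∀ t, Integrable (fun x => v (t, x) ^ 2 + (f (t, x) ^ 2 + g (t, x) ^ 2)
    + (dX f (t, x) ^ 2 + dX g (t, x) ^ 2) + dX v (t, x) ^ 2)
  hC0 : ∀ t, ∫ x, (v (t, x) ^ 2 + (f (t, x) ^ 2 + g (t, x) ^ 2)
    + (dX f (t, x) ^ 2 + dX g (t, x) ^ 2) + dX v (t, x) ^ 2) ≤ C0

noncomputable def dens (α γ K : ℝ) (f g v : ℝ × ℝ → ℝ) (p : ℝ × ℝ) : ℝ :=
  K * v p + α * v p ^ 2 - 2 * γ * (f p * dX g p - g p * dX f p)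

noncomputable def ddens (α β γ K : ℝ) (f g v : ℝ × ℝ → ℝ) (p : ℝ × ℝ) : ℝ :=
  (K + 2 * α * v p) * (-dX (dX (dX v)) p - v p * dX v p + γ * (2 * f p * dX f p + 2 * g p * dX g p))
        - 2 * γ * (f p * dX (dX (dX f)) p - dX f p * dX (dX f) p + (g p * dX (dX (dX g)) p - dX g p * dX (dX g) p)
          - (α * dX v p + β * (2 * f p * dX f p + 2 * g p * dX g p)) * (f p ^ 2 + g p ^ 2))

lemma dens_t {α β γ C0 M : ℝ} {f g v : ℝ × ℝ → ℝ} (H : RS α β γ C0 M f g v) (K t x : ℝ) :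
    HasDerivAt (fun s => dens α γ K f g v (s, x)) (ddens α β γ K f g v (t, x)) t := by
  have hf := H.sf.ht t x
  have hg := H.sg.ht t x
  have hv := H.sv.ht t x
  have hfx := H.sf.dX.ht t x
  have hgx := H.sg.dX.ht t x
  have hρ := ((H.sf.hx t x).pow 2).add ((H.sg.hx t x).pow 2)
  have hN := ((H.sv.hx t x).const_mul α).add (hρ.const_mul β)
  have e1 : dT (dX f) (t, x) = (α * dX v (t,x) + β * (2 * f (t,x) * dX f (t,x) + 2 * g (t,x) * dX g (t,x))) * g (t,x)
      + (α * v (t,x) + β * (f (t,x) ^ 2 + g (t,x) ^ 2)) * dX g (t,x) - dX (dX (dX g)) (t,x) := by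
    rw [H.sf.comm, funext H.eqf]
    have hs : Smo (fun p => (α * v p + β * (f p ^ 2 + g p ^ 2)) * g p - dX (dX g) p) := by
      rw [← funext H.eqf]; exact H.sf.dT
    refine hs.dX_eq (t, x) _ (HasDerivAt.congr_deriv
      ((hN.mul (H.sg.hx t x)).sub (H.sg.dX.dX.hx t x)) ?_)
    simp only [Pi.add_apply, Pi.pow_apply]
    push_cast; ring
  have e2 : dT (dX g) (t, x) = dX (dX (dX f)) (t,x) -
      ((α * dX v (t,x) + β * (2 * f (t,x) * dX f (t,x) + 2 * g (t,x) * dX g (t,x))) * f (t,x)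
      + (α * v (t,x) + β * (f (t,x) ^ 2 + g (t,x) ^ 2)) * dX f (t,x)) := by
    rw [H.sg.comm, funext H.eqg]
    have hs : Smo (fun p => dX (dX f) p - (α * v p + β * (f p ^ 2 + g p ^ 2)) * f p) := by
      rw [← funext H.eqg]; exact H.sg.dT
    refine hs.dX_eq (t, x) _ (HasDerivAt.congr_deriv
      ((H.sf.dX.dX.hx t x).sub (hN.mul (H.sf.hx t x))) ?_)
    simp only [Pi.add_apply, Pi.pow_apply]
    push_cast; ring
  have T := ((hv.const_mul K).add ((hv.pow 2).const_mul α)).sub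
    (((hf.mul hgx).sub (hg.mul hfx)).const_mul (2 * γ))
  refine HasDerivAt.congr_deriv T ?_
  rw [e1, e2, H.eqf, H.eqg, H.eqv]
  unfold ddens
  push_cast
  ring

lemma Smo.cont {F : ℝ × ℝ → ℝ} (h : Smo F) : Continuous F := h.continuous

lemma dens_c {α β γ C0 M : ℝ} {f g v : ℝ × ℝ → ℝ} (H : RS α β γ C0 M f g v) (K : ℝ) :
    Continuous (dens α γ K f g v) := by
  have := H.sf.cont; have := H.sg.cont; have := H.sv.cont
  have := H.sf.dX.cont; have := H.sg.dX.cont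
  unfold dens; fun_prop

lemma ddens_c {α β γ C0 M : ℝ} {f g v : ℝ × ℝ → ℝ} (H : RS α β γ C0 M f g v) (K : ℝ) :
    Continuous (ddens α β γ K f g v) := by
  have := H.sf.cont; have := H.sg.cont; have := H.sv.cont
  have := H.sf.dX.cont; have := H.sg.dX.cont; have := H.sv.dX.cont
  have := H.sf.dX.dX.cont; have := H.sg.dX.dX.cont
  have := H.sf.dX.dX.dX.cont; have := H.sg.dX.dX.dX.cont; have := H.sv.dX.dX.dX.cont
  unfold ddens; fun_prop

noncomputable def QQ (α β γ K : ℝ) (f g v : ℝ × ℝ → ℝ) (Wt W1 W3 : ℝ → ℝ → ℝ) (t x : ℝ) : ℝ :=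
  (K * v (t,x) + α * v (t,x) ^ 2 - 2 * γ * (f (t,x) * dX g (t,x) - g (t,x) * dX f (t,x))) * Wt t x
    + K * v (t,x) * W3 t x + (α * v (t,x) ^ 2 + γ * (f (t,x) ^ 2 + g (t,x) ^ 2)) * W3 t x
    + W1 t x * Pp K α β γ (v (t,x)) (f (t,x) ^ 2 + g (t,x) ^ 2) (dX f (t,x) ^ 2 + dX g (t,x) ^ 2) (dX v (t,x) ^ 2)

lemma cs_of {F : ℝ → ℝ} (R : ℝ) (h : ∀ x, R < |x| → F x = 0) : HasCompactSupport F := by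
  apply HasCompactSupport.intro (K := Set.Icc (-R) R) isCompact_Icc
  intro x hx
  apply h
  by_contra hh
  exact hx (abs_le.mp (not_lt.mp hh))

lemma energy {α β γ C0 M : ℝ} {f g v : ℝ × ℝ → ℝ} (H : RS α β γ C0 M f g v) (K : ℝ)
    {P P1 P2 P3 : ℝ → ℝ} {a b h da db dh : ℝ → ℝ}
    (hP : ∀ z, HasDerivAt P (P1 z) z) (hP1 : ∀ z, HasDerivAt P1 (P2 z) z)
    (hP2 : ∀ z, HasDerivAt P2 (P3 z) z) (hP3c : Continuous P3)
    (hz : ∀ z, 2 ≤ |z| → P z = 0 ∧ P1 z = 0 ∧ P2 z = 0 ∧ P3 z = 0)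
    (ha : ∀ t, 1 < t → HasDerivAt a (da t) t) (hb : ∀ t, 1 < t → HasDerivAt b (db t) t)
    (hh : ∀ t, 1 < t → HasDerivAt h (dh t) t)
    (hda : ContinuousOn da (Set.Ioi 1)) (hdb : ContinuousOn db (Set.Ioi 1))
    (hdh : ContinuousOn dh (Set.Ioi 1)) (hb0 : ∀ t, 1 < t → 0 < b t) (t₀ : ℝ) (ht₀ : 1 < t₀) :
    Integrable (QQ α β γ K f g v (wt P P1 a b h da db dh) (w1 P P1 a b h) (w3 P P1 P2 P3 a b h) t₀) ∧
    HasDerivAt (fun t => ∫ x, dens α γ K f g v (t, x) * w0 P a b h t x)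
      (∫ x, QQ α β γ K f g v (wt P P1 a b h da db dh) (w1 P P1 a b h) (w3 P P1 P2 P3 a b h) t₀ x) t₀ := by
  have cP : Continuous P := continuous_iff_continuousAt.2 fun z => (hP z).continuousAt
  have cP1 : Continuous P1 := continuous_iff_continuousAt.2 fun z => (hP1 z).continuousAt
  have cP2 : Continuous P2 := continuous_iff_continuousAt.2 fun z => (hP2 z).continuousAt
  have ca : ContinuousOn a (Set.Ioi 1) := fun t ht => (ha t ht).continuousAt.continuousWithinAt
  have cb : ContinuousOn b (Set.Ioi 1) := fun t ht => (hb t ht).continuousAt.continuousWithinAt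
  have ch : ContinuousOn h (Set.Ioi 1) := fun t ht => (hh t ht).continuousAt.continuousWithinAt
  set ε := (t₀ - 1) / 2 with hε
  have hε0 : 0 < ε := by rw [hε]; linarith
  have hsub : Metric.closedBall t₀ ε ⊆ Set.Ioi 1 := by
    intro t ht
    rw [Metric.mem_closedBall, Real.dist_eq, abs_le] at ht
    rw [Set.mem_Ioi]; linarith [ht.1]
  have hmem : t₀ ∈ Metric.closedBall t₀ ε := Metric.mem_closedBall_self hε0.le
  obtain ⟨tm, htm, hmin⟩ := (isCompact_closedBall t₀ ε).exists_isMinOn ⟨t₀, hmem⟩ (cb.mono hsub)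
  have hbm := hb0 tm (hsub htm)
  set R := 2 / b tm with hR
  have hbig : ∀ t ∈ Metric.closedBall t₀ ε, ∀ x, R < |x| → 2 ≤ |x * b t| := by
    intro t ht x hx
    have h1 : b tm ≤ b t := hmin ht
    rw [abs_mul, abs_of_pos (hb0 t (hsub ht))]
    rw [hR, div_lt_iff₀ hbm] at hx
    have := abs_nonneg x
    nlinarith
  have supp := fun t ht x hx => w_supp (a := a) (h := h) (da := da) (db := db) (dh := dh) (b := b) hz t x (hbig t ht x hx)
  -- spatial pieces
  have hw0 := fun t x => w0_x (a := a) (b := b) (h := h) hP t x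
  have hw1 := fun t x => w1_x (a := a) (b := b) (h := h) hP hP1 t x
  have hw2 := fun t x => w2_x (a := a) (b := b) (h := h) hP hP1 hP2 t x
  have cw0 : ∀ t, Continuous (w0 P a b h t) := fun t => continuous_iff_continuousAt.2 fun x => (hw0 t x).continuousAt
  have cw1 : ∀ t, Continuous (w1 P P1 a b h t) := fun t => continuous_iff_continuousAt.2 fun x => (hw1 t x).continuousAt
  have cw2 : ∀ t, Continuous (w2 P P1 P2 a b h t) := fun t => continuous_iff_continuousAt.2 fun x => (hw2 t x).continuousAt
  have cw3 : ∀ t, Continuous (w3 P P1 P2 P3 a b h t) := fun t => w3_c cP cP1 cP2 hP3c t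
  have cwt : ∀ t, Continuous (wt P P1 a b h da db dh t) := fun t => wt_cx cP cP1 t
  have cc : ∀ {F : ℝ × ℝ → ℝ}, Smo F → Continuous (fun x => F (t₀, x)) := fun hF =>
    hF.cont.comp (by fun_prop)
  have c1 := cc H.sf; have c2 := cc H.sg; have c3 := cc H.sv
  have c4 := cc H.sf.dX; have c5 := cc H.sg.dX; have c6 := cc H.sv.dX
  have c7 := cc H.sf.dX.dX; have c8 := cc H.sg.dX.dX; have c9 := cc H.sv.dX.dX
  have c10 := cc H.sf.dX.dX.dX; have c11 := cc H.sg.dX.dX.dX; have c12 := cc H.sv.dX.dX.dX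
  have cw0' := cw0 t₀; have cw1' := cw1 t₀; have cw2' := cw2 t₀; have cw3' := cw3 t₀; have cwt' := cwt t₀
  have iQ : Integrable (QQ α β γ K f g v (wt P P1 a b h da db dh) (w1 P P1 a b h) (w3 P P1 P2 P3 a b h) t₀) := by
    apply Continuous.integrable_of_hasCompactSupport
    · unfold QQ Pp
      have := H.sf.cont; have := H.sg.cont; have := H.sv.cont
      have := H.sf.dX.cont; have := H.sg.dX.cont; have := H.sv.dX.cont
      have := H.sf.dX.dX.cont; have := H.sg.dX.dX.cont; have := H.sv.dX.dX.cont
      have := H.sf.dX.dX.dX.cont; have := H.sg.dX.dX.dX.cont; have := H.sv.dX.dX.dX.cont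
      clear c1 c2 c3 c4 c5 c6 c7 c8 c9 c10 c11 c12
      revert cw0' cw1' cw2' cw3' cwt'
      generalize w0 P a b h t₀ = q0
      generalize w1 P P1 a b h t₀ = q1
      generalize w2 P P1 P2 a b h t₀ = q2
      generalize w3 P P1 P2 P3 a b h t₀ = q3
      generalize wt P P1 a b h da db dh t₀ = q4
      intros
      fun_prop
    · apply cs_of R
      intro x hx
      obtain ⟨s0, s1, s2, s3, s4⟩ := supp t₀ hmem x hx
      unfold QQ
      rw [s1, s3, s4]; ring
  refine ⟨iQ, ?_⟩
  have D := deriv_int (fun t x => dens α γ K f g v (t, x) * w0 P a b h t x)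
    (fun t x => ddens α β γ K f g v (t, x) * w0 P a b h t x
      + dens α γ K f g v (t, x) * wt P P1 a b h da db dh t x) t₀ ε R hε0 ?_ ?_ ?_ ?_
  · refine D.congr_deriv ?_
    have hG := fun x => flux α β γ K (fun y => f (t₀, y)) (fun y => dX f (t₀, y)) (fun y => dX (dX f) (t₀, y))
      (fun y => dX (dX (dX f)) (t₀, y)) (fun y => g (t₀, y)) (fun y => dX g (t₀, y)) (fun y => dX (dX g) (t₀, y))
      (fun y => dX (dX (dX g)) (t₀, y)) (fun y => v (t₀, y)) (fun y => dX v (t₀, y)) (fun y => dX (dX v) (t₀, y))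
      (fun y => dX (dX (dX v)) (t₀, y)) (w0 P a b h t₀) (w1 P P1 a b h t₀) (w2 P P1 P2 a b h t₀)
      (w3 P P1 P2 P3 a b h t₀) x (H.sf.hx t₀ x) (H.sf.dX.hx t₀ x) (H.sf.dX.dX.hx t₀ x)
      (H.sg.hx t₀ x) (H.sg.dX.hx t₀ x) (H.sg.dX.dX.hx t₀ x)
      (H.sv.hx t₀ x) (H.sv.dX.hx t₀ x) (H.sv.dX.dX.hx t₀ x) (hw0 t₀ x) (hw1 t₀ x) (hw2 t₀ x)
    have iG' := integral_eq_zero_of_hasDerivAt_of_integrable hG ?_ ?_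
    · rw [← sub_eq_zero, ← integral_sub ?_ iQ, ← iG']
      · congr 1
        ext x
        unfold ddens dens QQ
        ring
      · apply Continuous.integrable_of_hasCompactSupport
        · unfold ddens dens
          have := H.sf.cont; have := H.sg.cont; have := H.sv.cont
          have := H.sf.dX.cont; have := H.sg.dX.cont; have := H.sv.dX.cont
          have := H.sf.dX.dX.cont; have := H.sg.dX.dX.cont; have := H.sv.dX.dX.cont
          have := H.sf.dX.dX.dX.cont; have := H.sg.dX.dX.dX.cont; have := H.sv.dX.dX.dX.cont
          clear c1 c2 c3 c4 c5 c6 c7 c8 c9 c10 c11 c12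
          revert cw0' cw1' cw2' cw3' cwt'
          generalize w0 P a b h t₀ = q0
          generalize w1 P P1 a b h t₀ = q1
          generalize w2 P P1 P2 a b h t₀ = q2
          generalize w3 P P1 P2 P3 a b h t₀ = q3
          generalize wt P P1 a b h da db dh t₀ = q4
          intros
          fun_prop
        · apply cs_of R
          intro x hx
          obtain ⟨s0, s1, s2, s3, s4⟩ := supp t₀ hmem x hx
          rw [s0, s4]; ring
    · apply Continuous.integrable_of_hasCompactSupport
      · unfold Pp
        have := H.sf.cont; have := H.sg.cont; have := H.sv.cont
        have := H.sf.dX.cont; have := H.sg.dX.cont; have := H.sv.dX.cont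
        have := H.sf.dX.dX.cont; have := H.sg.dX.dX.cont; have := H.sv.dX.dX.cont
        have := H.sf.dX.dX.dX.cont; have := H.sg.dX.dX.dX.cont; have := H.sv.dX.dX.dX.cont
        clear c1 c2 c3 c4 c5 c6 c7 c8 c9 c10 c11 c12
        revert cw0' cw1' cw2' cw3' cwt'
        generalize w0 P a b h t₀ = q0
        generalize w1 P P1 a b h t₀ = q1
        generalize w2 P P1 P2 a b h t₀ = q2
        generalize w3 P P1 P2 P3 a b h t₀ = q3
        generalize wt P P1 a b h da db dh t₀ = q4
        intros
        fun_prop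
      · apply cs_of R
        intro x hx
        obtain ⟨s0, s1, s2, s3, s4⟩ := supp t₀ hmem x hx
        rw [s0, s1, s3]; ring
    · apply Continuous.integrable_of_hasCompactSupport
      · have := H.sf.cont; have := H.sg.cont; have := H.sv.cont
        have := H.sf.dX.cont; have := H.sg.dX.cont; have := H.sv.dX.cont
        have := H.sf.dX.dX.cont; have := H.sg.dX.dX.cont; have := H.sv.dX.dX.cont
        have := H.sf.dX.dX.dX.cont; have := H.sg.dX.dX.dX.cont; have := H.sv.dX.dX.dX.cont
        clear c1 c2 c3 c4 c5 c6 c7 c8 c9 c10 c11 c12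
        revert cw0' cw1' cw2' cw3' cwt'
        generalize w0 P a b h t₀ = q0
        generalize w1 P P1 a b h t₀ = q1
        generalize w2 P P1 P2 a b h t₀ = q2
        generalize w3 P P1 P2 P3 a b h t₀ = q3
        generalize wt P P1 a b h da db dh t₀ = q4
        intros
        fun_prop
      · apply cs_of R
        intro x hx
        obtain ⟨s0, s1, s2, s3, s4⟩ := supp t₀ hmem x hx
        rw [s0, s1, s2]; ring
  · intro t ht x
    have := hsub ht
    exact (dens_t H K t x).mul (w0_t hP t x (ha t this) (hb t this) (hh t this))
  · exact ((ddens_c H K).continuousOn.mul (w0_con cP (ca.mono hsub) (cb.mono hsub) (ch.mono hsub))).add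
      ((dens_c H K).continuousOn.mul (wt_con cP cP1 (ca.mono hsub) (cb.mono hsub) (ch.mono hsub)
        (hda.mono hsub) (hdb.mono hsub) (hdh.mono hsub)))
  · intro t ht
    exact ((dens_c H K).comp (by fun_prop : Continuous fun x : ℝ => (t, x))).mul (cw0 t)
  · intro t ht x hx
    obtain ⟨s0, s1, s2, s3, s4⟩ := supp t ht x hx
    constructor
    · simp only [s0, mul_zero]
    · simp only [s0, s4, mul_zero, add_zero]

/-- 1D Sobolev -/
lemma sobolev (F F' : ℝ → ℝ) (hF : ∀ x, HasDerivAt F (F' x) x) (h1 : Integrable (fun x => F x ^ 2))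
    (h2 : Integrable (fun x => F' x ^ 2)) (hF'm : AEStronglyMeasurable F')
    (h0 : Tendsto F atBot (nhds 0)) (x : ℝ) :
    F x ^ 2 ≤ (∫ y, F y ^ 2) + ∫ y, F' y ^ 2 := by
  have hd : ∀ y, HasDerivAt (fun y => F y ^ 2) (2 * F y * F' y) y := fun y => by
    refine ((hF y).pow 2).congr_deriv ?_
    push_cast; ring
  have hFm : AEStronglyMeasurable F :=
    (continuous_iff_continuousAt.2 fun z => (hF z).continuousAt).aestronglyMeasurable
  have hi : Integrable (fun y => 2 * F y * F' y) := by
    refine (h1.add h2).mono' ((hFm.const_mul 2).mul hF'm) (Eventually.of_forall fun y => ?_)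
    rw [Real.norm_eq_abs, abs_le, Pi.add_apply]
    constructor <;> nlinarith [sq_nonneg (F y + F' y), sq_nonneg (F y - F' y)]
  have e := integral_Iic_of_hasDerivAt_of_tendsto (a := x) (hd x).continuousAt.continuousWithinAt
    (fun y _ => hd y) hi.integrableOn (m := 0) (by simpa using h0.pow 2)
  rw [sub_zero] at e
  rw [← integral_add h1 h2, ← e]
  have h3 : ∫ y in Set.Iic x, 2 * F y * F' y ≤ ∫ y in Set.Iic x, (F y ^ 2 + F' y ^ 2) := by
    apply integral_mono hi.integrableOn (h1.add h2).integrableOn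
    intro y
    change 2 * F y * F' y ≤ F y ^ 2 + F' y ^ 2
    nlinarith [sq_nonneg (F y - F' y)]
  refine h3.trans (setIntegral_le_integral (h1.add h2) (Eventually.of_forall fun y => ?_))
  simp only [Pi.zero_apply]; positivity

lemma exists_RS {α β γ : ℝ} {u : ℝ → ℝ → ℂ} {v : ℝ → ℝ → ℝ} (hsol : IsSKdVSolution α β γ u v) :
    ∃ C0 M : ℝ, ∃ f g w : ℝ × ℝ → ℝ, RS α β γ C0 M f g w ∧
      (∀ t x, ‖deriv (u t) x‖ ^ 2 + (deriv (v t) x) ^ 2 = dX f (t, x) ^ 2 + dX g (t, x) ^ 2 + dX w (t, x) ^ 2) := by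
  obtain ⟨su, sv, schu, schv, equ, eqv, C, hC⟩ := hsol
  set f : ℝ × ℝ → ℝ := fun p => (u p.1 p.2).re with hf
  set g : ℝ × ℝ → ℝ := fun p => (u p.1 p.2).im with hg
  set w : ℝ × ℝ → ℝ := fun p => v p.1 p.2 with hw
  have sf : Smo f := Complex.reCLM.contDiff.comp su
  have sg : Smo g := Complex.imCLM.contDiff.comp su
  have sw : Smo w := sv
  have ufg : ∀ t x, u t x = (f (t, x) : ℂ) + (g (t, x) : ℂ) * Complex.I := fun t x => (Complex.re_add_im _).symm
  have nrm : ∀ a b : ℝ, ‖(a : ℂ) + (b : ℂ) * Complex.I‖ ^ 2 = a ^ 2 + b ^ 2 := fun a b => by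
    rw [Complex.sq_norm, Complex.normSq_add_mul_I]
  have cd : ∀ {F G : ℝ → ℝ} {F' G' x : ℝ}, HasDerivAt F F' x → HasDerivAt G G' x →
      HasDerivAt (fun y => (F y : ℂ) + (G y : ℂ) * Complex.I) ((F' : ℂ) + (G' : ℂ) * Complex.I) x :=
    fun hF hG => hF.ofReal_comp.add (hG.ofReal_comp.mul_const _)
  have dut : ∀ t x, deriv (fun s => u s x) t = (dT f (t, x) : ℂ) + (dT g (t, x) : ℂ) * Complex.I := fun t x => by
    simp_rw [ufg]
    exact (cd (sf.ht t x) (sg.ht t x)).deriv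
  have dux : ∀ t, deriv (u t) = fun x => (dX f (t, x) : ℂ) + (dX g (t, x) : ℂ) * Complex.I := fun t => by
    ext x
    rw [show u t = fun y => (f (t, y) : ℂ) + (g (t, y) : ℂ) * Complex.I from funext (ufg t)]
    exact (cd (sf.hx t x) (sg.hx t x)).deriv
  have duxx : ∀ t x, iteratedDeriv 2 (u t) x = (dX (dX f) (t, x) : ℂ) + (dX (dX g) (t, x) : ℂ) * Complex.I := by
    intro t x
    rw [iteratedDeriv_succ, iteratedDeriv_one, dux]
    exact (cd (sf.dX.hx t x) (sg.dX.hx t x)).deriv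
  have dvx : ∀ t, deriv (v t) = fun x => dX w (t, x) := fun t => by
    ext x; exact (sw.hx t x).deriv
  have dvxx : ∀ t, deriv (deriv (v t)) = fun x => dX (dX w) (t, x) := fun t => by
    rw [dvx]; ext x; exact (sw.dX.hx t x).deriv
  have dvxxx : ∀ t x, iteratedDeriv 3 (v t) x = dX (dX (dX w)) (t, x) := fun t x => by
    rw [iteratedDeriv_succ, iteratedDeriv_succ, iteratedDeriv_one, dvxx]
    exact (sw.dX.dX.hx t x).deriv
  have nu : ∀ t x, ‖u t x‖ ^ 2 = f (t, x) ^ 2 + g (t, x) ^ 2 := fun t x => by rw [ufg, nrm]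
  have nux : ∀ t x, ‖deriv (u t) x‖ ^ 2 = dX f (t, x) ^ 2 + dX g (t, x) ^ 2 := fun t x => by rw [dux, nrm]
  have E : ∀ t x, dT f (t, x) = (α * w (t, x) + β * (f (t, x) ^ 2 + g (t, x) ^ 2)) * g (t, x) - dX (dX g) (t, x) ∧
      dT g (t, x) = dX (dX f) (t, x) - (α * w (t, x) + β * (f (t, x) ^ 2 + g (t, x) ^ 2)) * f (t, x) := by
    intro t x
    have e := equ t x
    have n2 : (‖u t x‖ : ℂ) ^ 2 = ((f (t, x) ^ 2 + g (t, x) ^ 2 : ℝ) : ℂ) := by rw [← nu]; push_cast; rfl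
    rw [n2, dut, duxx, ufg] at e
    have er := congrArg Complex.re e
    have ei := congrArg Complex.im e
    have hvw : v t x = w (t, x) := rfl
    rw [hvw] at er ei
    generalize f (t, x) ^ 2 + g (t, x) ^ 2 = ρ at *
    simp only [Complex.add_re, Complex.add_im, Complex.mul_re, Complex.mul_im, Complex.ofReal_re, Complex.ofReal_im,
      Complex.I_re, Complex.I_im] at er ei
    constructor <;> linarith
  -- Schwartz facts
  have iw : ∀ t, Integrable (fun x => w (t, x) ^ 2) := fun t => by
    obtain ⟨φ, hφ⟩ := schv t
    have := (φ.memLp 2).integrable_sq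
    simpa only [hφ] using this
  have iwx : ∀ t, Integrable (fun x => dX w (t, x) ^ 2) := fun t => by
    obtain ⟨φ, hφ⟩ := schv t
    have := ((SchwartzMap.derivCLM ℝ ℝ φ).memLp 2).integrable_sq
    have e : (⇑φ) = v t := funext hφ
    simpa only [SchwartzMap.derivCLM_apply, e, dvx] using this
  have iu : ∀ t, Integrable (fun x => f (t, x) ^ 2 + g (t, x) ^ 2) := fun t => by
    obtain ⟨φ, hφ⟩ := schu t
    have := ((φ.memLp 2).norm).integrable_sq
    simpa only [hφ, nu] using this
  have iux : ∀ t, Integrable (fun x => dX f (t, x) ^ 2 + dX g (t, x) ^ 2) := fun t => by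
    obtain ⟨φ, hφ⟩ := schu t
    have := ((SchwartzMap.derivCLM ℝ ℂ φ).memLp 2).norm.integrable_sq
    have e : (⇑φ) = u t := funext hφ
    simpa only [SchwartzMap.derivCLM_apply, e, nux] using this
  have sub1 : ∀ {F G : ℝ → ℝ}, Continuous F → Integrable (fun x => F x ^ 2 + G x ^ 2) → Integrable (fun x => F x ^ 2) :=
    fun hF hFG => hFG.mono' (hF.pow 2).aestronglyMeasurable (Eventually.of_forall fun x => by
      rw [Real.norm_eq_abs, abs_of_nonneg (sq_nonneg _)]; nlinarith [sq_nonneg (‹ℝ → ℝ› x)])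
  have sub2 : ∀ {F G : ℝ → ℝ}, Continuous G → Integrable (fun x => F x ^ 2 + G x ^ 2) → Integrable (fun x => G x ^ 2) :=
    fun {F G} hF hFG => sub1 (F := G) (G := F) hF (by simpa only [add_comm] using hFG)
  have cc : ∀ {F : ℝ × ℝ → ℝ}, Smo F → ∀ t, Continuous (fun x => F (t, x)) := fun hF t =>
    hF.cont.comp (by fun_prop)
  have tw : ∀ t, Tendsto (fun x => w (t, x)) atBot (nhds 0) := fun t => by
    obtain ⟨φ, hφ⟩ := schv t
    have := φ.tendsto_cocompact.mono_left atBot_le_cocompact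
    rwa [show (⇑φ) = v t from funext hφ] at this
  have tu : ∀ t, Tendsto (u t) atBot (nhds 0) := fun t => by
    obtain ⟨φ, hφ⟩ := schu t
    have := φ.tendsto_cocompact.mono_left atBot_le_cocompact
    rwa [show (⇑φ) = u t from funext hφ] at this
  have tf : ∀ t, Tendsto (fun x => f (t, x)) atBot (nhds 0) := fun t => by
    have := (Complex.continuous_re.tendsto 0).comp (tu t)
    rw [Complex.zero_re] at this
    exact this
  have tg : ∀ t, Tendsto (fun x => g (t, x)) atBot (nhds 0) := fun t => by
    have := (Complex.continuous_im.tendsto 0).comp (tu t)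
    rw [Complex.zero_im] at this
    exact this
  have hC' : ∀ t, (∫ x, (f (t, x) ^ 2 + g (t, x) ^ 2)) + (∫ x, (dX f (t, x) ^ 2 + dX g (t, x) ^ 2))
      + (∫ x, w (t, x) ^ 2) + (∫ x, dX w (t, x) ^ 2) ≤ C := fun t => by
    have := hC t
    simp_rw [nu, nux, dvx] at this
    exact this
  have n1 : ∀ t, 0 ≤ ∫ x, (f (t, x) ^ 2 + g (t, x) ^ 2) := fun t => integral_nonneg fun x => by positivity
  have n2 : ∀ t, 0 ≤ ∫ x, (dX f (t, x) ^ 2 + dX g (t, x) ^ 2) := fun t => integral_nonneg fun x => by positivity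
  have n3 : ∀ t, 0 ≤ ∫ x, w (t, x) ^ 2 := fun t => integral_nonneg fun x => by positivity
  have n4 : ∀ t, 0 ≤ ∫ x, dX w (t, x) ^ 2 := fun t => integral_nonneg fun x => by positivity
  have hC0 : 0 ≤ C := by linarith [hC' 0, n1 0, n2 0, n3 0, n4 0]
  have bw : ∀ p, w p ^ 2 ≤ C := fun ⟨t, x⟩ => by
    have := sobolev (fun y => w (t, y)) (fun y => dX w (t, y)) (sw.hx t) (iw t) (iwx t)
      (cc sw.dX t).aestronglyMeasurable (tw t) x
    linarith [hC' t, n1 t, n2 t]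
  have bu : ∀ p, f p ^ 2 + g p ^ 2 ≤ C := fun ⟨t, x⟩ => by
    have h1 := sobolev (fun y => f (t, y)) (fun y => dX f (t, y)) (sf.hx t) (sub1 (cc sf t) (iu t)) (sub1 (cc sf.dX t) (iux t))
      (cc sf.dX t).aestronglyMeasurable (tf t) x
    have h2 := sobolev (fun y => g (t, y)) (fun y => dX g (t, y)) (sg.hx t) (sub2 (cc sg t) (iu t)) (sub2 (cc sg.dX t) (iux t))
      (cc sg.dX t).aestronglyMeasurable (tg t) x
    have e1 := integral_add (sub1 (cc sf t) (iu t)) (sub2 (cc sg t) (iu t))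
    have e2 := integral_add (sub1 (cc sf.dX t) (iux t)) (sub2 (cc sg.dX t) (iux t))
    linarith [hC' t, n3 t, n4 t]
  refine ⟨C, Real.sqrt C, f, g, w, ⟨sf, sg, sw, fun p => (E p.1 p.2).1, fun p => (E p.1 p.2).2, ?_, Real.sqrt_nonneg _, ?_, ?_, ?_, ?_⟩, ?_⟩
  · rintro ⟨t, x⟩
    have e := eqv t x
    have e1 : deriv (fun s => v s x) t = dT w (t, x) := (sw.ht t x).deriv
    have e2 : deriv (fun y => ‖u t y‖ ^ 2) x = 2 * f (t, x) * dX f (t, x) + 2 * g (t, x) * dX g (t, x) := by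
      simp_rw [nu]
      have e3 := (((sf.hx t x).pow 2).add ((sg.hx t x).pow 2)).deriv
      refine Eq.trans e3 ?_
      push_cast; ring
    rw [e1, e2, dvxxx, dvx] at e
    have hvw : v t x = w (t, x) := rfl
    rw [hvw] at e
    linarith
  · intro p
    exact Real.abs_le_sqrt (bw p)
  · intro p
    rw [Real.sq_sqrt hC0]; exact bu p
  · exact fun t => (((iw t).add (iu t)).add (iux t)).add (iwx t)
  · intro t
    have e1 := integral_add (((iw t).add (iu t)).add (iux t)) (iwx t)
    have e2 := integral_add ((iw t).add (iu t)) (iux t)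
    have e3 := integral_add (iw t) (iu t)
    simp only [Pi.add_apply] at e1 e2
    linarith [hC' t]
  · intro t x
    rw [nux, dvx]

structure Bump (P P1 P2 P3 : ℝ → ℝ) (c : ℝ) : Prop where
  c0 : 0 < c
  d0 : ∀ z, HasDerivAt P (P1 z) z
  d1 : ∀ z, HasDerivAt P1 (P2 z) z
  d2 : ∀ z, HasDerivAt P2 (P3 z) z
  c3 : Continuous P3
  nn : ∀ z, 0 ≤ P z
  le1 : ∀ z, P z ≤ 1
  eq1 : ∀ z, |z| ≤ 1 → P z = 1
  vz : ∀ z, 2 ≤ |z| → P z = 0 ∧ P1 z = 0 ∧ P2 z = 0 ∧ P3 z = 0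
  b0 : ∀ z, |P z| ≤ c * JJ z
  b1 : ∀ z, |P1 z| ≤ c * JJ z
  b2 : ∀ z, |P2 z| ≤ c * JJ z
  b3 : ∀ z, |P3 z| ≤ c * JJ z
  bz : ∀ z, |z * P1 z| ≤ c * JJ z

lemma exists_bump : ∃ P P1 P2 P3 : ℝ → ℝ, ∃ c : ℝ, Bump P P1 P2 P3 c := by
  obtain ⟨P, P1, P2, P3, c, h0, h1, h2, h3, -, -, -, h4, h5, h6, h7, h8, h9, h10, h11, h12, h13⟩ := exists_psi
  exact ⟨P, P1, P2, P3, c, h0, h1, h2, h3, h4, h5, h6, h7, h8, h9, h10, h11, h12, h13⟩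

lemma int_JJ (a : ℝ) (ha : 0 < a) : Integrable (fun x => JJ (x * a)) ∧ ∫ x, JJ (x * a) = Real.pi / a := by
  have h1 : Integrable JJ := integrable_inv_one_add_sq
  refine ⟨h1.comp_mul_right' ha.ne', ?_⟩
  rw [Measure.integral_comp_mul_right JJ a]
  have : ∫ x, JJ x = Real.pi := integral_univ_inv_one_add_sq
  rw [this, smul_eq_mul, abs_of_pos (by positivity)]
  field_simp

lemma mul_bd {x y X Y : ℝ} (hx : |x| ≤ X) (hy : |y| ≤ Y) : |x * y| ≤ X * Y := by
  rw [abs_mul]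
  exact mul_le_mul hx hy (abs_nonneg _) ((abs_nonneg _).trans hx)

section
variable {P P1 P2 P3 : ℝ → ℝ} {c : ℝ}

lemma bd_cut (B : Bump P P1 P2 P3 c) (a b x : ℝ) (ha : 0 < a) (hb : 0 < b) :
    a * Phi1 (x * a) * (1 - P (x * b)) ≤ b := by
  rcases le_or_gt (|x * b|) 1 with h | h
  · rw [B.eq1 _ h]; simpa using hb.le
  · have h1 := zPhi1 (x * a)
    have h2 := Phi1_pos (x * a)
    have h3 := B.nn (x * b)
    have h4 := B.le1 (x * b)
    rw [abs_mul, abs_of_pos ha] at h1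
    rw [abs_mul, abs_of_pos hb] at h
    have hx : 0 < |x| := by
      by_contra hh
      have : |x| = 0 := le_antisymm (not_lt.mp hh) (abs_nonneg x)
      rw [this] at h; linarith
    have h5 : a * Phi1 (x * a) ≤ b := by
      have : |x| * (a * Phi1 (x * a)) ≤ |x| * b := by nlinarith
      exact le_of_mul_le_mul_left this hx
    have h6 : 0 ≤ a * Phi1 (x * a) := by positivity
    nlinarith

lemma bd_r3 (B : Bump P P1 P2 P3 c) (a b x ca : ℝ) (ha : 0 < a) (haca : a ≤ ca) (hb : 0 < b) (hb1 : b ≤ 1) :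
    |3 * a ^ 2 * b * Phi2 (x * a) * P1 (x * b) + 3 * a * b ^ 2 * Phi1 (x * a) * P2 (x * b)
      + b ^ 3 * Phi (x * a) * P3 (x * b)| ≤
    (6 * c * (ca + 1) + 2 * c) * b * (a * JJ (x * a) + b * JJ (x * b)) := by
  have hc := B.c0
  have hJa := JJ_pos (x * a)
  have hJb := JJ_pos (x * b)
  have hJb1 := JJ_le (x * b)
  have hP1 := Phi1_pos (x * a)
  have hPJ := Phi1_J (x * a)
  have k1 : |P1 (x * b)| ≤ c := (B.b1 _).trans (by nlinarith)
  have k2 : |P2 (x * b)| ≤ c := (B.b2 _).trans (by nlinarith)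
  have e1 : |Phi2 (x * a) * P1 (x * b)| ≤ (2 * JJ (x * a)) * c := mul_bd ((Phi2_b _).trans hPJ) k1
  have e2 : |Phi1 (x * a) * P2 (x * b)| ≤ (2 * JJ (x * a)) * c := mul_bd (by rw [abs_of_pos hP1]; exact hPJ) k2
  have e3 : |Phi (x * a) * P3 (x * b)| ≤ 2 * (c * JJ (x * b)) := mul_bd (Phi_b _) (B.b3 _)
  have t1 : |3 * a ^ 2 * b * (Phi2 (x * a) * P1 (x * b))| ≤ 3 * a ^ 2 * b * ((2 * JJ (x * a)) * c) := by
    rw [abs_mul, abs_of_pos (by positivity : 0 < 3 * a ^ 2 * b)]; gcongr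
  have t2 : |3 * a * b ^ 2 * (Phi1 (x * a) * P2 (x * b))| ≤ 3 * a * b ^ 2 * ((2 * JJ (x * a)) * c) := by
    rw [abs_mul, abs_of_pos (by positivity : 0 < 3 * a * b ^ 2)]; gcongr
  have t3 : |b ^ 3 * (Phi (x * a) * P3 (x * b))| ≤ b ^ 3 * (2 * (c * JJ (x * b))) := by
    rw [abs_mul, abs_of_pos (by positivity : 0 < b ^ 3)]; gcongr
  have u1 : 3 * a ^ 2 * b * ((2 * JJ (x * a)) * c) ≤ 6 * c * ca * b * (a * JJ (x * a)) := by
    have : 0 ≤ (6 * c * b * (a * JJ (x * a))) * (ca - a) := mul_nonneg (by positivity) (by linarith)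
    nlinarith
  have u2 : 3 * a * b ^ 2 * ((2 * JJ (x * a)) * c) ≤ 6 * c * b * (a * JJ (x * a)) := by
    have : 0 ≤ (6 * c * b * (a * JJ (x * a))) * (1 - b) := mul_nonneg (by positivity) (by linarith)
    nlinarith
  have u3 : b ^ 3 * (2 * (c * JJ (x * b))) ≤ 2 * c * b * (b * JJ (x * b)) := by
    have : 0 ≤ (2 * c * b * (b * JJ (x * b))) * (1 - b) := mul_nonneg (by positivity) (by linarith)
    nlinarith
  have n1 : 0 ≤ 2 * c * b * (a * JJ (x * a)) := by positivity
  have n2 : 0 ≤ 6 * c * (ca + 1) * b * (b * JJ (x * b)) := by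
    have : 0 < ca := by linarith
    positivity
  have tri := (abs_add_le (3 * a ^ 2 * b * (Phi2 (x * a) * P1 (x * b)) + 3 * a * b ^ 2 * (Phi1 (x * a) * P2 (x * b)))
    (b ^ 3 * (Phi (x * a) * P3 (x * b)))).trans (add_le_add (abs_add_le _ _) le_rfl)
  rw [show 3 * a ^ 2 * b * Phi2 (x * a) * P1 (x * b) + 3 * a * b ^ 2 * Phi1 (x * a) * P2 (x * b)
      + b ^ 3 * Phi (x * a) * P3 (x * b) = 3 * a ^ 2 * b * (Phi2 (x * a) * P1 (x * b)) + 3 * a * b ^ 2 * (Phi1 (x * a) * P2 (x * b))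
      + b ^ 3 * (Phi (x * a) * P3 (x * b)) by ring]
  refine tri.trans ?_
  linarith

lemma bd_wt (B : Bump P P1 P2 P3 c) (a b h da db dh t x k : ℝ) (ha : 0 < a) (hb : 0 < b) (hh : 0 < h) (ht : 0 < t)
    (hk : 0 ≤ k) (hda : |da| ≤ k * a / t) (hdb : |db| ≤ k * b / t) (hdh : |dh| ≤ k * h / t) :
    |dh * (Phi (x * a) * P (x * b)) + h * (x * da * Phi1 (x * a) * P (x * b)
      + x * db * Phi (x * a) * P1 (x * b))| ≤ (5 * k * c) * (h / t) * JJ (x * b) := by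
  have hc := B.c0
  have hJb := JJ_pos (x * b)
  have hP1 := Phi1_pos (x * a)
  have e1 : |dh * (Phi (x * a) * P (x * b))| ≤ k * h / t * (2 * (c * JJ (x * b))) :=
    mul_bd hdh (mul_bd (Phi_b _) (B.b0 _))
  have e2 : |x * da * Phi1 (x * a)| ≤ k / t := by
    rw [abs_mul, abs_mul, abs_of_pos hP1]
    calc |x| * |da| * Phi1 (x * a) ≤ |x| * (k * a / t) * Phi1 (x * a) := by gcongr
      _ = k / t * (|x * a| * Phi1 (x * a)) := by rw [abs_mul, abs_of_pos ha]; ring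
      _ ≤ k / t * 1 := by gcongr; exact zPhi1 _
      _ = _ := mul_one _
  have e3 : |x * db * P1 (x * b)| ≤ k / t * (c * JJ (x * b)) := by
    rw [abs_mul, abs_mul]
    calc |x| * |db| * |P1 (x * b)| ≤ |x| * (k * b / t) * |P1 (x * b)| := by gcongr
      _ = k / t * (|x * b * P1 (x * b)|) := by rw [abs_mul, abs_mul, abs_of_pos hb]; ring
      _ ≤ _ := by gcongr; exact B.bz _
  have e4 := mul_bd e2 (B.b0 (x * b))
  have e5 := mul_bd e3 (Phi_b (x * a))
  have tri := abs_add_le (x * da * Phi1 (x * a) * P (x * b)) (x * db * P1 (x * b) * Phi (x * a))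
  have tri2 := abs_add_le (dh * (Phi (x * a) * P (x * b))) (h * (x * da * Phi1 (x * a) * P (x * b)
      + x * db * Phi (x * a) * P1 (x * b)))
  rw [abs_mul h, abs_of_pos hh] at tri2
  rw [show x * db * P1 (x * b) * Phi (x * a) = x * db * Phi (x * a) * P1 (x * b) by ring] at tri e5
  refine tri2.trans ?_
  have e6 : h * |x * da * Phi1 (x * a) * P (x * b) + x * db * Phi (x * a) * P1 (x * b)| ≤
      h * (k / t * (c * JJ (x * b)) + k / t * (c * JJ (x * b)) * 2) := by gcongr; linarith
  refine (add_le_add e1 e6).trans (le_of_eq ?_)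
  ring

lemma j_bd (f g fx gx : ℝ) : |2 * (f * gx - g * fx)| ≤ f ^ 2 + g ^ 2 + (fx ^ 2 + gx ^ 2) := by
  rw [abs_le]
  constructor <;> nlinarith [sq_nonneg (f + gx), sq_nonneg (f - gx), sq_nonneg (g + fx), sq_nonneg (g - fx)]

lemma lower (B : Bump P P1 P2 P3 c) {α β γ C0 M : ℝ} {f g v : ℝ × ℝ → ℝ} (H : RS α β γ C0 M f g v)
    (hα : α < 0) (hγ : γ < 0) (m ca k : ℝ)
    (hm0 : 0 ≤ m) (hm1 : m ≤ -3 * α) (hm2 : m ≤ -4 * γ) (hca : 0 ≤ ca) (hk : 0 ≤ k) :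
    ∃ C, 0 ≤ C ∧ ∀ (a b h da db dh : ℝ → ℝ) (t e : ℝ),
      0 < h t → 0 < a t → a t ≤ ca → 0 < b t → b t ≤ 1 → 0 < t → 1 ≤ e →
      |da t| ≤ k * a t / t → |db t| ≤ k * b t / t → |dh t| ≤ k * h t / t →
      Integrable (QQ α β γ (2 + 4 * |α| * M + |β| * M ^ 2) f g v (wt P P1 a b h da db dh) (w1 P P1 a b h) (w3 P P1 P2 P3 a b h) t) →
      m * (h t * a t * ∫ x, Phi1 (x * a t) * (dX f (t, x) ^ 2 + dX g (t, x) ^ 2 + dX v (t, x) ^ 2))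
        - C * h t * ((1 / t) * (e * C0 + e⁻¹ * (Real.pi / b t)) + (b t + a t ^ 3) * C0
          + (a t ^ 5 + b t * a t) * (Real.pi / a t) + b t ^ 2 * (Real.pi / b t)) ≤
      ∫ x, QQ α β γ (2 + 4 * |α| * M + |β| * M ^ 2) f g v (wt P P1 a b h da db dh) (w1 P P1 a b h) (w3 P P1 P2 P3 a b h) t x := by
  have hc := B.c0
  obtain ⟨C, hC, hQ⟩ := Q_lower α β γ M m (5 * k * c + 2 * c) (6 * c * (ca + 1) + 2 * c) ca hα hγ H.hM0 hm0 hm1 hm2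
    (by positivity) (by positivity) hca
  refine ⟨C, hC, ?_⟩
  intro a b h da db dh t e hh ha haca hb hb1 ht he hda hdb hdh iQ
  set S : ℝ → ℝ := fun x => v (t, x) ^ 2 + (f (t, x) ^ 2 + g (t, x) ^ 2)
    + (dX f (t, x) ^ 2 + dX g (t, x) ^ 2) + dX v (t, x) ^ 2 with hS
  set G : ℝ → ℝ := fun x => Phi1 (x * a t) * (dX f (t, x) ^ 2 + dX g (t, x) ^ 2 + dX v (t, x) ^ 2) with hG
  have iS : Integrable S := H.hint t
  obtain ⟨iJa, eJa⟩ := int_JJ (a t) ha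
  obtain ⟨iJb, eJb⟩ := int_JJ (b t) hb
  have iG : Integrable G := by
    refine iS.mono' ?_ (Eventually.of_forall fun x => ?_)
    · have := H.sf.dX.cont; have := H.sg.dX.cont; have := H.sv.dX.cont; have := Phi1_c
      apply Continuous.aestronglyMeasurable
      fun_prop
    · have p1 := Phi1_pos (x * a t)
      have p2 := Phi1_le (x * a t)
      rw [Real.norm_eq_abs, abs_of_nonneg (by positivity)]
      simp only [hS, hG]
      have : Phi1 (x * a t) * (dX f (t, x) ^ 2 + dX g (t, x) ^ 2 + dX v (t, x) ^ 2) ≤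
        1 * (dX f (t, x) ^ 2 + dX g (t, x) ^ 2 + dX v (t, x) ^ 2) := by gcongr
      nlinarith [sq_nonneg (v (t, x)), sq_nonneg (f (t, x)), sq_nonneg (g (t, x))]
  set k1 := m * (h t * a t) with hk1
  set k2 := C * h t * ((1 / t) * e + (b t + a t ^ 3)) with hk2
  set k3 := C * h t * (a t ^ 5 + b t * a t) with hk3
  set k4 := C * h t * ((1 / t) * e⁻¹ + b t ^ 2) with hk4
  have ptw : ∀ x, k1 * G x - k2 * S x - k3 * JJ (x * a t) - k4 * JJ (x * b t) ≤
      QQ α β γ (2 + 4 * |α| * M + |β| * M ^ 2) f g v (wt P P1 a b h da db dh) (w1 P P1 a b h) (w3 P P1 P2 P3 a b h) t x := by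
    intro x
    have q := hQ (v (t, x)) (f (t, x) ^ 2 + g (t, x) ^ 2) (dX f (t, x) ^ 2 + dX g (t, x) ^ 2) (dX v (t, x) ^ 2)
      (f (t, x) * dX g (t, x) - g (t, x) * dX f (t, x)) (h t) (a t) (b t) t e (JJ (x * a t)) (JJ (x * b t))
      (Phi1 (x * a t)) (Phi3 (x * a t)) (P (x * b t)) (b t * Phi (x * a t) * P1 (x * b t))
      (3 * a t ^ 2 * b t * Phi2 (x * a t) * P1 (x * b t)
        + 3 * a t * b t ^ 2 * Phi1 (x * a t) * P2 (x * b t) + b t ^ 3 * Phi (x * a t) * P3 (x * b t))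
      (wt P P1 a b h da db dh t x) (w1 P P1 a b h t x) (w3 P P1 P2 P3 a b h t x)
      (H.hv _) (by positivity) (H.hρ _) (by positivity) (by positivity) (j_bd _ _ _ _) hh ha haca hb hb1 ht he
      (JJ_pos _).le (JJ_le _) (JJ_pos _).le (JJ_le _) (Phi1_pos _).le (Phi1_le _) (Phi1_J _) (Phi3_b _)
      (B.nn _) (B.le1 _) ?_ rfl ?_ rfl (bd_r3 B _ _ _ _ ha haca hb hb1) (bd_cut B _ _ _ ha hb)
    · unfold QQ
      refine le_trans (le_of_eq ?_) q
      simp only [hk1, hk2, hk3, hk4, hS, hG]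
      ring
    · have w := bd_wt B (a t) (b t) (h t) (da t) (db t) (dh t) t x k ha hb hh ht hk hda hdb hdh
      have hJ := JJ_pos (x * b t)
      refine w.trans ?_
      have : 0 ≤ 2 * c * (h t / t) * JJ (x * b t) := by positivity
      nlinarith
    · have hJ := JJ_pos (x * b t)
      have hJ1 := JJ_le (x * b t)
      have h1 : |P1 (x * b t)| ≤ c := (B.b1 _).trans (by nlinarith)
      have h2 := mul_bd (Phi_b (x * a t)) h1
      rw [mul_assoc, abs_mul, abs_of_pos hb]
      have : b t * |Phi (x * a t) * P1 (x * b t)| ≤ b t * (2 * c) := by gcongr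
      have : 0 ≤ 5 * k * c * b t := by positivity
      nlinarith
  have i1 := iG.const_mul k1
  have i2 := iS.const_mul k2
  have i3 := iJa.const_mul k3
  have i4 := iJb.const_mul k4
  have mono := integral_mono (((i1.sub i2).sub i3).sub i4) iQ ptw
  refine le_trans ?_ mono
  have E1 := integral_sub ((i1.sub i2).sub i3) i4
  have E2 := integral_sub (i1.sub i2) i3
  have E3 := integral_sub i1 i2
  simp only [Pi.sub_apply] at E1 E2 E3 ⊢
  rw [E1, E2, E3, integral_const_mul, integral_const_mul, integral_const_mul, integral_const_mul, eJa, eJb]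
  have hk2' : 0 ≤ k2 := by positivity
  have : k2 * ∫ x, S x ≤ k2 * C0 := mul_le_mul_of_nonneg_left (H.hC0 t) hk2'
  simp only [hk1, hk2, hk3, hk4] at this ⊢
  linarith

lemma E_bd (B : Bump P P1 P2 P3 c) {α β γ C0 M : ℝ} {f g v : ℝ × ℝ → ℝ} (H : RS α β γ C0 M f g v)
    (K : ℝ) (hK : 0 ≤ K) (a b h : ℝ → ℝ) (t e : ℝ) (hh : 0 < h t) (hb : 0 < b t) (he : 1 ≤ e) :
    |∫ x, dens α γ K f g v (t, x) * w0 P a b h t x| ≤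
      2 * c * h t * ((K + |α| + |γ|) * (e * C0 + e⁻¹ * (Real.pi / b t))) := by
  have hc := B.c0
  obtain ⟨iJb, eJb⟩ := int_JJ (b t) hb
  have iS := H.hint t
  have i := ((iS.const_mul e).add (iJb.const_mul e⁻¹)).const_mul (2 * c * h t * (K + |α| + |γ|))
  have n := norm_integral_le_of_norm_le (f := fun x => dens α γ K f g v (t, x) * w0 P a b h t x) i
    (Eventually.of_forall fun x => ?_)
  · rw [Real.norm_eq_abs] at n
    refine n.trans ?_
    have E1 := integral_add (iS.const_mul e) (iJb.const_mul e⁻¹)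
    rw [integral_const_mul]
    simp only [Pi.add_apply]
    rw [E1, integral_const_mul, integral_const_mul, eJb, mul_assoc (2 * c * h t)]
    have := H.hC0 t
    have : 0 < e := by linarith
    gcongr
  · rw [Real.norm_eq_abs, abs_mul]
    have q := absD_bound K α γ (v (t, x)) (f (t, x) ^ 2 + g (t, x) ^ 2) (dX f (t, x) ^ 2 + dX g (t, x) ^ 2) (dX v (t, x) ^ 2)
      (f (t, x) * dX g (t, x) - g (t, x) * dX f (t, x)) e (JJ (x * b t)) hK (by positivity) (by positivity) (by positivity)
      (j_bd _ _ _ _) he (JJ_pos _).le (JJ_le _)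
    have w : |w0 P a b h t x| ≤ 2 * c * h t * JJ (x * b t) := by
      have := mul_bd (Phi_b (x * a t)) (B.b0 (x * b t))
      unfold w0
      rw [abs_mul, abs_of_pos hh]
      calc h t * |Phi (x * a t) * P (x * b t)| ≤ h t * (2 * (c * JJ (x * b t))) := by gcongr
        _ = _ := by ring
    calc |dens α γ K f g v (t, x)| * |w0 P a b h t x| ≤ |dens α γ K f g v (t, x)| * (2 * c * h t * JJ (x * b t)) := by gcongr
      _ = 2 * c * h t * (|dens α γ K f g v (t, x)| * JJ (x * b t)) := by ring
      _ ≤ 2 * c * h t * _ := mul_le_mul_of_nonneg_left q (by positivity)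
      _ = _ := by simp only [Pi.add_apply]; ring

end

lemma fin_lemma (A A' F : ℝ → ℝ) (Bd k : ℝ) (hd : ∀ t, 10 ≤ t → HasDerivAt A (A' t) t)
    (hpos : ∀ t, 10 ≤ t → 0 ≤ A' t) (hb : ∀ t, 10 ≤ t → A t ≤ Bd)
    (hF : ∀ t, 10 ≤ t → F t ≤ k * A' t) :
    ∫⁻ t in Set.Ici (10 : ℝ), ENNReal.ofReal (F t) < ⊤ := by
  have hmono : MonotoneOn A (Set.Ici 10) := by
    apply monotoneOn_of_deriv_nonneg (convex_Ici 10)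
    · exact fun t ht => (hd t ht).continuousAt.continuousWithinAt
    · intro t ht
      rw [interior_Ici] at ht
      exact (hd t (le_of_lt ht)).differentiableAt.differentiableWithinAt
    · intro t ht
      rw [interior_Ici] at ht
      rw [(hd t (le_of_lt ht)).deriv]
      exact hpos t (le_of_lt ht)
  have hm2 : Monotone (fun t => A (max t 10)) := fun s t hst =>
    hmono (Set.mem_Ici.2 (le_max_right _ _)) (Set.mem_Ici.2 (le_max_right _ _)) (max_le_max hst le_rfl)
  have hlim := tendsto_atTop_ciSup hm2 ⟨Bd, by rintro _ ⟨t, rfl⟩; exact hb _ (le_max_right _ _)⟩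
  have hlim2 : Tendsto A atTop (nhds (⨆ t, A (max t 10))) := by
    refine hlim.congr' ?_
    filter_upwards [eventually_ge_atTop 10] with t ht
    rw [max_eq_left ht]
  have hint := integrableOn_Ioi_deriv_of_nonneg (g := A) (g' := A') (a := 10)
    (hd 10 le_rfl).continuousAt.continuousWithinAt (fun t ht => hd t (le_of_lt ht))
    (fun t ht => hpos t (le_of_lt ht)) hlim2
  have hint2 : IntegrableOn (fun t => k * A' t) (Set.Ici 10) := by
    rw [integrableOn_Ici_iff_integrableOn_Ioi]
    exact hint.const_mul k
  refine lt_of_le_of_lt ?_ hint2.lintegral_lt_top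
  exact setLIntegral_mono' measurableSet_Ici fun t ht => ENNReal.ofReal_le_ofReal (hF t ht)

lemma pw_rate_c (r s : ℝ) : ContinuousOn (fun t => pw r s t * ((r + s / Real.log t) / t)) (Set.Ioi 1) := by
  have h1 : ContinuousOn (pw r s) (Set.Ioi 1) := fun t ht => (pw_d r s t ht).continuousAt.continuousWithinAt
  have h2 : ContinuousOn Real.log (Set.Ioi 1) := Real.continuousOn_log.mono fun t ht => by
    rw [Set.mem_Ioi] at ht
    simp only [Set.mem_compl_iff, Set.mem_singleton_iff]; linarith
  refine h1.mul ((continuousOn_const.add (continuousOn_const.div h2 ?_)).div continuousOn_id ?_)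
  · intro t ht; exact (Real.log_pos ht).ne'
  · intro t ht; rw [Set.mem_Ioi] at ht; linarith

lemma pw_rate_b (r s t : ℝ) (ht : 10 ≤ t) (k : ℝ) (hk : |r| + |s| ≤ k) :
    |pw r s t * ((r + s / Real.log t) / t)| ≤ k * pw r s t / t := by
  have h0 := pw_pos r s t (by linarith)
  have h1 := pw_rate r s t ht
  have h2 : 0 < t := by linarith
  rw [abs_mul, abs_div, abs_of_pos h0, abs_of_pos h2]
  calc pw r s t * (|r + s / Real.log t| / t) ≤ pw r s t * (k / t) := by gcongr; linarith
    _ = _ := by ring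

lemma skdv_main (α β γ C0 M : ℝ) (hα : α < 0) (hγ : γ < 0) (f g v : ℝ × ℝ → ℝ) (H : RS α β γ C0 M f g v)
    (p q l : ℝ) (hp : 0 < p) (hp2 : p < 2 / 3) (hl : 0 < l) :
    ∫⁻ t in Set.Ici (10 : ℝ), ENNReal.ofReal (l * (pw (p - 1) (-(1 + q)) t * (l⁻¹ * pw (-p) q t) *
      ∫ x, Phi1 (x * (l⁻¹ * pw (-p) q t)) * (dX f (t, x) ^ 2 + dX g (t, x) ^ 2 + dX v (t, x) ^ 2))) < ⊤ := by
  obtain ⟨P, P1, P2, P3, c, B⟩ := exists_bump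
  obtain ⟨K, hKdef⟩ : ∃ K, K = 2 + 4 * |α| * M + |β| * M ^ 2 := ⟨_, rfl⟩
  have hM0 := H.hM0
  have hK : 0 ≤ K := by rw [hKdef]; positivity
  have hC0 : 0 ≤ C0 := le_trans (integral_nonneg fun x => by positivity) (H.hC0 0)
  have hc := B.c0
  set m := min (-3 * α) (-4 * γ) with hm
  have hm0 : 0 < m := lt_min (by linarith) (by linarith)
  -- the scales
  obtain ⟨h, hh⟩ : ∃ h, h = pw (p - 1) (-(1 + q)) := ⟨_, rfl⟩
  obtain ⟨a, ha⟩ : ∃ a, a = fun t => l⁻¹ * pw (-p) q t := ⟨_, rfl⟩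
  obtain ⟨b, hb⟩ : ∃ b, b = pw (-(1 - p / 2)) 0 := ⟨_, rfl⟩
  obtain ⟨dh, hdh⟩ : ∃ dh : ℝ → ℝ, dh = fun t => pw (p - 1) (-(1 + q)) t * (((p - 1) + (-(1 + q)) / Real.log t) / t) := ⟨_, rfl⟩
  obtain ⟨da, hda⟩ : ∃ da : ℝ → ℝ, da = fun t => l⁻¹ * (pw (-p) q t * (((-p) + q / Real.log t) / t)) := ⟨_, rfl⟩
  obtain ⟨db, hdb⟩ : ∃ db : ℝ → ℝ, db = fun t => pw (-(1 - p / 2)) 0 t * (((-(1 - p / 2)) + 0 / Real.log t) / t) := ⟨_, rfl⟩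
  obtain ⟨e, he⟩ : ∃ e, e = pw ((1 - p / 2) / 2) 0 := ⟨_, rfl⟩
  have dh1 : ∀ t, 1 < t → HasDerivAt h (dh t) t := fun t ht => by rw [hh, hdh]; exact pw_d _ _ t ht
  have da1 : ∀ t, 1 < t → HasDerivAt a (da t) t := fun t ht => by
    rw [ha, hda]; exact (pw_d _ _ t ht).const_mul _
  have db1 : ∀ t, 1 < t → HasDerivAt b (db t) t := fun t ht => by rw [hb, hdb]; exact pw_d _ _ t ht
  have hpos : ∀ t, 1 < t → 0 < h t := fun t ht => by rw [hh]; exact pw_pos _ _ t ht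
  have apos : ∀ t, 1 < t → 0 < a t := fun t ht => by
    rw [ha]; exact mul_pos (inv_pos.2 hl) (pw_pos _ _ t ht)
  have bpos : ∀ t, 1 < t → 0 < b t := fun t ht => by rw [hb]; exact pw_pos _ _ t ht
  have epos : ∀ t, 1 < t → 0 < e t := fun t ht => by rw [he]; exact pw_pos _ _ t ht
  have cdh : ContinuousOn dh (Set.Ioi 1) := by rw [hdh]; exact pw_rate_c _ _
  have cda : ContinuousOn da (Set.Ioi 1) := by rw [hda]; exact continuousOn_const.mul (pw_rate_c _ _)
  have cdb : ContinuousOn db (Set.Ioi 1) := by rw [hdb]; exact pw_rate_c _ _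
  set k := |p - 1| + |-(1 + q)| + (|-p| + |q|) + (|-(1 - p / 2)| + |(0:ℝ)|) with hk
  have hk0 : 0 ≤ k := by positivity
  have nh : ∀ t, 10 ≤ t → |dh t| ≤ k * h t / t := fun t ht => by
    rw [hdh, hh]
    apply pw_rate_b _ _ t ht
    rw [hk]; linarith [abs_nonneg (-p), abs_nonneg q, abs_nonneg (-(1 - p / 2)), abs_nonneg (0:ℝ)]
  have nb : ∀ t, 10 ≤ t → |db t| ≤ k * b t / t := fun t ht => by
    rw [hdb, hb]
    apply pw_rate_b _ _ t ht
    rw [hk]; linarith [abs_nonneg (-p), abs_nonneg q, abs_nonneg (p - 1), abs_nonneg (-(1 + q))]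
  have na : ∀ t, 10 ≤ t → |da t| ≤ k * a t / t := fun t ht => by
    rw [hda, ha]
    have := pw_rate_b (-p) q t ht k (by
      rw [hk]; linarith [abs_nonneg (-(1 - p / 2)), abs_nonneg (0:ℝ), abs_nonneg (p - 1), abs_nonneg (-(1 + q))])
    simp only
    rw [abs_mul, abs_of_pos (inv_pos.2 hl)]
    calc l⁻¹ * _ ≤ l⁻¹ * (k * pw (-p) q t / t) := by gcongr
      _ = _ := by ring
  obtain ⟨Ca, hCa, hCa2⟩ := pw_le (-p) q 0 (by linarith)
  have hca : ∀ t, 10 ≤ t → a t ≤ l⁻¹ * Ca := fun t ht => by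
    have := hCa2 t ht
    rw [Real.rpow_zero, mul_one] at this
    rw [ha]; simp only; gcongr
  obtain ⟨ca, hcadef⟩ : ∃ ca, ca = l⁻¹ * Ca := ⟨_, rfl⟩
  rw [← hcadef] at hca
  have hca0 : 0 ≤ ca := by rw [hcadef]; positivity
  have hb1 : ∀ t, 10 ≤ t → b t ≤ 1 := fun t ht => by
    rw [hb]; unfold pw
    rw [Real.rpow_zero, mul_one]
    exact Real.rpow_le_one_of_one_le_of_nonpos (by linarith) (by linarith)
  have he1 : ∀ t, 10 ≤ t → 1 ≤ e t := fun t ht => by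
    rw [he]; unfold pw
    rw [Real.rpow_zero, mul_one]
    exact Real.one_le_rpow (by linarith) (by linarith)
  have heb : ∀ t, 10 ≤ t → (e t)⁻¹ * (Real.pi / b t) = Real.pi * e t := fun t ht => by
    have h1 := epos t (by linarith)
    have h2 := bpos t (by linarith)
    have h3 : e t * e t * b t = 1 := by
      rw [he, hb, pw_mul _ _ _ _ t (by linarith), pw_mul _ _ _ _ t (by linarith)]
      rw [show (1 - p / 2) / 2 + (1 - p / 2) / 2 + -(1 - p / 2) = 0 by ring]
      unfold pw; simp
    field_simp
    nlinarith
  -- rates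
  obtain ⟨κ, hκ0, hκ1, hκ2⟩ : ∃ κ : ℝ, 0 < κ ∧ κ < 1 / 2 - 3 * p / 4 ∧ κ < 2 * p := by
    refine ⟨min (1 / 2 - 3 * p / 4) p / 2, ?_, ?_, ?_⟩
    · have : 0 < min (1 / 2 - 3 * p / 4) p := lt_min (by linarith) hp
      linarith
    · have := min_le_left (1 / 2 - 3 * p / 4) p
      linarith
    · have := min_le_right (1 / 2 - 3 * p / 4) p
      linarith
  obtain ⟨R1, hR1, hR1'⟩ := pw_le (p - 1 + (1 - p / 2) / 2 + (-1)) (-(1 + q) + 0 + 0) (-1 - κ) (by linarith)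
  obtain ⟨R2, hR2, hR2'⟩ := pw_le (p - 1 + (-(1 - p / 2))) (-(1 + q) + 0) (-1 - κ) (by linarith)
  obtain ⟨R3, hR3, hR3'⟩ := pw_le (p - 1 + -p + -p + -p) (-(1 + q) + q + q + q) (-1 - κ) (by linarith)
  obtain ⟨R4, hR4, hR4'⟩ := pw_le (p - 1 + (1 - p / 2) / 2) (-(1 + q) + 0) 0 (by linarith)
  have r1 : ∀ t, 10 ≤ t → h t * e t * (1 / t) ≤ R1 * t ^ (-1 - κ) := fun t ht => by
    have := hR1' t ht
    rw [← pw_mul _ _ _ _ t (by linarith), ← pw_mul _ _ _ _ t (by linarith)] at this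
    rw [hh, he]
    refine le_trans (le_of_eq ?_) this
    congr 1
    unfold pw
    rw [Real.rpow_zero, Real.rpow_neg_one]; ring
  have r2 : ∀ t, 10 ≤ t → h t * b t ≤ R2 * t ^ (-1 - κ) := fun t ht => by
    have := hR2' t ht
    rw [← pw_mul _ _ _ _ t (by linarith)] at this
    rw [hh, hb]; exact this
  have r3 : ∀ t, 10 ≤ t → h t * a t ^ 3 ≤ l⁻¹ ^ 3 * R3 * t ^ (-1 - κ) := fun t ht => by
    have := hR3' t ht
    rw [← pw_mul _ _ _ _ t (by linarith), ← pw_mul _ _ _ _ t (by linarith), ← pw_mul _ _ _ _ t (by linarith)] at this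
    rw [hh, ha]
    calc _ = l⁻¹ ^ 3 * (pw (p - 1) (-(1 + q)) t * pw (-p) q t * pw (-p) q t * pw (-p) q t) := by ring
      _ ≤ l⁻¹ ^ 3 * (R3 * t ^ (-1 - κ)) := by gcongr
      _ = _ := by ring
  have r4 : ∀ t, 10 ≤ t → h t * e t ≤ R4 := fun t ht => by
    have := hR4' t ht
    rw [← pw_mul _ _ _ _ t (by linarith), Real.rpow_zero, mul_one] at this
    rw [hh, he]; exact this
  obtain ⟨C, hC, hlow⟩ := lower B H hα hγ m ca k hm0.le (min_le_left _ _) (min_le_right _ _) hca0 hk0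
  rw [← hKdef] at hlow
  have hen := fun t (ht : 1 < t) => energy H K B.d0 B.d1 B.d2 B.c3 B.vz da1 db1 dh1 cda cdb cdh bpos t ht
  set Q : ℝ → ℝ := fun t => ∫ x, QQ α β γ K f g v (wt P P1 a b h da db dh) (w1 P P1 a b h) (w3 P P1 P2 P3 a b h) t x with hQ
  set En : ℝ → ℝ := fun t => ∫ x, dens α γ K f g v (t, x) * w0 P a b h t x with hEn
  set I : ℝ → ℝ := fun t => ∫ x, Phi1 (x * a t) * (dX f (t, x) ^ 2 + dX g (t, x) ^ 2 + dX v (t, x) ^ 2) with hI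
  obtain ⟨D, hD⟩ : ∃ D, D = C * (R1 * (C0 + Real.pi) + R2 * (C0 + 2 * Real.pi) + l⁻¹ ^ 3 * R3 * (C0 + ca * Real.pi)) := ⟨_, rfl⟩
  have hpi := Real.pi_pos
  have hD0 : 0 ≤ D := by rw [hD]; positivity
  have main : ∀ t, 10 ≤ t → m * (h t * a t * I t) ≤ Q t + D * t ^ (-1 - κ) := by
    intro t ht
    have t1 : 1 < t := by linarith
    have L := hlow a b h da db dh t (e t) (hpos t t1) (apos t t1) (hca t ht) (bpos t t1) (hb1 t ht) (by linarith)
      (he1 t ht) (na t ht) (nb t ht) (nh t ht) (hen t t1).1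
    have h1 := hpos t t1
    have h2 := apos t t1
    have h3 := bpos t t1
    have h4 := hca t ht
    have s1 := r1 t ht
    have s2 := r2 t ht
    have s3 := r3 t ht
    rw [heb t ht] at L
    have e1 : (a t ^ 5 + b t * a t) * (Real.pi / a t) = (a t ^ 3 * a t + b t) * Real.pi := by field_simp
    have e2 : b t ^ 2 * (Real.pi / b t) = b t * Real.pi := by field_simp
    rw [e1, e2] at L
    have bound : h t * ((1 / t) * (e t * C0 + Real.pi * e t) + (b t + a t ^ 3) * C0
          + (a t ^ 3 * a t + b t) * Real.pi + b t * Real.pi) ≤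
        (R1 * t ^ (-1 - κ)) * (C0 + Real.pi) + (R2 * t ^ (-1 - κ)) * (C0 + 2 * Real.pi)
          + (l⁻¹ ^ 3 * R3 * t ^ (-1 - κ)) * (C0 + ca * Real.pi) := by
      calc _ = (h t * e t * (1 / t)) * (C0 + Real.pi) + (h t * b t) * (C0 + 2 * Real.pi)
          + (h t * a t ^ 3) * (C0 + a t * Real.pi) := by ring
        _ ≤ _ := by gcongr
    have b2 := mul_le_mul_of_nonneg_left bound hC
    rw [hD]
    linarith
  have dpow : ∀ t, 10 ≤ t → HasDerivAt (fun s : ℝ => s ^ (-κ)) (-κ * t ^ (-κ - 1)) t := fun t ht =>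
    Real.hasDerivAt_rpow_const (Or.inl (by linarith))
  have Ipos : ∀ t, 0 ≤ I t := fun t => integral_nonneg fun x => by
    have := Phi1_pos (x * a t)
    positivity
  have goal := fin_lemma (fun t => En t - D / κ * t ^ (-κ)) (fun t => Q t + D * t ^ (-1 - κ))
    (fun t => l * (h t * a t * I t)) (2 * c * ((K + |α| + |γ|) * (R4 * (C0 + Real.pi)))) (l / m) ?_ ?_ ?_ ?_
  · simpa only [hh, ha, hI] using goal
  · intro t ht
    refine ((hen t (by linarith)).2.sub ((dpow t ht).const_mul (D / κ))).congr_deriv ?_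
    rw [show -κ - 1 = -1 - κ by ring]
    simp only [hQ]
    field_simp
    ring
  · intro t ht
    refine le_trans ?_ (main t ht)
    have := hpos t (by linarith)
    have := apos t (by linarith)
    have := Ipos t
    positivity
  · intro t ht
    have t1 : 1 < t := by linarith
    have hE := E_bd B H K hK a b h t (e t) (hpos t t1) (bpos t t1) (he1 t ht)
    rw [heb t ht] at hE
    have s4 := r4 t ht
    have h5 : 0 ≤ D / κ * t ^ (-κ) := by
      have : 0 < t := by linarith
      positivity
    have h6 := le_abs_self (En t)
    have h7 : 2 * c * h t * ((K + |α| + |γ|) * (e t * C0 + Real.pi * e t)) ≤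
        2 * c * ((K + |α| + |γ|) * (R4 * (C0 + Real.pi))) := by
      calc _ = 2 * c * ((K + |α| + |γ|) * ((h t * e t) * (C0 + Real.pi))) := by ring
        _ ≤ _ := by gcongr
    simp only [hEn] at h6 ⊢
    linarith
  · intro t ht
    have := mul_le_mul_of_nonneg_left (main t ht) (by positivity : 0 ≤ l / m)
    refine le_trans (le_of_eq ?_) this
    field_simp

/-- The key space-time weighted estimate for the `L²` masses of `∂ₓu` and `∂ₓv`:
    with `λ₁(t) = t^{p₁}/(log t)^{q₁}` and `η(t) = t^{1-p₁} (log t)^{1+q₁}`, the double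
    integral of `(|∂ₓu|² + (∂ₓv)²) sech(x/(l λ₁)) / (η λ₁)` is finite. -/
theorem skdv_weighted_derivative_estimate (α β γ : ℝ) (hα : α < 0) (hγ : γ < 0)
    (u : ℝ → ℝ → ℂ) (v : ℝ → ℝ → ℝ) (hsol : IsSKdVSolution α β γ u v)
    (p₁ q₁ p₂ : ℝ) (hq₁ : 0 < q₁) (hp₂ : 1 < p₂)
    (hp₁ : 0 < p₁) (hp₁' : p₁ ≤ 2 / (p₂ + 2))
    (lam₁ η : ℝ → ℝ)
    (hlam₁ : ∀ t, lam₁ t = t ^ p₁ / Real.log t ^ q₁)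
    (hη : ∀ t, η t = t ^ (1 - p₁) * Real.log t ^ (1 + q₁))
    (l : ℝ) (hl : 0 < l) :
    ∫⁻ t in Set.Ici (10 : ℝ),
        ENNReal.ofReal ((1 / (η t * lam₁ t)) *
          ∫ x : ℝ, (‖deriv (u t) x‖ ^ 2 + (deriv (v t) x) ^ 2) *
            (1 / Real.cosh (x / (l * lam₁ t)))) < ⊤ := by
  obtain ⟨C0, M, f, g, w, H, hfg⟩ := exists_RS hsol
  have hp2 : p₁ < 2 / 3 := by
    refine lt_of_le_of_lt hp₁' ?_
    rw [div_lt_div_iff₀ (by linarith) (by norm_num)]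
    linarith
  refine lt_of_le_of_lt (le_of_eq ?_) (skdv_main α β γ C0 M hα hγ f g w H p₁ q₁ l hp₁ hp2 hl)
  refine setLIntegral_congr_fun measurableSet_Ici fun t ht => ?_
  have ht : 10 ≤ t := ht
  have t0 : 0 < t := by linarith
  have hlog := one_le_log t ht
  have hlog0 : 0 < Real.log t := by linarith
  have el : (lam₁ t)⁻¹ = pw (-p₁) q₁ t := by
    rw [hlam₁]; unfold pw
    rw [Real.rpow_neg t0.le, inv_div]; field_simp
  have eη : (η t)⁻¹ = pw (p₁ - 1) (-(1 + q₁)) t := by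
    rw [hη]; unfold pw
    rw [Real.rpow_neg hlog0.le, show p₁ - 1 = -(1 - p₁) by ring, Real.rpow_neg t0.le, mul_inv]
  congr 1
  rw [← el, ← eη]
  have e1 : ∀ x, (‖deriv (u t) x‖ ^ 2 + (deriv (v t) x) ^ 2) * (1 / Real.cosh (x / (l * lam₁ t))) =
      Phi1 (x * (l⁻¹ * (lam₁ t)⁻¹)) * (dX f (t, x) ^ 2 + dX g (t, x) ^ 2 + dX w (t, x) ^ 2) := fun x => by
    rw [hfg, mul_comm]
    unfold Phi1
    rw [div_eq_mul_inv x, mul_inv]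
  simp_rw [e1]
  rw [one_div, mul_inv]
  field_simp
end

section
/- Let φ(x) = (2/π)·arctan(eˣ). Then φ is three times differentiable on ℝ and its third derivative satisfies |φ'''(x)| ≤ φ'(x) for every x ∈ ℝ, where φ'(x) = 1/(π·cosh x). -/
/-- `φ(x) = (2/π) arctan(eˣ)` is three times differentiable and its third derivative
    satisfies `|φ'''(x)| ≤ φ'(x) = 1/(π cosh x)` for every `x`. -/
theorem phi_third_deriv_bound :
    ContDiff ℝ 3 (fun y : ℝ => (2 / Real.pi) * Real.arctan (Real.exp y)) ∧
    (∀ x : ℝ,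
      |iteratedDeriv 3 (fun y : ℝ => (2 / Real.pi) * Real.arctan (Real.exp y)) x|
        ≤ 1 / (Real.pi * Real.cosh x)) := by
  have hpi := Real.pi_pos
  refine ⟨contDiff_const.mul Real.contDiff_exp.arctan, fun x => ?_⟩
  have h1 : deriv (fun y : ℝ => (2 / Real.pi) * Real.arctan (Real.exp y))
      = fun y => 1 / (Real.pi * Real.cosh y) := by
    funext y
    rw [(((Real.hasDerivAt_exp y).arctan).const_mul (2 / Real.pi)).deriv,
      Real.cosh_eq, Real.exp_neg]
    have := Real.exp_pos y
    field_simp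
    ring
  have h2 : deriv (fun y => 1 / (Real.pi * Real.cosh y))
      = fun y => - Real.sinh y / (Real.pi * Real.cosh y ^ 2) := by
    funext y
    have hc := Real.cosh_pos y
    rw [((hasDerivAt_const y (1 : ℝ)).fun_div ((Real.hasDerivAt_cosh y).const_mul Real.pi)
      (by positivity)).deriv]
    field_simp
    ring
  have h3 : deriv (fun y => - Real.sinh y / (Real.pi * Real.cosh y ^ 2)) x
      = (Real.cosh x ^ 2 - 2) / (Real.pi * Real.cosh x ^ 3) := by
    have hc := Real.cosh_pos x
    rw [((Real.hasDerivAt_sinh x).fun_neg.fun_div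
      (((Real.hasDerivAt_cosh x).fun_pow 2).const_mul Real.pi) (by positivity)).deriv]
    have := Real.sinh_sq x
    field_simp
    push_cast
    ring_nf
    rw [this]
    ring
  rw [iteratedDeriv_succ', iteratedDeriv_succ', iteratedDeriv_one, h1, h2, h3]
  have hc := Real.one_le_cosh x
  have hc0 := Real.cosh_pos x
  rw [abs_div, abs_of_pos (show 0 < Real.pi * Real.cosh x ^ 3 by positivity),
    div_le_div_iff₀ (by positivity) (by positivity)]
  have h : |Real.cosh x ^ 2 - 2| ≤ Real.cosh x ^ 2 := by
    rw [abs_le]; constructor <;> nlinarith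
  calc _ ≤ Real.cosh x ^ 2 * (Real.pi * Real.cosh x) := by gcongr
    _ = _ := by ring
end

section
/- Let q₁ > 0, p₂ > 1 and 0 < p₁ ≤ 2/(p₂+2), and define λ₁(t) = t^{p₁}/(log t)^{q₁}, λ₂(t) = λ₁(t)^{p₂} and η(t) = t^{1−p₁}·(log t)^{1+q₁} for t > 1. Then the function t ↦ |η'(t)|·λ₂(t)^{1/2}/η(t)² is integrable on [e², ∞), where η' denotes the derivative of η. -/
open MeasureTheory

/-- For `q₁ > 0`, `p₂ > 1`, `0 < p₁ ≤ 2/(p₂+2)`, with `λ₁(t) = t^{p₁}/(log t)^{q₁}`,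
    `λ₂ = λ₁^{p₂}` and `η(t) = t^{1-p₁} (log t)^{1+q₁}`, the function
    `|η'| λ₂^{1/2} / η²` is integrable on `[e², ∞)`. -/
theorem eta_deriv_lam2_sqrt_integrable (p₁ q₁ p₂ : ℝ)
    (hq₁ : 0 < q₁) (hp₂ : 1 < p₂) (hp₁ : 0 < p₁) (hp₁' : p₁ ≤ 2 / (p₂ + 2))
    (lam₁ lam₂ η : ℝ → ℝ)
    (hlam₁ : ∀ t, lam₁ t = t ^ p₁ / Real.log t ^ q₁)
    (hlam₂ : ∀ t, lam₂ t = lam₁ t ^ p₂)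
    (hη : ∀ t, η t = t ^ (1 - p₁) * Real.log t ^ (1 + q₁)) :
    IntegrableOn (fun t => |deriv η t| * lam₂ t ^ ((1 : ℝ) / 2) / (η t) ^ 2)
      (Set.Ici (Real.exp 2)) := by
  have hp₁1 : p₁ * p₂ / 2 ≤ 1 - p₁ := by
    rw [le_div_iff₀ (by linarith)] at hp₁'
    linarith
  have hp1 : 0 < 1 - p₁ := lt_of_lt_of_le (by positivity) hp₁1
  have hηf : η = fun t => t ^ (1 - p₁) * Real.log t ^ (1 + q₁) := funext hη
  have hl1 : lam₁ = fun t => t ^ p₁ / Real.log t ^ q₁ := funext hlam₁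
  have hl2 : lam₂ = fun t => lam₁ t ^ p₂ := funext hlam₂
  have mη : Measurable η := by rw [hηf]; fun_prop
  have ml1 : Measurable lam₁ := by rw [hl1]; fun_prop
  have ml2 : Measurable lam₂ := by rw [hl2]; fun_prop
  have md : Measurable (deriv η) := measurable_deriv η
  have key : ∀ t, Real.exp 2 ≤ t → 0 < t ∧ 2 ≤ Real.log t := by
    intro t ht
    have h0 : 0 < t := (Real.exp_pos 2).trans_le ht
    exact ⟨h0, (Real.le_log_iff_exp_le h0).2 ht⟩
  have base : IntegrableOn (fun t : ℝ => Real.log t ^ (-q₁ - 1) * t⁻¹)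
      (Set.Ioi (Real.exp 2)) := by
    refine integrableOn_Ioi_deriv_of_nonneg' (g := fun t => -(Real.log t ^ (-q₁) / q₁)) (l := -(0 / q₁)) ?_ ?_ ?_
    · intro t ht
      obtain ⟨h0, h2⟩ := key t ht
      have h := (((Real.hasDerivAt_log h0.ne').rpow_const (p := -q₁) (Or.inl (by linarith))).div_const q₁).neg
      refine h.congr_deriv ?_
      field_simp
    · intro t ht
      obtain ⟨h0, h2⟩ := key t (le_of_lt ht)
      have : 0 < Real.log t := by linarith
      positivity
    · exact (((tendsto_rpow_neg_atTop hq₁).comp Real.tendsto_log_atTop).div_const q₁).neg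
  rw [integrableOn_Ici_iff_integrableOn_Ioi]
  refine Integrable.mono' (base.const_mul ((1 - p₁) + (1 + q₁))) ?_ ?_
  · exact Measurable.aestronglyMeasurable (by fun_prop)
  refine (ae_restrict_iff' measurableSet_Ioi).2 (Filter.Eventually.of_forall fun t ht => ?_)
  obtain ⟨h0, h2⟩ := key t (le_of_lt ht)
  have hL : 0 < Real.log t := by linarith
  have ht1 : 1 ≤ t := le_trans (Real.one_le_exp (by norm_num)) (le_of_lt ht)
  have hd : deriv η t = (1 - p₁) * t ^ (-p₁) * Real.log t ^ (1 + q₁)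
      + (1 + q₁) * t ^ (-p₁) * Real.log t ^ q₁ := by
    rw [hηf]
    have h := (Real.hasDerivAt_rpow_const (x := t) (p := 1 - p₁) (Or.inl h0.ne')).mul
      ((Real.hasDerivAt_log h0.ne').rpow_const (p := 1 + q₁) (Or.inl hL.ne'))
    refine HasDerivAt.deriv (h.congr_deriv ?_)
    have e1 : t ^ (1 - p₁) = t * t ^ (-p₁) := by
      rw [sub_eq_add_neg, Real.rpow_add h0, Real.rpow_one]
    have e2 : 1 - p₁ - 1 = -p₁ := by ring
    have e3 : 1 + q₁ - 1 = q₁ := by ring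
    rw [e2, e3, e1]
    field_simp
  have hd' : |deriv η t| ≤ ((1 - p₁) + (1 + q₁)) * (t ^ (-p₁) * Real.log t ^ (1 + q₁)) := by
    have hle : Real.log t ^ q₁ ≤ Real.log t ^ (1 + q₁) :=
      Real.rpow_le_rpow_of_exponent_le (by linarith) (by linarith)
    rw [hd, abs_of_nonneg (by positivity)]
    have := mul_le_mul_of_nonneg_left hle (show 0 ≤ (1 + q₁) * t ^ (-p₁) by positivity)
    nlinarith
  have hlam : lam₂ t ^ ((1 : ℝ) / 2) ≤ t ^ (1 - p₁) := by
    have a1 : lam₁ t ≤ t ^ p₁ := by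
      rw [hlam₁]
      exact div_le_self (by positivity) (Real.one_le_rpow (by linarith) hq₁.le)
    have a0 : 0 ≤ lam₁ t := by rw [hlam₁]; positivity
    rw [hlam₂, ← Real.rpow_mul a0]
    calc lam₁ t ^ (p₂ * (1 / 2)) ≤ (t ^ p₁) ^ (p₂ * (1 / 2)) :=
          Real.rpow_le_rpow a0 a1 (by positivity)
      _ = t ^ (p₁ * p₂ / 2) := by rw [← Real.rpow_mul h0.le]; congr 1; ring
      _ ≤ _ := Real.rpow_le_rpow_of_exponent_le ht1 hp₁1
  have hlam0 : 0 ≤ lam₂ t ^ ((1 : ℝ) / 2) := by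
    have a0 : 0 ≤ lam₁ t := by rw [hlam₁]; positivity
    rw [hlam₂]; positivity
  rw [Real.norm_of_nonneg (by positivity)]
  have e1 : t ^ (1 - p₁) = t * t ^ (-p₁) := by
    rw [sub_eq_add_neg, Real.rpow_add h0, Real.rpow_one]
  have e4 : Real.log t ^ (-q₁ - 1) = (Real.log t ^ (1 + q₁))⁻¹ := by
    rw [← Real.rpow_neg hL.le]; congr 1; ring
  calc |deriv η t| * lam₂ t ^ ((1 : ℝ) / 2) / (η t) ^ 2
      ≤ (((1 - p₁) + (1 + q₁)) * (t ^ (-p₁) * Real.log t ^ (1 + q₁))) * t ^ (1 - p₁) / (η t) ^ 2 := by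
        gcongr
    _ = _ := by
        rw [hη, e4, e1]
        have : 0 < t ^ (-p₁) := by positivity
        have : 0 < Real.log t ^ (1 + q₁) := by positivity
        generalize t ^ (-p₁) = A at *
        generalize Real.log t ^ (1 + q₁) = B at *
        field_simp
end

section
/- For every l > 0 there exists a constant C > 0 such that for every λ ≥ 1 and every continuously differentiable function f: ℝ → ℂ with f and f' both in L²(ℝ), one has ∫_ℝ |f(x)|⁶ · sech(x/(l·λ)) dx ≤ C · (∫_ℝ |f(x)|² dx)² · ∫_ℝ ( |f'(x)|² + |f(x)|² ) · sech(x/(l·λ)) dx. -/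
open MeasureTheory

/-- Derivative of the half weight. -/
lemma half_weight_deriv (a x : ℝ) :
    HasDerivAt (fun x : ℝ => 1 / Real.sqrt (Real.cosh (x / a)))
      (-(Real.sinh (x / a) / Real.cosh (x / a) / (2 * a)) * (1 / Real.sqrt (Real.cosh (x / a)))) x := by
  have hc : 0 < Real.cosh (x / a) := Real.cosh_pos _
  have hs : 0 < Real.sqrt (Real.cosh (x / a)) := Real.sqrt_pos.2 hc
  have h1 : HasDerivAt (fun x : ℝ => x / a) (1 / a) x := (hasDerivAt_id x).div_const a
  have h2 := (h1.cosh.sqrt hc.ne').inv hs.ne'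
  have e : (fun x : ℝ => 1 / Real.sqrt (Real.cosh (x / a)))
      = (fun y : ℝ => Real.sqrt (Real.cosh (y / a)))⁻¹ := by
    funext y; simp
  rw [e]
  refine h2.congr_deriv ?_
  rw [Real.sq_sqrt hc.le]
  by_cases ha : a = 0
  · simp [ha]
  · field_simp

lemma key_alg (p q s t l m : ℝ) (hp : 0 ≤ p) (hq : 0 ≤ q) (hs : 0 ≤ s) (ht : 0 ≤ t) (hl : 0 < l)
    (hm : m ≤ 1 / (2 * l)) :
    t * (2 * (p * q) * s + p ^ 2 * (m * s))
      ≤ (1 + 1 / (4 * l)) * (t ^ 2 * p ^ 2 + (q ^ 2 + p ^ 2) * s ^ 2) := by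
  have hk : 0 < 1 / (4 * l) := by positivity
  have e : 1 / (2 * l) = 2 * (1 / (4 * l)) := by field_simp; norm_num
  rw [e] at hm
  generalize 1 / (4 * l) = k at *
  have h1 : t * (p ^ 2 * (m * s)) ≤ t * (p ^ 2 * (2 * k * s)) := by gcongr
  have h2 : 0 ≤ k * (t * p - p * s) ^ 2 := by positivity
  have h3 : 0 ≤ (t * p - q * s) ^ 2 := by positivity
  have h4 : 0 ≤ p ^ 2 * s ^ 2 := by positivity
  have h5 : 0 ≤ k * (q ^ 2 * s ^ 2) := by positivity
  nlinarith

theorem weighted_sixth_power_estimate (l : ℝ) (hl : 0 < l) :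
    ∃ C : ℝ, 0 < C ∧ ∀ lam : ℝ, 1 ≤ lam → ∀ f : ℝ → ℂ, ContDiff ℝ 1 f →
      Integrable (fun x : ℝ => ‖f x‖ ^ 2) →
      Integrable (fun x : ℝ => ‖deriv f x‖ ^ 2) →
      (∫ x : ℝ, ‖f x‖ ^ 6 * (1 / Real.cosh (x / (l * lam))))
        ≤ C * (∫ x : ℝ, ‖f x‖ ^ 2) ^ 2 *
          ∫ x : ℝ, (‖deriv f x‖ ^ 2 + ‖f x‖ ^ 2) * (1 / Real.cosh (x / (l * lam))) := by
  set K : ℝ := 1 + 1 / (4 * l) with hK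
  have hKpos : 0 < K := by positivity
  refine ⟨4 * K ^ 2, by positivity, ?_⟩
  intro lam hlam f hf hf2 hd2
  set a := l * lam with ha
  have hla : l ≤ a := by nlinarith
  have hapos : 0 < a := by linarith
  set s : ℝ → ℝ := fun x => 1 / Real.sqrt (Real.cosh (x / a)) with hs
  have hcp : ∀ x : ℝ, 0 < Real.cosh (x / a) := fun x => Real.cosh_pos _
  have hspos : ∀ x, 0 < s x := fun x => by
    have := Real.sqrt_pos.2 (hcp x)
    simp only [hs]; positivity
  have hs1 : ∀ x, s x ≤ 1 := fun x => by
    simp only [hs]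
    rw [div_le_one (Real.sqrt_pos.2 (hcp x))]
    exact Real.one_le_sqrt.2 (Real.one_le_cosh _)
  have hs2 : ∀ x, s x ^ 2 = 1 / Real.cosh (x / a) := fun x => by
    simp only [hs]
    rw [div_pow, Real.sq_sqrt (hcp x).le, one_pow]
  simp only [← hs2]
  have hcs : Continuous s := by
    refine continuous_iff_continuousAt.2 fun x => (half_weight_deriv a x).continuousAt
  have hcf : Continuous f := hf.continuous
  have hcd : Continuous (deriv f) := hf.continuous_deriv le_rfl
  set A := ∫ x : ℝ, ‖f x‖ ^ 2 with hA
  set W := ∫ x : ℝ, (‖deriv f x‖ ^ 2 + ‖f x‖ ^ 2) * s x ^ 2 with hW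
  have hWint : Integrable (fun x => (‖deriv f x‖ ^ 2 + ‖f x‖ ^ 2) * s x ^ 2) := by
    refine (hd2.add hf2).mono' (by fun_prop) (ae_of_all _ fun x => ?_)
    have h0 : 0 ≤ ‖deriv f x‖ ^ 2 + ‖f x‖ ^ 2 := by positivity
    rw [Real.norm_of_nonneg (by positivity)]
    exact mul_le_of_le_one_right h0 (pow_le_one₀ (hspos x).le (hs1 x))
  set u : ℝ → ℝ := fun x => ‖f x‖ ^ 2 * s x with hu
  set th : ℝ → ℝ := fun x => Real.sinh (x / a) / Real.cosh (x / a) / (2 * a) with hth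
  set u' : ℝ → ℝ := fun x => 2 * inner ℝ (f x) (deriv f x) * s x
    + ‖f x‖ ^ 2 * (-(th x) * s x) with hu'
  have hder : ∀ x, HasDerivAt u (u' x) x := fun x => by
    have h1 : HasDerivAt f (deriv f x) x := (hf.differentiable one_ne_zero x).hasDerivAt
    exact h1.norm_sq.mul (half_weight_deriv a x)
  have hthb : ∀ x, |th x| ≤ 1 / (2 * l) := fun x => by
    simp only [hth]
    rw [abs_div, abs_div, abs_of_pos (hcp x), abs_of_pos (by positivity : 0 < 2 * a)]
    have h1 : |Real.sinh (x / a)| / Real.cosh (x / a) ≤ 1 := by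
      rw [div_le_one (hcp x), abs_le]
      have e1 := Real.exp_pos (x / a)
      have e2 := Real.exp_pos (-(x / a))
      rw [Real.sinh_eq, Real.cosh_eq]
      constructor <;> linarith
    gcongr
  have hbound : ∀ t : ℝ, 0 ≤ t → ∀ x, t * |u' x|
      ≤ K * (t ^ 2 * ‖f x‖ ^ 2 + (‖deriv f x‖ ^ 2 + ‖f x‖ ^ 2) * s x ^ 2) := fun t ht x => by
    refine le_trans ?_ (key_alg ‖f x‖ ‖deriv f x‖ (s x) t l |th x| (norm_nonneg _) (norm_nonneg _)
      (hspos x).le ht hl (hthb x))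
    refine mul_le_mul_of_nonneg_left ?_ ht
    refine (abs_add_le _ _).trans ?_
    simp only [abs_mul, abs_neg, abs_of_pos (hspos x), abs_of_nonneg (sq_nonneg ‖f x‖), abs_two]
    have := abs_real_inner_le_norm (f x) (deriv f x)
    have := (hspos x).le
    gcongr
  have hcth : Continuous th := by
    have : Continuous fun x : ℝ => Real.sinh (x / a) / Real.cosh (x / a) :=
      Continuous.div (by fun_prop) (by fun_prop) fun x => (hcp x).ne'
    exact this.div_const _
  have hcu' : Continuous u' := by
    have : Continuous fun x => (inner ℝ (f x) (deriv f x) : ℝ) := hcf.inner hcd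
    fun_prop
  have hmaj : ∀ t : ℝ, Integrable (fun x =>
      K * (t ^ 2 * ‖f x‖ ^ 2 + (‖deriv f x‖ ^ 2 + ‖f x‖ ^ 2) * s x ^ 2)) := fun t =>
    ((hf2.const_mul _).add hWint).const_mul _
  have hu'int : Integrable u' := by
    refine (hmaj 1).mono' hcu'.aestronglyMeasurable (ae_of_all _ fun x => ?_)
    simpa using hbound 1 zero_le_one x
  have huint : Integrable u := by
    refine hf2.mono' (by fun_prop) (ae_of_all _ fun x => ?_)
    have := (hspos x).le
    rw [Real.norm_of_nonneg (by positivity)]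
    exact mul_le_of_le_one_right (by positivity) (hs1 x)
  have hu0 : ∀ x, 0 ≤ u x := fun x => mul_nonneg (by positivity) (hspos x).le
  have hub : ∀ x, u x ≤ ∫ y, |u' y| := fun x => by
    have ht := tendsto_zero_of_hasDerivAt_of_integrableOn_Iic (a := x) (fun y _ => hder y)
      hu'int.integrableOn huint.integrableOn
    have h1 := integral_Iic_of_hasDerivAt_of_tendsto' (a := x) (fun y _ => hder y)
      hu'int.integrableOn ht
    rw [sub_zero] at h1
    rw [← h1]
    refine (le_abs_self _).trans ((abs_integral_le_integral_abs).trans ?_)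
    exact setIntegral_le_integral hu'int.abs (ae_of_all _ fun y => abs_nonneg _)
  have hA0 : 0 ≤ A := integral_nonneg fun x => by positivity
  have hW0 : 0 ≤ W := integral_nonneg fun x => by positivity
  have hquad : ∀ x, ∀ t : ℝ, 0 ≤ (K * A) * (t * t) + (-u x) * t + K * W := fun x t => by
    rcases le_total 0 t with ht | ht
    · have h1 : t * ∫ y, |u' y| ≤ K * (t ^ 2 * A + W) := by
        rw [← integral_const_mul]
        refine (integral_mono (hu'int.abs.const_mul t) (hmaj t) (hbound t ht)).trans_eq ?_
        rw [integral_const_mul, integral_add (hf2.const_mul _) hWint, integral_const_mul]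
      have h2 := mul_le_mul_of_nonneg_left (hub x) ht
      nlinarith
    · have h1 : 0 ≤ (-u x) * t := mul_nonneg_of_nonpos_of_nonpos (by linarith [hu0 x]) ht
      have h2 : 0 ≤ t * t := mul_self_nonneg t
      positivity
  have hsup : ∀ x, u x ^ 2 ≤ 4 * K ^ 2 * A * W := fun x => by
    have := discrim_le_zero (hquad x)
    rw [discrim] at this
    nlinarith
  calc ∫ x, ‖f x‖ ^ 6 * s x ^ 2 ≤ ∫ x, (4 * K ^ 2 * A * W) * ‖f x‖ ^ 2 := by
        refine integral_mono_of_nonneg (ae_of_all _ fun x => by positivity) (hf2.const_mul _)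
          (ae_of_all _ fun x => ?_)
        have h := mul_le_mul_of_nonneg_right (hsup x) (sq_nonneg ‖f x‖)
        refine le_trans (le_of_eq ?_) h
        simp only [hu]; ring
    _ = 4 * K ^ 2 * A ^ 2 * W := by
        rw [integral_const_mul]; ring
end

section
/- Fix real constants α, β, γ and let (u,v) be a regular solution of the Schrödinger–Korteweg–de Vries system. Then the quantities I₁(t) = ∫_ℝ |u(t,x)|² dx and I₃(t) = ∫_ℝ ( α·v(t,x)² + 2γ·Im( u(t,x)·conj(∂ₓu(t,x)) ) ) dx are independent of t: I₁(t) = I₁(0) and I₃(t) = I₃(0) for all t ∈ ℝ. -/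
open MeasureTheory Filter

namespace SKdV

noncomputable section

open scoped ContDiff Topology

def dx (w : ℝ → ℝ → ℝ) : ℝ → ℝ → ℝ := fun t x => deriv (w t) x
def dt (w : ℝ → ℝ → ℝ) : ℝ → ℝ → ℝ := fun t x => deriv (fun s => w s x) t

def Sm (w : ℝ → ℝ → ℝ) : Prop := ContDiff ℝ (⊤ : ℕ∞) (fun p : ℝ × ℝ => w p.1 p.2)

def Good (w : ℝ → ℝ → ℝ) : Prop :=
  Sm w ∧ ∀ t : ℝ, ∃ g : SchwartzMap ℝ ℝ, ∀ x, g x = w t x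

theorem Sm.fd {w : ℝ → ℝ → ℝ} (h : Sm w) (p : ℝ × ℝ) :
    HasFDerivAt (fun p : ℝ × ℝ => w p.1 p.2) (fderiv ℝ (fun p : ℝ × ℝ => w p.1 p.2) p) p :=
  (h.differentiable (by simp) p).hasFDerivAt

theorem Sm.hasX' {w : ℝ → ℝ → ℝ} (h : Sm w) (t x : ℝ) :
    HasDerivAt (w t) (fderiv ℝ (fun p : ℝ × ℝ => w p.1 p.2) (t, x) (0, 1)) x :=
  (h.fd (t, x)).comp_hasDerivAt x ((hasDerivAt_const x t).prodMk (hasDerivAt_id x))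

theorem Sm.hasT' {w : ℝ → ℝ → ℝ} (h : Sm w) (t x : ℝ) :
    HasDerivAt (fun s => w s x) (fderiv ℝ (fun p : ℝ × ℝ => w p.1 p.2) (t, x) (1, 0)) t :=
  (h.fd (t, x)).comp_hasDerivAt (f := fun s : ℝ => (s, x)) t
    ((hasDerivAt_id t).prodMk (hasDerivAt_const t x))

theorem Sm.hasX {w : ℝ → ℝ → ℝ} (h : Sm w) (t x : ℝ) : HasDerivAt (w t) (dx w t x) x :=
  (h.hasX' t x).differentiableAt.hasDerivAt

theorem Sm.hasT {w : ℝ → ℝ → ℝ} (h : Sm w) (t x : ℝ) :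
    HasDerivAt (fun s => w s x) (dt w t x) t :=
  (h.hasT' t x).differentiableAt.hasDerivAt

theorem Sm.dx_eq {w : ℝ → ℝ → ℝ} (h : Sm w) :
    (fun p : ℝ × ℝ => dx w p.1 p.2) =
      fun p => fderiv ℝ (fun p : ℝ × ℝ => w p.1 p.2) p (0, 1) :=
  funext fun p => (h.hasX' p.1 p.2).deriv

theorem Sm.dt_eq {w : ℝ → ℝ → ℝ} (h : Sm w) :
    (fun p : ℝ × ℝ => dt w p.1 p.2) =
      fun p => fderiv ℝ (fun p : ℝ × ℝ => w p.1 p.2) p (1, 0) :=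
  funext fun p => (h.hasT' p.1 p.2).deriv

theorem Sm.fdsm {w : ℝ → ℝ → ℝ} (h : Sm w) :
    ContDiff ℝ (⊤ : ℕ∞) (fderiv ℝ (fun p : ℝ × ℝ => w p.1 p.2)) :=
  h.fderiv_right (by simp)

theorem Sm.dx {w : ℝ → ℝ → ℝ} (h : Sm w) : Sm (dx w) := by
  unfold Sm; rw [h.dx_eq]; exact h.fdsm.clm_apply contDiff_const

theorem Sm.dt {w : ℝ → ℝ → ℝ} (h : Sm w) : Sm (dt w) := by
  unfold Sm; rw [h.dt_eq]; exact h.fdsm.clm_apply contDiff_const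

theorem Sm.comm {w : ℝ → ℝ → ℝ} (h : Sm w) (t x : ℝ) :
    SKdV.dt (SKdV.dx w) t x = SKdV.dx (SKdV.dt w) t x := by
  have hs : IsSymmSndFDerivAt ℝ (fun p : ℝ × ℝ => w p.1 p.2) (t, x) :=
    (ContDiff.contDiffAt h).isSymmSndFDerivAt (by simp; exact WithTop.coe_le_coe.2 le_top)
  have hd : DifferentiableAt ℝ (fderiv ℝ (fun p : ℝ × ℝ => w p.1 p.2)) (t, x) :=
    h.fdsm.differentiable (by simp) _
  have e1 := (h.dx.hasT' t x).deriv
  have e2 := (h.dt.hasX' t x).deriv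
  rw [h.dx_eq] at e1
  rw [h.dt_eq] at e2
  rw [(hd.hasFDerivAt.clm_apply (hasFDerivAt_const _ _)).fderiv] at e1 e2
  simp only [SKdV.dt, SKdV.dx] at *
  rw [e1, e2]
  simpa using hs (1, 0) (0, 1)

theorem Good.dx {w : ℝ → ℝ → ℝ} (h : Good w) : Good (dx w) := by
  refine ⟨h.1.dx, fun t => ?_⟩
  obtain ⟨g, hg⟩ := h.2 t
  refine ⟨SchwartzMap.derivCLM ℝ ℝ g, fun x => ?_⟩
  rw [SchwartzMap.derivCLM_apply, SKdV.dx, show (g : ℝ → ℝ) = w t from funext hg]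

theorem Good.add {a b : ℝ → ℝ → ℝ} (ha : Good a) (hb : Good b) :
    Good (fun t x => a t x + b t x) := by
  refine ⟨ContDiff.add ha.1 hb.1, fun t => ?_⟩
  obtain ⟨f, hf⟩ := ha.2 t
  obtain ⟨g, hg⟩ := hb.2 t
  exact ⟨f + g, fun x => by simp [hf, hg]⟩

theorem Good.sub {a b : ℝ → ℝ → ℝ} (ha : Good a) (hb : Good b) :
    Good (fun t x => a t x - b t x) := by
  refine ⟨ContDiff.sub ha.1 hb.1, fun t => ?_⟩
  obtain ⟨f, hf⟩ := ha.2 t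
  obtain ⟨g, hg⟩ := hb.2 t
  exact ⟨f - g, fun x => by simp [hf, hg]⟩

theorem Good.mul {a b : ℝ → ℝ → ℝ} (ha : Good a) (hb : Good b) :
    Good (fun t x => a t x * b t x) := by
  refine ⟨ContDiff.mul ha.1 hb.1, fun t => ?_⟩
  obtain ⟨f, hf⟩ := ha.2 t
  obtain ⟨g, hg⟩ := hb.2 t
  exact ⟨SchwartzMap.pairing (ContinuousLinearMap.mul ℝ ℝ) f g, fun x => by
    simp [hf, hg]⟩

theorem Good.cmul {a : ℝ → ℝ → ℝ} (c : ℝ) (ha : Good a) :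
    Good (fun t x => c * a t x) := by
  refine ⟨ContDiff.mul contDiff_const ha.1, fun t => ?_⟩
  obtain ⟨f, hf⟩ := ha.2 t
  exact ⟨c • f, fun x => by simp [hf]⟩

theorem Good.sq {a : ℝ → ℝ → ℝ} (ha : Good a) : Good (fun t x => a t x ^ 2) := by
  have h : (fun t x => a t x ^ 2) = fun t x => a t x * a t x := by
    funext t x; ring
  rw [h]; exact ha.mul ha

theorem Good.int {a : ℝ → ℝ → ℝ} (ha : Good a) (t : ℝ) : Integrable (a t) := by
  obtain ⟨f, hf⟩ := ha.2 t
  rw [← show (f : ℝ → ℝ) = a t from funext hf]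
  exact f.integrable

theorem Good.sup {a : ℝ → ℝ → ℝ} (ha : Good a) (t x : ℝ) :
    a t x ^ 2 ≤ ∫ y, (a t y ^ 2 + SKdV.dx a t y ^ 2) := by
  have hd : ∀ y ∈ Set.Iic x, HasDerivAt (fun y => a t y ^ 2) (2 * (a t y * SKdV.dx a t y)) y :=
    fun y _ => by
      have := (ha.1.hasX t y).pow 2
      exact this.congr_deriv (by push_cast; ring)
  have hi : Integrable (fun y => 2 * (a t y * SKdV.dx a t y)) := ((ha.mul ha.dx).cmul 2).int t
  have hE := (ha.sq.add ha.dx.sq).int t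
  have ht : Tendsto (fun y => a t y ^ 2) atBot (𝓝 0) := by
    obtain ⟨f, hf⟩ := ha.sq.2 t
    have := f.tendsto_cocompact.mono_left atBot_le_cocompact
    rwa [show (f : ℝ → ℝ) = fun y => a t y ^ 2 from funext hf] at this
  have := integral_Iic_of_hasDerivAt_of_tendsto' hd hi.integrableOn ht
  rw [sub_zero] at this
  rw [← this]
  calc _ ≤ ∫ y in Set.Iic x, (a t y ^ 2 + SKdV.dx a t y ^ 2) :=
        integral_mono hi.integrableOn hE.integrableOn
          (fun y => by simp only []; nlinarith [sq_nonneg (a t y - SKdV.dx a t y)])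
    _ ≤ _ := setIntegral_le_integral hE (Eventually.of_forall fun y => by simp only [Pi.zero_apply]; positivity)

theorem cutoff : ∃ χ : ℝ → ℝ, ContDiff ℝ (⊤ : ℕ∞) χ ∧ (∀ x, |x| ≤ 1 → χ x = 1) ∧
    (∀ x, 2 ≤ |x| → χ x = 0) ∧ ∀ x, |χ x| ≤ 1 := by
  let b : ContDiffBump (0 : ℝ) := ⟨1, 2, by norm_num, by norm_num⟩
  refine ⟨b, b.contDiff, fun x hx => b.one_of_mem_closedBall (by simpa [b] using hx),
    fun x hx => b.zero_of_le_dist (by simpa [b] using hx), fun x => ?_⟩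
  rw [abs_of_nonneg b.nonneg]; exact b.le_one

theorem bdd_deriv {χ : ℝ → ℝ} (h : ContDiff ℝ (⊤ : ℕ∞) χ) (h0 : ∀ x, 2 ≤ |x| → χ x = 0) (n : ℕ) :
    ∃ K, ∀ x, |iteratedDeriv n χ x| ≤ K := by
  have hc : HasCompactSupport χ := HasCompactSupport.of_support_subset_isCompact
    (isCompact_closedBall (0 : ℝ) 2) (fun x hx => by
      by_contra hh
      simp at hh
      exact hx (h0 x hh.le))
  have hc' : HasCompactSupport (iteratedDeriv n χ) := by
    have := hc.iteratedFDeriv (𝕜 := ℝ) n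
    rw [iteratedDeriv_eq_equiv_comp]
    exact this.comp_left (by simp)
  obtain ⟨K, hK⟩ := hc'.exists_bound_of_continuous (h.continuous_iteratedDeriv n (by exact_mod_cast le_top))
  exact ⟨K, fun x => hK x⟩

/-- derivative of the localized quantity -/
theorem loc_deriv {m : ℝ → ℝ → ℝ} (hm : Good m) {φ : ℝ → ℝ} (hφ : Continuous φ)
    {R : ℝ} (hR : ∀ x, R ≤ |x| → φ x = 0) (t : ℝ) :
    HasDerivAt (fun t => ∫ x, φ x * m t x) (∫ x, φ x * dt m t x) t := by
  have hcm : Continuous (fun p : ℝ × ℝ => m p.1 p.2) := hm.1.continuous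
  have hcd : Continuous (fun p : ℝ × ℝ => dt m p.1 p.2) := hm.1.dt.continuous
  have hc : HasCompactSupport φ := HasCompactSupport.of_support_subset_isCompact
    (isCompact_closedBall (0 : ℝ) R) (fun x hx => by
      by_contra hh
      simp at hh
      exact hx (hR x hh.le))
  obtain ⟨K, hK⟩ := ((isCompact_closedBall t 1).prod
    (isCompact_closedBall (0 : ℝ) R)).exists_bound_of_continuousOn hcd.continuousOn
  have hmt : ∀ s, Continuous (m s) := fun s => hcm.comp (by fun_prop : Continuous fun x : ℝ => (s, x))
  have hdt : ∀ s, Continuous (dt m s) := fun s => hcd.comp (by fun_prop : Continuous fun x : ℝ => (s, x))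
  refine (hasDerivAt_integral_of_dominated_loc_of_deriv_le (bound := fun x => |φ x| * K)
    (F := fun s x => φ x * m s x) (F' := fun s x => φ x * dt m s x)
    (Metric.closedBall_mem_nhds t one_pos) (Eventually.of_forall fun s => (hφ.mul (hmt s)).aestronglyMeasurable)
    ((hφ.mul (hmt t)).integrable_of_hasCompactSupport hc.mul_right)
    (hφ.mul (hdt t)).aestronglyMeasurable ?_ ?_ ?_).2
  · refine Eventually.of_forall fun x s hs => ?_
    rw [norm_mul, Real.norm_eq_abs]
    by_cases hx : |x| ≤ R
    · gcongr
      exact hK (s, x) ⟨hs, by simpa using hx⟩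
    · simp [hR x (not_le.1 hx).le]
  · exact (hφ.integrable_of_hasCompactSupport hc).abs.mul_const K
  · exact Eventually.of_forall fun x s _ => (hm.1.hasT s x).const_mul _

theorem by_parts {A B : ℝ → ℝ → ℝ} (hA : Good A) (hB : Good B) {φ φ1 φ2 φ3 : ℝ → ℝ}
    (h0 : ∀ x, HasDerivAt φ (φ1 x) x) (h1 : ∀ x, HasDerivAt φ1 (φ2 x) x)
    (h2 : ∀ x, HasDerivAt φ2 (φ3 x) x) (h3 : Continuous φ3)
    {K0 K1 K2 K3 : ℝ} (k0 : ∀ x, |φ x| ≤ K0) (k1 : ∀ x, |φ1 x| ≤ K1) (k2 : ∀ x, |φ2 x| ≤ K2)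
    (k3 : ∀ x, |φ3 x| ≤ K3) (t : ℝ) :
    |∫ x, φ x * (dx A t x + dx (dx (dx B)) t x)| ≤
      K1 * (∫ x, |A t x|) + K3 * ∫ x, |B t x| := by
  have c0 : Continuous φ := continuous_iff_continuousAt.2 fun x => (h0 x).continuousAt
  have c1 : Continuous φ1 := continuous_iff_continuousAt.2 fun x => (h1 x).continuousAt
  have c2 : Continuous φ2 := continuous_iff_continuousAt.2 fun x => (h2 x).continuousAt
  have I : ∀ {f : ℝ → ℝ} {K : ℝ} {w : ℝ → ℝ → ℝ}, Continuous f → (∀ x, |f x| ≤ K) → Good w →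
      Integrable (fun x => f x * w t x) := fun hf hk hw =>
    (hw.int t).bdd_mul hf.aestronglyMeasurable (Eventually.of_forall hk)
  have z := integral_eq_zero_of_hasDerivAt_of_integrable
    (f := fun x => φ x * A t x + (φ x * dx (dx B) t x - φ1 x * dx B t x + φ2 x * B t x))
    (f' := fun x => φ x * (dx A t x + dx (dx (dx B)) t x) + (φ1 x * A t x + φ3 x * B t x))
    (fun x => by
      have := ((h0 x).mul (hA.1.hasX t x)).add
        ((((h0 x).mul (hB.dx.dx.1.hasX t x)).sub ((h1 x).mul (hB.dx.1.hasX t x))).add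
        ((h2 x).mul (hB.1.hasX t x)))
      exact this.congr_deriv (by ring))
    ((I c0 k0 (hA.dx.add hB.dx.dx.dx)).add ((I c1 k1 hA).add (I h3 k3 hB)))
    ((I c0 k0 hA).add (((I c0 k0 hB.dx.dx).sub (I c1 k1 hB.dx)).add (I c2 k2 hB)))
  have I13 : Integrable (fun x => φ1 x * A t x + φ3 x * B t x) := (I c1 k1 hA).add (I h3 k3 hB)
  rw [integral_add (I c0 k0 (hA.dx.add hB.dx.dx.dx)) I13,
    integral_add (I c1 k1 hA) (I h3 k3 hB)] at z
  have b1 : |∫ x, φ1 x * A t x| ≤ K1 * ∫ x, |A t x| := by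
    rw [← integral_const_mul, ← Real.norm_eq_abs]
    refine norm_integral_le_of_norm_le ((hA.int t).abs.const_mul _) (Eventually.of_forall fun x => ?_)
    rw [norm_mul]; exact mul_le_mul_of_nonneg_right (k1 x) (abs_nonneg _)
  have b3 : |∫ x, φ3 x * B t x| ≤ K3 * ∫ x, |B t x| := by
    rw [← integral_const_mul, ← Real.norm_eq_abs]
    refine norm_integral_le_of_norm_le ((hB.int t).abs.const_mul _) (Eventually.of_forall fun x => ?_)
    rw [norm_mul]; exact mul_le_mul_of_nonneg_right (k3 x) (abs_nonneg _)
  rw [eq_neg_of_add_eq_zero_left z, abs_neg]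
  exact (abs_add_le _ _).trans (add_le_add b1 b3)

theorem conserved {m A B : ℝ → ℝ → ℝ} (hm : Good m) (hA : Good A) (hB : Good B)
    (heq : ∀ t x, dt m t x = dx A t x + dx (dx (dx B)) t x)
    {C : ℝ} (bA : ∀ t, ∫ x, |A t x| ≤ C) (bB : ∀ t, ∫ x, |B t x| ≤ C) (t : ℝ) :
    ∫ x, m t x = ∫ x, m 0 x := by
  obtain ⟨χ, hχ, hone, hzero, hle⟩ := cutoff
  obtain ⟨K1, hK1⟩ := bdd_deriv hχ hzero 1
  obtain ⟨K2, hK2⟩ := bdd_deriv hχ hzero 2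
  obtain ⟨K3, hK3⟩ := bdd_deriv hχ hzero 3
  have hC : 0 ≤ C := (integral_nonneg fun x => abs_nonneg _).trans (bA 0)
  have K1p : 0 ≤ K1 := (abs_nonneg _).trans (hK1 0)
  have K3p : 0 ≤ K3 := (abs_nonneg _).trans (hK3 0)
  have hder : ∀ (n : ℕ) (c x : ℝ), HasDerivAt (fun x => c ^ n * iteratedDeriv n χ (c * x))
      (c ^ (n + 1) * iteratedDeriv (n + 1) χ (c * x)) x := by
    intro n c x
    have h1 : HasDerivAt (iteratedDeriv n χ) (iteratedDeriv (n + 1) χ (c * x)) (c * x) := by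
      rw [iteratedDeriv_succ]
      exact (hχ.differentiable_iteratedDeriv n (by exact_mod_cast WithTop.coe_lt_top _) _).hasDerivAt
    have h2 : HasDerivAt (fun x : ℝ => c * x) c x := by simpa using (hasDerivAt_id x).const_mul c
    exact ((h1.comp x h2).const_mul (c ^ n)).congr_deriv (by ring)
  have key : ∀ c : ℝ, 0 < c → c ≤ 1 →
      |(∫ x, χ (c * x) * m t x) - ∫ x, χ (c * x) * m 0 x| ≤ c * ((K1 * C + K3 * C) * |t|) := by
    intro c hc hc1
    have hcont : Continuous fun x => χ (c * x) := hχ.continuous.comp (by fun_prop)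
    have hsup : ∀ x, 2 / c ≤ |x| → χ (c * x) = 0 := fun x hx => hzero _ (by
      rw [abs_mul, abs_of_pos hc]; rwa [div_le_iff₀' hc] at hx)
    have kk : ∀ (n : ℕ) (K : ℝ), (∀ x, |iteratedDeriv n χ x| ≤ K) →
        ∀ x, |c ^ n * iteratedDeriv n χ (c * x)| ≤ c ^ n * K := fun n K h x => by
      rw [abs_mul, abs_of_pos (pow_pos hc n)]
      exact mul_le_mul_of_nonneg_left (h _) (pow_pos hc n).le
    have D : ∀ s, HasDerivAt (fun t => ∫ x, χ (c * x) * m t x) (∫ x, χ (c * x) * dt m s x) s :=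
      fun s => loc_deriv hm hcont hsup s
    have bd : ∀ s, ‖∫ x, χ (c * x) * dt m s x‖ ≤ c * (K1 * C + K3 * C) := by
      intro s
      have := by_parts hA hB (φ := fun x => χ (c * x)) (fun x => by simpa using hder 0 c x) (hder 1 c) (hder 2 c)
        (continuous_iff_continuousAt.2 fun x => (hder 3 c x).continuousAt)
        (fun x => hle _) (kk 1 K1 hK1) (kk 2 K2 hK2) (kk 3 K3 hK3) s
      simp only [← heq] at this
      refine this.trans ?_
      have c3 : c ^ 3 ≤ c := by
        simpa using pow_le_pow_of_le_one hc.le hc1 (show 1 ≤ 3 by norm_num)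
      calc _ ≤ c ^ 1 * K1 * C + c ^ 3 * K3 * C := by gcongr; exacts [bA s, bB s]
        _ ≤ c * K1 * C + c * K3 * C := by rw [pow_one]; gcongr
        _ = _ := by ring
    have := Convex.norm_image_sub_le_of_norm_hasDerivWithin_le (s := Set.univ) (x := 0) (y := t)
      (fun s _ => (D s).hasDerivWithinAt) (fun s _ => bd s) convex_univ (Set.mem_univ _) (Set.mem_univ _)
    simpa [mul_assoc] using this
  let c : ℕ → ℝ := fun n => 1 / ((n : ℝ) + 1)
  have hc : Tendsto c atTop (𝓝 0) := tendsto_one_div_add_atTop_nhds_zero_nat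
  have lim : ∀ s, Tendsto (fun n => ∫ x, χ (c n * x) * m s x) atTop (𝓝 (∫ x, m s x)) := by
    intro s
    refine tendsto_integral_of_dominated_convergence (fun x => |m s x|) (fun n => ?_)
      (hm.int s).abs (fun n => Eventually.of_forall fun x => ?_) (Eventually.of_forall fun x => ?_)
    · exact (hχ.continuous.comp (by fun_prop)).aestronglyMeasurable.mul (hm.int s).1
    · rw [norm_mul]
      exact mul_le_of_le_one_left (abs_nonneg _) (hle _)
    · have h1 : Tendsto (fun n => |c n * x|) atTop (𝓝 0) := by
        simpa using (hc.mul_const x).abs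
      refine tendsto_const_nhds.congr' ?_
      filter_upwards [h1.eventually (ge_mem_nhds one_pos)] with n hn
      rw [hone _ hn, one_mul]
  have l1 := ((lim t).sub (lim 0)).abs
  have l2 : Tendsto (fun n => c n * ((K1 * C + K3 * C) * |t|)) atTop (𝓝 0) := by
    simpa using hc.mul_const ((K1 * C + K3 * C) * |t|)
  have := le_of_tendsto_of_tendsto' l1 l2 fun n => key (c n) (by positivity)
    (by simp only [c]; rw [div_le_one (by positivity)]; have : (0:ℝ) ≤ n := n.cast_nonneg; linarith)
  exact sub_eq_zero.1 (abs_eq_zero.1 (le_antisymm this (abs_nonneg _)))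

theorem dx_of {w w' : ℝ → ℝ → ℝ} (h : ∀ t x, HasDerivAt (w t) (w' t x) x) : dx w = w' :=
  funext fun t => funext fun x => (h t x).deriv

theorem hasDerivAt_cpx {f g : ℝ → ℝ} {a b x : ℝ} (hf : HasDerivAt f a x) (hg : HasDerivAt g b x) :
    HasDerivAt (fun y => (f y : ℂ) + (g y : ℂ) * Complex.I) ((a : ℂ) + (b : ℂ) * Complex.I) x :=
  hf.ofReal_comp.add (hg.ofReal_comp.mul_const _)

theorem conserve_real {α β γ : ℝ} {p q v : ℝ → ℝ → ℝ} (hp : Good p) (hq : Good q) (hv : Good v)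
    (ep : ∀ t x, dt p t x = -dx (dx q) t x + (α * v t x + β * (p t x ^ 2 + q t x ^ 2)) * q t x)
    (eq : ∀ t x, dt q t x = dx (dx p) t x - (α * v t x + β * (p t x ^ 2 + q t x ^ 2)) * p t x)
    (ev : ∀ t x, dt v t x = - dx (dx (dx v)) t x - v t x * dx v t x
      + γ * (2 * (p t x * dx p t x + q t x * dx q t x)))
    {C : ℝ} (hC : ∀ t, (∫ x, (p t x ^ 2 + q t x ^ 2)) + (∫ x, (dx p t x ^ 2 + dx q t x ^ 2))
      + (∫ x, v t x ^ 2) + (∫ x, dx v t x ^ 2) ≤ C) :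
    (∀ t, ∫ x, (p t x ^ 2 + q t x ^ 2) = ∫ x, (p 0 x ^ 2 + q 0 x ^ 2)) ∧
    ∀ t, ∫ x, (α * v t x ^ 2 + 2 * γ * (q t x * dx p t x - p t x * dx q t x))
      = ∫ x, (α * v 0 x ^ 2 + 2 * γ * (q 0 x * dx p 0 x - p 0 x * dx q 0 x)) := by
  have hE : Good (fun t x => (p t x ^ 2 + q t x ^ 2) + (dx p t x ^ 2 + dx q t x ^ 2)
      + v t x ^ 2 + dx v t x ^ 2) :=
    (((hp.sq.add hq.sq).add (hp.dx.sq.add hq.dx.sq)).add hv.sq).add hv.dx.sq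
  have hEC : ∀ t, ∫ x, ((p t x ^ 2 + q t x ^ 2) + (dx p t x ^ 2 + dx q t x ^ 2)
      + v t x ^ 2 + dx v t x ^ 2) ≤ C := by
    intro t
    refine le_trans (le_of_eq ?_) (hC t)
    rw [integral_add ((((hp.sq.add hq.sq).add (hp.dx.sq.add hq.dx.sq)).add hv.sq).int t)
      (hv.dx.sq.int t), integral_add (((hp.sq.add hq.sq).add (hp.dx.sq.add hq.dx.sq)).int t)
      (hv.sq.int t), integral_add ((hp.sq.add hq.sq).int t) ((hp.dx.sq.add hq.dx.sq).int t)]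
  have sp : ∀ t x, p t x ^ 2 ≤ C := fun t x => (hp.sup t x).trans <| le_trans
    (integral_mono ((hp.sq.add hp.dx.sq).int t) (hE.int t) fun y => by
      simp only []
      linarith [sq_nonneg (q t y), sq_nonneg (dx q t y), sq_nonneg (v t y), sq_nonneg (dx v t y)])
    (hEC t)
  have sq' : ∀ t x, q t x ^ 2 ≤ C := fun t x => (hq.sup t x).trans <| le_trans
    (integral_mono ((hq.sq.add hq.dx.sq).int t) (hE.int t) fun y => by
      simp only []
      linarith [sq_nonneg (p t y), sq_nonneg (dx p t y), sq_nonneg (v t y), sq_nonneg (dx v t y)])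
    (hEC t)
  have sv : ∀ t x, v t x ^ 2 ≤ C := fun t x => (hv.sup t x).trans <| le_trans
    (integral_mono ((hv.sq.add hv.dx.sq).int t) (hE.int t) fun y => by
      simp only []
      linarith [sq_nonneg (p t y), sq_nonneg (dx p t y), sq_nonneg (q t y), sq_nonneg (dx q t y)])
    (hEC t)
  have C0 : 0 ≤ C := (sq_nonneg _).trans (sp 0 0)
  have sv' : ∀ t x, |v t x| ≤ C + 1 := fun t x => by
    have := sv t x
    exact abs_le_of_sq_le_sq (by nlinarith) (by linarith)
  have L1 : ∀ {A : ℝ → ℝ → ℝ} {K K' : ℝ}, Good A → K ≤ K' → 0 ≤ K' → (∀ t x, |A t x| ≤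
      K * ((p t x ^ 2 + q t x ^ 2) + (dx p t x ^ 2 + dx q t x ^ 2) + v t x ^ 2 + dx v t x ^ 2)) →
      ∀ t, ∫ x, |A t x| ≤ K' * C := by
    intro A K K' hA hK hK' h t
    refine le_trans (integral_mono (hA.int t).abs ((hE.int t).const_mul K') fun x => ?_) ?_
    · exact (h t x).trans (mul_le_mul_of_nonneg_right hK (by positivity))
    · rw [integral_const_mul]
      exact mul_le_mul_of_nonneg_left (hEC t) hK'
  constructor
  · have hA : Good (fun t x => 2 * (q t x * dx p t x - p t x * dx q t x)) :=
      ((hq.mul hp.dx).sub (hp.mul hq.dx)).cmul 2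
    have hZ : Good (fun _ _ => (0 : ℝ)) := by simpa using hp.cmul 0
    have dZ : dx (fun _ _ => (0 : ℝ)) = fun _ _ => 0 := dx_of fun t x => hasDerivAt_const _ _
    refine fun t => conserved (hp.sq.add hq.sq) hA hZ (fun t x => ?_)
      (L1 (K := 2) (K' := 2) hA le_rfl (by norm_num) fun t x => ?_)
      (fun t => by simp; positivity) t
    · have e1 : dt (fun t x => p t x ^ 2 + q t x ^ 2) t x
          = 2 * p t x * dt p t x + 2 * q t x * dt q t x :=
        ((((hp.1.hasT t x).pow 2).add ((hq.1.hasT t x).pow 2)).congr_deriv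
          (by push_cast; ring)).deriv
      have e2 : dx (fun t x => 2 * (q t x * dx p t x - p t x * dx q t x)) t x
          = 2 * (q t x * dx (dx p) t x - p t x * dx (dx q) t x) :=
        (((((hq.1.hasX t x).mul (hp.dx.1.hasX t x)).sub
          ((hp.1.hasX t x).mul (hq.dx.1.hasX t x))).const_mul 2).congr_deriv (by ring)).deriv
      rw [e1, e2, dZ, dZ, dZ, ep, eq]
      ring
    · rw [abs_le]
      constructor <;>
      nlinarith [sq_nonneg (p t x + dx q t x), sq_nonneg (p t x - dx q t x),
        sq_nonneg (q t x + dx p t x), sq_nonneg (q t x - dx p t x),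
        sq_nonneg (v t x), sq_nonneg (dx v t x)]
  · have hN := hp.sq.add hq.sq
    have hA : Good (fun t x => 3 * α * dx v t x ^ 2 - 2 * α / 3 * (v t x * v t x ^ 2)
        + 4 * γ * (dx p t x ^ 2 + dx q t x ^ 2) + 2 * α * γ * (v t x * (p t x ^ 2 + q t x ^ 2))
        + γ * β * ((p t x ^ 2 + q t x ^ 2) * (p t x ^ 2 + q t x ^ 2))) :=
      ((((hv.dx.sq.cmul (3 * α)).sub ((hv.mul hv.sq).cmul (2 * α / 3))).add
        ((hp.dx.sq.add hq.dx.sq).cmul (4 * γ))).add ((hv.mul hN).cmul (2 * α * γ))).add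
        ((hN.mul hN).cmul (γ * β))
    have hB : Good (fun t x => -α * v t x ^ 2 - γ * (p t x ^ 2 + q t x ^ 2)) :=
      (hv.sq.cmul (-α)).sub (hN.cmul γ)
    have hm : Good (fun t x => α * v t x ^ 2 + 2 * γ * (q t x * dx p t x - p t x * dx q t x)) :=
      (hv.sq.cmul α).add (((hq.mul hp.dx).sub (hp.mul hq.dx)).cmul (2 * γ))
    have b1 : dx (fun t x => -α * v t x ^ 2 - γ * (p t x ^ 2 + q t x ^ 2)) =
        fun t x => -2 * α * (v t x * dx v t x) - 2 * γ * (p t x * dx p t x + q t x * dx q t x) :=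
      dx_of fun t x => ((((hv.1.hasX t x).pow 2).const_mul (-α)).sub
        ((((hp.1.hasX t x).pow 2).add ((hq.1.hasX t x).pow 2)).const_mul γ)).congr_deriv
          (by push_cast; ring)
    have b2 : dx (fun t x => -2 * α * (v t x * dx v t x)
          - 2 * γ * (p t x * dx p t x + q t x * dx q t x)) =
        fun t x => -2 * α * (dx v t x * dx v t x + v t x * dx (dx v) t x)
          - 2 * γ * ((dx p t x * dx p t x + p t x * dx (dx p) t x)
            + (dx q t x * dx q t x + q t x * dx (dx q) t x)) :=
      dx_of fun t x => ((((hv.1.hasX t x).mul (hv.dx.1.hasX t x)).const_mul (-2 * α)).sub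
        ((((hp.1.hasX t x).mul (hp.dx.1.hasX t x)).add
          ((hq.1.hasX t x).mul (hq.dx.1.hasX t x))).const_mul (2 * γ)))
    have b3 : dx (fun t x => -2 * α * (dx v t x * dx v t x + v t x * dx (dx v) t x)
          - 2 * γ * ((dx p t x * dx p t x + p t x * dx (dx p) t x)
            + (dx q t x * dx q t x + q t x * dx (dx q) t x))) =
        fun t x => -2 * α * (3 * dx v t x * dx (dx v) t x + v t x * dx (dx (dx v)) t x)
          - 2 * γ * ((3 * dx p t x * dx (dx p) t x + p t x * dx (dx (dx p)) t x)
            + (3 * dx q t x * dx (dx q) t x + q t x * dx (dx (dx q)) t x)) := by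
      have T : ∀ {w : ℝ → ℝ → ℝ}, Good w → ∀ t x,
          HasDerivAt (fun x => dx w t x * dx w t x + w t x * dx (dx w) t x)
            (3 * dx w t x * dx (dx w) t x + w t x * dx (dx (dx w)) t x) x := fun hw t x =>
        (((hw.dx.1.hasX t x).mul (hw.dx.1.hasX t x)).add
          ((hw.1.hasX t x).mul (hw.dx.dx.1.hasX t x))).congr_deriv (by ring)
      exact dx_of fun t x => ((T hv t x).const_mul (-2 * α)).sub
        (((T hp t x).add (T hq t x)).const_mul (2 * γ))
    let K : ℝ := 3 * |α| + |α| * (C + 1) + 4 * |γ| + 2 * |α| * |γ| * (C + 1)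
      + |γ| * |β| * (2 * C) + |α| + |γ|
    have K0 : 0 ≤ K := by positivity
    refine fun t => conserved hm hA hB (fun t x => ?_)
      (L1 (K := K) (K' := K) hA le_rfl K0 fun t x => ?_)
      (L1 (K := K) (K' := K) hB le_rfl K0 fun t x => ?_) t
    · have W : ∀ t x, HasDerivAt (fun x => α * v t x + β * (p t x ^ 2 + q t x ^ 2))
          (α * dx v t x + β * (2 * p t x * dx p t x + 2 * q t x * dx q t x)) x := fun t x =>
        (((hv.1.hasX t x).const_mul α).add
          ((((hp.1.hasX t x).pow 2).add ((hq.1.hasX t x).pow 2)).const_mul β)).congr_deriv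
          (by push_cast; ring)
      have tp : dt p = fun t x => -dx (dx q) t x
          + (α * v t x + β * (p t x ^ 2 + q t x ^ 2)) * q t x :=
        funext fun t => funext fun x => ep t x
      have tq : dt q = fun t x => dx (dx p) t x
          - (α * v t x + β * (p t x ^ 2 + q t x ^ 2)) * p t x :=
        funext fun t => funext fun x => eq t x
      have ep1 : dt (dx p) t x = -dx (dx (dx q)) t x
          + ((α * dx v t x + β * (2 * p t x * dx p t x + 2 * q t x * dx q t x)) * q t x
          + (α * v t x + β * (p t x ^ 2 + q t x ^ 2)) * dx q t x) := by
        rw [hp.1.comm, tp]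
        exact ((hq.dx.dx.1.hasX t x).neg.add ((W t x).mul (hq.1.hasX t x))).deriv
      have eq1 : dt (dx q) t x = dx (dx (dx p)) t x
          - ((α * dx v t x + β * (2 * p t x * dx p t x + 2 * q t x * dx q t x)) * p t x
          + (α * v t x + β * (p t x ^ 2 + q t x ^ 2)) * dx p t x) := by
        rw [hq.1.comm, tq]
        exact ((hp.dx.dx.1.hasX t x).sub ((W t x).mul (hp.1.hasX t x))).deriv
      have em : dt (fun t x => α * v t x ^ 2 + 2 * γ * (q t x * dx p t x - p t x * dx q t x)) t x
          = α * (2 * v t x * dt v t x) + 2 * γ * ((dt q t x * dx p t x + q t x * dt (dx p) t x)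
            - (dt p t x * dx q t x + p t x * dt (dx q) t x)) :=
        (((((hv.1.hasT t x).pow 2).const_mul α).add
          ((((hq.1.hasT t x).mul (hp.dx.1.hasT t x)).sub
            ((hp.1.hasT t x).mul (hq.dx.1.hasT t x))).const_mul (2 * γ))).congr_deriv
          (by push_cast; ring)).deriv
      have N : ∀ {a b : ℝ → ℝ → ℝ}, Good a → Good b → HasDerivAt (fun x => a t x ^ 2 + b t x ^ 2)
          (2 * (a t x * dx a t x + b t x * dx b t x)) x := fun ha hb =>
        (((ha.1.hasX t x).pow 2).add ((hb.1.hasX t x).pow 2)).congr_deriv (by push_cast; ring)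
      have eA : dx (fun t x => 3 * α * dx v t x ^ 2 - 2 * α / 3 * (v t x * v t x ^ 2)
        + 4 * γ * (dx p t x ^ 2 + dx q t x ^ 2) + 2 * α * γ * (v t x * (p t x ^ 2 + q t x ^ 2))
        + γ * β * ((p t x ^ 2 + q t x ^ 2) * (p t x ^ 2 + q t x ^ 2))) t x
        = 6 * α * dx v t x * dx (dx v) t x - 2 * α * v t x ^ 2 * dx v t x
          + 8 * γ * (dx p t x * dx (dx p) t x + dx q t x * dx (dx q) t x)
          + 2 * α * γ * (dx v t x * (p t x ^ 2 + q t x ^ 2)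
            + v t x * (2 * (p t x * dx p t x + q t x * dx q t x)))
          + 4 * γ * β * (p t x ^ 2 + q t x ^ 2) * (p t x * dx p t x + q t x * dx q t x) :=
        (((((((hv.dx.1.hasX t x).pow 2).const_mul (3 * α)).sub
          (((hv.1.hasX t x).mul ((hv.1.hasX t x).pow 2)).const_mul (2 * α / 3))).add
          ((N hp.dx hq.dx).const_mul (4 * γ))).add
          (((hv.1.hasX t x).mul (N hp hq)).const_mul (2 * α * γ))).add
          (((N hp hq).mul (N hp hq)).const_mul (γ * β))).congr_deriv
          (by simp only [Pi.pow_apply]; push_cast; ring) |>.deriv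
      rw [em, eA, b1, b2, b3, ep1, eq1, ep, eq, ev]
      ring
    · have n0 : 0 ≤ p t x ^ 2 + q t x ^ 2 := by positivity
      have n1 : p t x ^ 2 + q t x ^ 2 ≤ 2 * C := by linarith [sp t x, sq' t x]
      have hv' := sv' t x
      generalize p t x ^ 2 + q t x ^ 2 = n at *
      have m0 : 0 ≤ dx p t x ^ 2 + dx q t x ^ 2 := by positivity
      generalize dx p t x ^ 2 + dx q t x ^ 2 = m at *
      generalize v t x = w at *
      generalize dx v t x = w1 at *
      have t1 : |3 * α * w1 ^ 2| ≤ 3 * |α| * w1 ^ 2 := by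
        rw [abs_mul, abs_mul, abs_sq]; norm_num
      have t2 : |2 * α / 3 * (w * w ^ 2)| ≤ |α| * (C + 1) * w ^ 2 := by
        have : |2 * α / 3 * (w * w ^ 2)| = 2 / 3 * (|α| * |w| * w ^ 2) := by
          rw [show 2 * α / 3 * (w * w ^ 2) = 2 / 3 * (α * w * w ^ 2) by ring, abs_mul, abs_mul,
            abs_mul, abs_sq]; norm_num
        rw [this]
        calc 2 / 3 * (|α| * |w| * w ^ 2) ≤ 1 * (|α| * (C + 1) * w ^ 2) := by
              gcongr; norm_num
          _ = _ := one_mul _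
      have t3 : |4 * γ * m| ≤ 4 * |γ| * m := by
        rw [abs_mul, abs_mul, abs_of_nonneg m0]; norm_num
      have t4 : |2 * α * γ * (w * n)| ≤ 2 * |α| * |γ| * (C + 1) * n := by
        have : |2 * α * γ * (w * n)| = 2 * |α| * |γ| * |w| * n := by
          simp only [abs_mul, abs_of_nonneg n0]; norm_num; ring
        rw [this]; gcongr
      have t5 : |γ * β * (n * n)| ≤ |γ| * |β| * (2 * C) * n := by
        have : |γ * β * (n * n)| = |γ| * |β| * n * n := by
          simp only [abs_mul, abs_of_nonneg n0]; ring
        rw [this]; gcongr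
      have tri : ∀ a b c d e : ℝ, |a - b + c + d + e| ≤ |a| + |b| + |c| + |d| + |e| := by
        intro a b c d e
        refine (abs_add_le _ _).trans (add_le_add_left ?_ _)
        refine (abs_add_le _ _).trans (add_le_add_left ?_ _)
        refine (abs_add_le _ _).trans (add_le_add_left ?_ _)
        exact abs_sub _ _
      refine (tri _ _ _ _ _).trans ?_
      have k : ∀ k ≥ 0, ∀ s ≥ (0:ℝ), k ≤ K → k * s ≤ K * s := fun k _ s hs h =>
        mul_le_mul_of_nonneg_right h hs
      have p1 : 0 ≤ |α| * (C + 1) := by positivity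
      have p2 : 0 ≤ 2 * |α| * |γ| * (C + 1) := by positivity
      have p3 : 0 ≤ |γ| * |β| * (2 * C) := by positivity
      have a0 := abs_nonneg α
      have g0 := abs_nonneg γ
      have f1 : 3 * |α| * w1 ^ 2 ≤ K * w1 ^ 2 :=
        mul_le_mul_of_nonneg_right (by simp only [K]; linarith) (sq_nonneg _)
      have f2 : |α| * (C + 1) * w ^ 2 ≤ K * w ^ 2 :=
        mul_le_mul_of_nonneg_right (by simp only [K]; linarith) (sq_nonneg _)
      have f3 : 4 * |γ| * m ≤ K * m :=
        mul_le_mul_of_nonneg_right (by simp only [K]; linarith) m0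
      have f4 : (2 * |α| * |γ| * (C + 1) + |γ| * |β| * (2 * C)) * n ≤ K * n :=
        mul_le_mul_of_nonneg_right (by simp only [K]; linarith) n0
      linarith
    · have n0 : 0 ≤ p t x ^ 2 + q t x ^ 2 := by positivity
      have m0 : 0 ≤ dx p t x ^ 2 + dx q t x ^ 2 := by positivity
      generalize p t x ^ 2 + q t x ^ 2 = n at *
      generalize dx p t x ^ 2 + dx q t x ^ 2 = m at *
      refine (abs_sub _ _).trans ?_
      rw [abs_mul, abs_mul, abs_neg, abs_sq, abs_of_nonneg n0]
      have p1 : 0 ≤ |α| * (C + 1) := by positivity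
      have p2 : 0 ≤ 2 * |α| * |γ| * (C + 1) := by positivity
      have p3 : 0 ≤ |γ| * |β| * (2 * C) := by positivity
      have a0 := abs_nonneg α
      have g0 := abs_nonneg γ
      have f1 : |α| * v t x ^ 2 ≤ K * v t x ^ 2 :=
        mul_le_mul_of_nonneg_right (by simp only [K]; linarith) (sq_nonneg _)
      have f2 : |γ| * n ≤ K * n :=
        mul_le_mul_of_nonneg_right (by simp only [K]; linarith) n0
      have f3 : 0 ≤ K * m := mul_nonneg K0 m0
      have f4 : 0 ≤ K * dx v t x ^ 2 := mul_nonneg K0 (sq_nonneg _)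
      linarith

end

end SKdV

/-- Conservation of `I₁(t) = ∫ |u|²` and `I₃(t) = ∫ (α v² + 2γ Im(u ∂ₓū))` for regular
    solutions of the Schrödinger–KdV system. -/
theorem skdv_conservation_I1_I3 (α β γ : ℝ)
    (u : ℝ → ℝ → ℂ) (v : ℝ → ℝ → ℝ) (hsol : IsSKdVSolution α β γ u v) :
    (∀ t : ℝ, (∫ x : ℝ, ‖u t x‖ ^ 2) = ∫ x : ℝ, ‖u 0 x‖ ^ 2) ∧
    (∀ t : ℝ,
      (∫ x : ℝ, (α * (v t x) ^ 2 +
          2 * γ * (u t x * (starRingEnd ℂ) (deriv (u t) x)).im))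
        = ∫ x : ℝ, (α * (v 0 x) ^ 2 +
            2 * γ * (u 0 x * (starRingEnd ℂ) (deriv (u 0) x)).im)) := by

  obtain ⟨su, sv, fu, fv, e1, e2, C, hC⟩ := hsol
  let p : ℝ → ℝ → ℝ := fun t x => (u t x).re
  let q : ℝ → ℝ → ℝ := fun t x => (u t x).im
  have hp : SKdV.Good p := ⟨Complex.reCLM.contDiff.comp su, fun t => by
    obtain ⟨f, hf⟩ := fu t
    exact ⟨f.postcompCLM Complex.reCLM, fun x => by simp [hf, p]⟩⟩
  have hq : SKdV.Good q := ⟨Complex.imCLM.contDiff.comp su, fun t => by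
    obtain ⟨f, hf⟩ := fu t
    exact ⟨f.postcompCLM Complex.imCLM, fun x => by simp [hf, q]⟩⟩
  have hv : SKdV.Good v := ⟨sv, fv⟩
  have hu : ∀ t x, u t x = (p t x : ℂ) + (q t x : ℂ) * Complex.I :=
    fun t x => (Complex.re_add_im _).symm
  have hu1 : ∀ t, deriv (u t) =
      fun x => (SKdV.dx p t x : ℂ) + (SKdV.dx q t x : ℂ) * Complex.I := fun t => by
    rw [show u t = fun x => (p t x : ℂ) + (q t x : ℂ) * Complex.I from funext (hu t)]
    exact funext fun x => (SKdV.hasDerivAt_cpx (hp.1.hasX t x) (hq.1.hasX t x)).deriv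
  have hu2 : ∀ t x, iteratedDeriv 2 (u t) x =
      (SKdV.dx (SKdV.dx p) t x : ℂ) + (SKdV.dx (SKdV.dx q) t x : ℂ) * Complex.I := fun t x => by
    rw [iteratedDeriv_succ, iteratedDeriv_one, hu1]
    exact (SKdV.hasDerivAt_cpx (hp.dx.1.hasX t x) (hq.dx.1.hasX t x)).deriv
  have hut : ∀ t x, deriv (fun s => u s x) t =
      (SKdV.dt p t x : ℂ) + (SKdV.dt q t x : ℂ) * Complex.I := fun t x => by
    rw [show (fun s => u s x) = fun s => (p s x : ℂ) + (q s x : ℂ) * Complex.I from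
      funext fun s => hu s x]
    exact (SKdV.hasDerivAt_cpx (hp.1.hasT t x) (hq.1.hasT t x)).deriv
  have hv3 : ∀ t x, iteratedDeriv 3 (v t) x = SKdV.dx (SKdV.dx (SKdV.dx v)) t x := fun t x => by
    rw [iteratedDeriv_succ, iteratedDeriv_succ, iteratedDeriv_one]; rfl
  have hn : ∀ t x, ‖u t x‖ ^ 2 = p t x ^ 2 + q t x ^ 2 := fun t x => by
    rw [Complex.sq_norm, Complex.normSq_apply]; ring
  have hn1 : ∀ t x, ‖deriv (u t) x‖ ^ 2 = SKdV.dx p t x ^ 2 + SKdV.dx q t x ^ 2 := fun t x => by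
    rw [hu1, Complex.sq_norm, Complex.normSq_apply]; simp; ring
  have him : ∀ t x, (u t x * (starRingEnd ℂ) (deriv (u t) x)).im =
      q t x * SKdV.dx p t x - p t x * SKdV.dx q t x := fun t x => by
    rw [hu1, hu t x]; simp; ring
  have key : ∀ t x,
      (-SKdV.dt q t x + SKdV.dx (SKdV.dx p) t x
        = (α * v t x + β * (p t x ^ 2 + q t x ^ 2)) * p t x) ∧
      (SKdV.dt p t x + SKdV.dx (SKdV.dx q) t x
        = (α * v t x + β * (p t x ^ 2 + q t x ^ 2)) * q t x) := fun t x => by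
    have h := e1 t x
    have hc : (‖u t x‖ : ℂ) ^ 2 = ((p t x ^ 2 + q t x ^ 2 : ℝ) : ℂ) := by
      rw [← hn]; push_cast; rfl
    rw [hc, hut, hu2, hu t x] at h
    generalize p t x ^ 2 + q t x ^ 2 = n at *
    have hr := congrArg Complex.re h
    have hi := congrArg Complex.im h
    simp at hr hi
    constructor <;> linarith
  have hd : ∀ t x, deriv (fun y => ‖u t y‖ ^ 2) x
      = 2 * (p t x * SKdV.dx p t x + q t x * SKdV.dx q t x) := fun t x => by
    simp only [hn]
    exact ((((hp.1.hasX t x).pow 2).add ((hq.1.hasX t x).pow 2)).congr_deriv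
      (by push_cast; ring)).deriv
  have main := SKdV.conserve_real (α := α) (β := β) (γ := γ) hp hq hv
    (fun t x => by linarith [(key t x).2]) (fun t x => by linarith [(key t x).1])
    (fun t x => by
      have h := e2 t x
      rw [hd, hv3] at h
      simp only [SKdV.dt]
      have : deriv (v t) x = SKdV.dx v t x := rfl
      rw [this] at h
      linarith) (C := C) (fun t => by
      have h := hC t
      simp only [hn, hn1] at h
      exact h)
  simp only [hn, him]
  exact main
end
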